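/- arXiv:2602.16361 — 5 statements merged into one kernel-verified Lean document; each statement's English description precedes it below -/
import Mathlib

section
/- Let t ∈ W be a reflection and let p be a t-prefix. Then every reflection u that is a left inversion of p (ℓ(u * p) < ℓ(p)) satisfies ℓ(u) ≤ ℓ(t), and ℓ(u) = ℓ(t) holds if and only if u = t. -/
open Classical in
/-- Sign-action of a simple reflection. -/
noncomputable def sgnAct {B : Type*} {W : Type*} [Group W] {M : CoxeterMatrix B}
    (cs : CoxeterSystem M W) (i : B) : Equiv.Perm (W × ZMod 2) :=
  Function.Involutive.toPerm
    (fun x => (cs.simple i * x.1 * cs.simple i, x.2 + if x.1 = cs.simple i then 1 else 0))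
    (by
      rintro ⟨t, e⟩
      have h : cs.simple i * t * cs.simple i = cs.simple i ↔ t = cs.simple i := by
        constructor
        · intro h
          have := congrArg (fun x => cs.simple i * x * cs.simple i) h
          simpa [mul_assoc] using this
        · rintro rfl; simp
      refine Prod.ext ?_ ?_
      · simp [mul_assoc]
      · simp only [h, add_assoc]
        split_ifs
        · have : (1 + 1 : ZMod 2) = 0 := by decide
          rw [this, add_zero]
        · simp)

open Classical in
theorem sgnAct_apply {B : Type*} {W : Type*} [Group W] {M : CoxeterMatrix B}
    (cs : CoxeterSystem M W) (i : B) (t : W) (e : ZMod 2) :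
    sgnAct cs i (t, e) =
      (cs.simple i * t * cs.simple i, e + if t = cs.simple i then 1 else 0) := rfl

open Classical in
theorem sgnAct_pow {B : Type*} {W : Type*} [Group W] {M : CoxeterMatrix B}
    (cs : CoxeterSystem M W) (i j : B) (n : ℕ) (t : W) (e : ZMod 2) :
    ((sgnAct cs i * sgnAct cs j) ^ n) (t, e) =
      ((cs.simple i * cs.simple j) ^ n * t * ((cs.simple i * cs.simple j) ^ n)⁻¹,
        e + ∑ k ∈ Finset.range (2 * n),
          if (cs.simple i * cs.simple j) ^ k * t = cs.simple j then 1 else 0) := by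
  induction n with
  | zero => simp
  | succ n ih =>
    rw [pow_succ', Equiv.Perm.mul_apply, ih, Equiv.Perm.mul_apply, sgnAct_apply, sgnAct_apply]
    set r := cs.simple i * cs.simple j with hr
    have hrj : ∀ n : ℕ, cs.simple j * r ^ n = (r ^ n)⁻¹ * cs.simple j := by
      intro n
      have : (cs.simple j) * r * (cs.simple j)⁻¹ = r⁻¹ := by simp [hr, mul_assoc]
      rw [← inv_pow, ← this, conj_pow]; simp
    refine Prod.ext ?_ ?_
    · simp only [pow_succ' r n, mul_inv_rev]
      simp [hr, mul_assoc]
    · have e1 : r ^ n * t * (r ^ n)⁻¹ = cs.simple j ↔ r ^ (2 * n) * t = cs.simple j := by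
        rw [mul_inv_eq_iff_eq_mul, hrj, two_mul, pow_add, eq_inv_mul_iff_mul_eq]
        simp [mul_assoc]
      have e2 : cs.simple j * (r ^ n * t * (r ^ n)⁻¹) * cs.simple j = cs.simple i ↔
          r ^ (2 * n + 1) * t = cs.simple j := by
        have h1 : r ^ (2 * n + 1) * t = r ^ (n+1) * (r ^ n * t) := by
          rw [← mul_assoc, ← pow_add]; congr 2; omega
        rw [h1, ← eq_inv_mul_iff_mul_eq (a := r ^ n * t) (b := r ^ (n + 1)), ← hrj, pow_succ', ← mul_assoc (cs.simple j) r,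
          ← mul_inv_eq_iff_eq_mul]
        constructor
        · intro h
          have h5 : cs.simple j * r = cs.simple j * (cs.simple i * cs.simple j) := rfl
          rw [h5, ← h]; simp [mul_assoc]
        · intro h
          rw [h]; simp [hr, mul_assoc]
      simp only [e1, e2]
      rw [show 2 * (n + 1) = 2 * n + 1 + 1 by ring, Finset.sum_range_succ, Finset.sum_range_succ]
      simp only [add_assoc]

open Classical in
theorem sgnAct_liftable {B : Type*} {W : Type*} [Group W] {M : CoxeterMatrix B}
    (cs : CoxeterSystem M W) : M.IsLiftable (sgnAct cs) := by
  intro i j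
  ext1 ⟨t, e⟩
  have hr : (cs.simple i * cs.simple j) ^ (M i j) = 1 := cs.simple_mul_simple_pow i j
  rw [sgnAct_pow, hr, two_mul, Finset.sum_range_add]
  simp only [pow_add, hr, one_mul]
  rw [CharTwo.add_self_eq_zero]
  simp

open Classical in
theorem sgn_word {B : Type*} {W : Type*} [Group W] {M : CoxeterMatrix B}
    (cs : CoxeterSystem M W) (ω : List B) (t : W) (e : ZMod 2) :
    cs.lift ⟨sgnAct cs, sgnAct_liftable cs⟩ (cs.wordProd ω) (t, e) =
      (cs.wordProd ω * t * (cs.wordProd ω)⁻¹, e + ((cs.rightInvSeq ω).count t : ℕ)) := by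
  induction ω with
  | nil => simp
  | cons i ω ih =>
    rw [cs.wordProd_cons, map_mul, Equiv.Perm.mul_apply, ih, cs.lift_apply_simple, sgnAct_apply]
    refine Prod.ext ?_ ?_
    · simp [mul_assoc]
    · have : cs.wordProd ω * t * (cs.wordProd ω)⁻¹ = cs.simple i ↔
          (cs.wordProd ω)⁻¹ * cs.simple i * cs.wordProd ω = t := by
        rw [mul_inv_eq_iff_eq_mul, mul_assoc, inv_mul_eq_iff_eq_mul, eq_comm]
      simp only [this, CoxeterSystem.rightInvSeq, List.count_cons, beq_iff_eq]
      split_ifs <;> simp [add_assoc]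

theorem strong_exch {B : Type*} {W : Type*} [Group W] {M : CoxeterMatrix B}
    (cs : CoxeterSystem M W) (ω : List B) (t : W)
    (h : cs.IsRightInversion (cs.wordProd ω) t) : t ∈ cs.rightInvSeq ω := by
  classical
  set φ := cs.lift ⟨sgnAct cs, sgnAct_liftable cs⟩ with hφ
  have gen : ∀ w : W, ∀ t, ∃ c : ZMod 2, ∀ e, φ w (t, e) = (w * t * w⁻¹, e + c) := by
    intro w t
    obtain ⟨ω, -, rfl⟩ := cs.exists_isReduced w
    exact ⟨_, fun e => sgn_word cs ω t e⟩
  have htt : ∀ e, φ t (t, e) = (t, e + 1) := by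
    intro e
    obtain ⟨v, i, rfl⟩ := h.1
    obtain ⟨c, hc⟩ := gen v (cs.simple i)
    have h1 : φ v⁻¹ (v * cs.simple i * v⁻¹, e) = (cs.simple i, e - c) := by
      rw [map_inv, Equiv.Perm.inv_eq_iff_eq, hc]; simp
    rw [map_mul, map_mul, Equiv.Perm.mul_apply, Equiv.Perm.mul_apply, h1, hφ,
      cs.lift_apply_simple, sgnAct_apply, ← hφ]
    simp only [CoxeterSystem.simple_mul_simple_self, one_mul, if_true, hc]
    refine Prod.ext rfl ?_
    simp; ring
  by_contra hn
  obtain ⟨ω', hr, hw⟩ := cs.exists_isReduced (cs.wordProd ω * t)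
  have h2 : φ (cs.wordProd ω * t) (t, 0) = (cs.wordProd ω * t * (cs.wordProd ω)⁻¹, 0 + 1 + ((0 : ℕ) : ZMod 2)) := by
    rw [map_mul, Equiv.Perm.mul_apply, htt, sgn_word, List.count_eq_zero_of_not_mem hn]
  rw [hw, sgn_word] at h2
  have h3 := congrArg Prod.snd h2
  have hm : t ∈ cs.rightInvSeq ω' := by
    by_contra hn'
    simp [List.count_eq_zero_of_not_mem hn'] at h3
  have h4 := (cs.isRightInversion_of_mem_rightInvSeq hr hm).2
  rw [← hw, mul_assoc, h.1.mul_self, mul_one] at h4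
  exact absurd h.2 (by omega)

theorem left_inv_form {B : Type*} {W : Type*} [Group W] {M : CoxeterMatrix B}
    (cs : CoxeterSystem M W) (ω : List B) (u : W)
    (h : cs.IsRightInversion (cs.wordProd ω) u) :
    cs.length u + 1 ≤ 2 * ω.length ∧ 
      (cs.length u + 1 = 2 * ω.length → u = (cs.rightInvSeq ω).getD 0 1) := by
  have hm := strong_exch cs ω u h
  obtain ⟨j, hj, rfl⟩ := List.getElem_of_mem hm
  have hj' : j < ω.length := by simpa using hj
  have hl : cs.length ((cs.rightInvSeq ω)[j]) + 1 ≤ 2 * (ω.length - j) := by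
    rw [cs.getElem_rightInvSeq ω j hj', List.getElem?_eq_getElem hj', Option.map_some,
      Option.getD_some]
    have h1 := cs.length_mul_le ((cs.wordProd (ω.drop (j+1)))⁻¹ * cs.simple ω[j])
      (cs.wordProd (ω.drop (j+1)))
    have h2 := cs.length_mul_le (cs.wordProd (ω.drop (j+1)))⁻¹ (cs.simple ω[j])
    have h3 := cs.length_wordProd_le (ω.drop (j+1))
    rw [cs.length_inv, cs.length_simple] at h2
    rw [List.length_drop] at h3
    omega
  refine ⟨by omega, fun he => ?_⟩
  have : j = 0 := by omega
  subst this
  rw [List.getD_eq_getElem]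

/-- Let `t` be a reflection and `p` a `t`-prefix. Then every
reflection `u` that is a left inversion of `p` satisfies `ℓ(u) ≤ ℓ(t)`, with
equality iff `u = t`. -/
theorem stmt_2 {B : Type*} {W : Type*} [Group W] {M : CoxeterMatrix B}
    (cs : CoxeterSystem M W) (t : W) (ht : cs.IsReflection t)
    (p : W)
    (hp1 : cs.length p + cs.length (p⁻¹ * t) = cs.length t)
    (hp2 : 2 * cs.length p = cs.length t + 1)
    (u : W) (hu : cs.IsLeftInversion p u) :
    cs.length u ≤ cs.length t ∧ (cs.length u = cs.length t ↔ u = t) := by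
  obtain ⟨ω, hr, hw⟩ := cs.exists_isReduced p⁻¹
  have hlen : ω.length = cs.length p := by rw [← hr.eq, ← hw, cs.length_inv]
  have hu' : cs.IsRightInversion (cs.wordProd ω) u := by
    rw [← hw]; exact cs.isRightInversion_inv_iff.2 hu
  have ht' : cs.IsRightInversion (cs.wordProd ω) t := by
    rw [← hw]; exact ⟨ht, by rw [cs.length_inv]; omega⟩
  have a := left_inv_form cs ω u hu'
  have b := left_inv_form cs ω t ht'
  refine ⟨by omega, fun h => ?_, fun h => by rw [h]⟩
  rw [a.2 (by omega), ← b.2 (by omega)]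
end

section
/- Let t ∈ W be a reflection and let p be a t-prefix. Then for every reflection u, the following are equivalent: (i) for every w ∈ W, if t is a left inversion of w then u is a left inversion of w (i.e., the positive root of u is dominated by the positive root of t); (ii) u = t, or else u is a left inversion of p and the subgroup of W generated by {u, t} is infinite. -/
namespace Dom
open CoxeterSystem

section
variable {B : Type*} {W : Type*} [Group W] {M : CoxeterMatrix B} (cs : CoxeterSystem M W)

theorem end_mul {X : Type*} (a b : Function.End X) (x : X) : (a * b) x = a (b x) := rfl

theorem end_one {X : Type*} (x : X) : (1 : Function.End X) x = x := rfl

open Classical in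
noncomputable def f (i : B) : Function.End (W × ZMod 2) := fun x =>
  (cs.simple i * x.1 * cs.simple i, x.2 + if x.1 = cs.simple i then 1 else 0)

theorem sum_two_mul {A : Type*} [AddCommMonoid A] (g : ℕ → A) (m : ℕ) :
    ∑ k ∈ Finset.range m, (g (2 * k) + g (2 * k + 1)) = ∑ k ∈ Finset.range (2 * m), g k := by
  induction m with
  | zero => simp
  | succ m ih =>
    rw [Finset.sum_range_succ, ih, Nat.mul_succ, Finset.sum_range_succ, Finset.sum_range_succ,
      add_assoc]

theorem zmod2_add_self (a : ZMod 2) : a + a = 0 := CharTwo.add_self_eq_zero a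

open Classical in
theorem f_pow (i j : B) (k : ℕ) (r : W) (e : ZMod 2) :
    ((f cs i * f cs j) ^ k) (r, e) =
      ((cs.simple i * cs.simple j) ^ k * r * ((cs.simple i * cs.simple j) ^ k)⁻¹,
        e + ∑ n ∈ Finset.range k,
          ((if r = ((cs.simple i * cs.simple j) ^ (2 * n))⁻¹ * cs.simple j then 1 else 0)
          + (if r = ((cs.simple i * cs.simple j) ^ (2 * n + 1))⁻¹ * cs.simple j then 1 else 0))) := by
  set c := cs.simple i * cs.simple j with hc
  have hci : c⁻¹ = cs.simple j * cs.simple i := by simp [hc]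
  have hjc : ∀ n : ℕ, cs.simple j * c ^ n = (c ^ n)⁻¹ * cs.simple j := by
    intro n
    induction n with
    | zero => simp
    | succ n ih =>
      rw [pow_succ, ← mul_assoc, ih, mul_inv_rev, mul_assoc]
      have h1 : cs.simple j * c = c⁻¹ * cs.simple j := by rw [hci, hc, mul_assoc]
      rw [h1, ← mul_assoc, ← mul_inv_rev, ← mul_inv_rev, ← pow_succ, ← pow_succ']
  induction k with
  | zero => simp [end_one]
  | succ k ih =>
    rw [pow_succ', end_mul, ih, end_mul]
    have e1 : c ^ k * r * (c ^ k)⁻¹ = cs.simple j ↔ r = (c ^ (2 * k))⁻¹ * cs.simple j := by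
      rw [mul_inv_eq_iff_eq_mul, hjc, ← eq_inv_mul_iff_mul_eq, ← mul_assoc, ← mul_inv_rev,
        ← pow_add, two_mul]
    have e2 : cs.simple j * (c ^ k * r * (c ^ k)⁻¹) * cs.simple j = cs.simple i ↔
        r = (c ^ (2 * k + 1))⁻¹ * cs.simple j := by
      have : cs.simple j * (c ^ k * r * (c ^ k)⁻¹) * cs.simple j = cs.simple i ↔
        c ^ k * r * (c ^ k)⁻¹ = c⁻¹ * cs.simple j := by
        rw [hci]
        constructor
        · intro h; rw [← h]; simp [mul_assoc]
        · intro h; rw [h]; simp [mul_assoc]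
      rw [this, mul_inv_eq_iff_eq_mul, mul_assoc c⁻¹, hjc, ← eq_inv_mul_iff_mul_eq, ← mul_assoc,
        ← mul_assoc, ← mul_inv_rev, ← mul_inv_rev]
      rw [show 2 * k + 1 = k + (1 + k) by ring, pow_add, pow_add, pow_one, mul_assoc]
    simp only [f, e1, e2]
    ext
    · simp only [pow_succ', hc, mul_inv_rev, mul_assoc, cs.inv_simple]
    · simp only [Finset.sum_range_succ]
      ring

open Classical in
theorem liftable : M.IsLiftable (f cs) := by
  intro i j
  funext ⟨r, e⟩
  rw [f_pow, sum_two_mul (fun n => if r = ((cs.simple i * cs.simple j) ^ n)⁻¹ * cs.simple j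
    then (1 : ZMod 2) else 0), two_mul, Finset.sum_range_add]
  simp only [pow_add, cs.simple_mul_simple_pow, one_mul, zmod2_add_self]
  simp [end_one]

noncomputable def η (w r : W) : ZMod 2 := (cs.lift ⟨f cs, liftable cs⟩ w⁻¹ (r, 0)).2

theorem lift_apply (w r : W) (e : ZMod 2) :
    cs.lift ⟨f cs, liftable cs⟩ w (r, e) = (w * r * w⁻¹, e + η cs w⁻¹ r) := by
  unfold η
  rw [inv_inv]
  revert r e
  refine cs.simple_induction_left (p := fun w => ∀ (r : W) (e : ZMod 2),
    cs.lift ⟨f cs, liftable cs⟩ w (r, e) =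
      (w * r * w⁻¹, e + (cs.lift ⟨f cs, liftable cs⟩ w (r, 0)).2)) w ?_ ?_
  · simp [end_one]
  · intro w i ih r e
    rw [map_mul, end_mul, end_mul, ih r e, ih r 0,
      cs.lift_apply_simple]
    ext
    · simp [f, mul_assoc]
    · simp [f, add_assoc]

theorem η_mul (x y r : W) : η cs (x * y) r = η cs x r + η cs y (x⁻¹ * r * x) := by
  conv_lhs => unfold η
  rw [mul_inv_rev, map_mul, end_mul, lift_apply, lift_apply]
  simp

@[simp] theorem η_one (r : W) : η cs 1 r = 0 := by simp [η, end_one]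

open Classical in
theorem η_simple (i : B) (r : W) : η cs (cs.simple i) r = if r = cs.simple i then 1 else 0 := by
  simp [η, cs.lift_apply_simple, f]

theorem mem_lis (ω : List B) (r : W) (h : η cs (cs.wordProd ω) r ≠ 0) : r ∈ cs.leftInvSeq ω := by
  induction ω generalizing r with
  | nil => simp at h
  | cons i ω ih =>
    rw [cs.wordProd_cons, η_mul, η_simple] at h
    simp only [leftInvSeq, List.mem_cons, List.mem_map]
    by_cases hr : r = cs.simple i
    · exact Or.inl hr
    · right
      refine ⟨_, ih _ (by simpa [hr] using h), ?_⟩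
      simp [mul_assoc]

theorem η_self (r : W) (hr : cs.IsReflection r) : η cs r r = 1 := by
  obtain ⟨w, i, rfl⟩ := hr
  have h := η_mul cs w w⁻¹ (w * cs.simple i * w⁻¹)
  rw [mul_inv_cancel, η_one] at h
  rw [η_mul, η_mul, η_simple]
  simp [mul_assoc] at h ⊢
  linear_combination -h

theorem zmod2_cases (a : ZMod 2) : a = 0 ∨ a = 1 := by revert a; decide

theorem leftInv_of (w r : W) (h : η cs w r = 1) : cs.IsLeftInversion w r := by
  obtain ⟨ω, hω, rfl⟩ := cs.exists_isReduced w
  exact cs.isLeftInversion_of_mem_leftInvSeq hω (mem_lis cs ω r (by rw [h]; decide))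

theorem η_refl_mul (w r : W) (hr : cs.IsReflection r) : η cs (r * w) r = η cs w r + 1 := by
  rw [η_mul, η_self cs r hr]
  simp [add_comm]

theorem leftInv_iff (w r : W) (hr : cs.IsReflection r) : cs.IsLeftInversion w r ↔ η cs w r = 1 := by
  refine ⟨fun h => ?_, leftInv_of cs w r⟩
  rcases zmod2_cases (η cs w r) with h0 | h1
  · have := leftInv_of cs (r * w) r (by rw [η_refl_mul cs w r hr, h0]; rfl)
    have h2 := this.2
    rw [← mul_assoc, hr.mul_self, one_mul] at h2
    exact absurd h.2 (by omega)
  · exact h1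

theorem η_finite (w : W) : {r | η cs w r ≠ 0}.Finite := by
  obtain ⟨ω, rfl⟩ := cs.wordProd_surjective w
  exact (List.finite_toSet (cs.leftInvSeq ω)).subset fun r hr => mem_lis cs ω r hr

theorem prefix_struct (t p : W) (ht : cs.IsReflection t)
    (hp1 : cs.length p + cs.length (p⁻¹ * t) = cs.length t)
    (hp2 : 2 * cs.length p = cs.length t + 1) :
    ∃ v i, p = v * cs.simple i ∧ t = v * cs.simple i * v⁻¹ ∧ η cs v t = 0 := by
  have h1 : cs.length (t * p) = cs.length (p⁻¹ * t) := by
    rw [← cs.length_inv, mul_inv_rev, ht.inv]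
  have hti : cs.IsLeftInversion p t := ⟨ht, by omega⟩
  rw [leftInv_iff cs p t ht] at hti
  obtain ⟨ω, hω, hpω⟩ := cs.exists_isReduced p
  have hm := mem_lis cs ω t (by rw [← hpω, hti]; decide)
  obtain ⟨j, hj, hjt⟩ := List.getElem_of_mem hm
  rw [cs.length_leftInvSeq] at hj
  rw [cs.getElem_leftInvSeq ω j hj] at hjt
  have hlen : cs.length p = ω.length := hpω ▸ hω
  have hl1 := cs.length_wordProd_le (ω.take j)
  rw [List.length_take] at hl1
  have hl2 : cs.length t ≤ cs.length (cs.wordProd (ω.take j)) + 1 + cs.length (cs.wordProd (ω.take j)) := by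
    rw [← hjt]
    have a := cs.length_mul_le (cs.wordProd (ω.take j) * cs.simple ω[j]) (cs.wordProd (ω.take j))⁻¹
    have b := cs.length_mul_le (cs.wordProd (ω.take j)) (cs.simple ω[j])
    rw [cs.length_inv] at a
    rw [cs.length_simple] at b
    omega
  have hj' : j + 1 = ω.length := by omega
  have hp : p = cs.wordProd (ω.take j) * cs.simple ω[j] := by
    rw [hpω]
    conv_lhs => rw [← List.take_append_drop j ω, cs.wordProd_append, List.drop_eq_getElem_cons hj,
      List.drop_eq_nil_of_le (by omega)]
    simp
  refine ⟨cs.wordProd (ω.take j), ω[j], hp, hjt.symm, ?_⟩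
  rcases zmod2_cases (η cs (cs.wordProd (ω.take j)) t) with h | h
  · exact h
  · have := (leftInv_of cs _ _ h).2
    have e : t * cs.wordProd (ω.take j) = p := by rw [← hjt, hp]; simp
    rw [e] at this
    omega

open Classical in
theorem η_mul_simple (v r : W) (i : B) :
    η cs (v * cs.simple i) r = η cs v r + if r = v * cs.simple i * v⁻¹ then 1 else 0 := by
  rw [η_mul, η_simple]
  congr 2
  rw [mul_assoc, inv_mul_eq_iff_eq_mul, eq_mul_inv_iff_mul_eq]

theorem finite_case (t u v : W) (ht : cs.IsReflection t) (hu : cs.IsReflection u)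
    (hvt : η cs v t = 0) (hvu : η cs v u = 1) (hdom : ∀ w, η cs w t = 1 → η cs w u = 1) :
    Infinite (Subgroup.closure ({u, t} : Set W)) := by
  by_contra hfin
  rw [not_infinite_iff_finite] at hfin
  have := Fintype.ofFinite (Subgroup.closure ({u, t} : Set W))
  let g : W → Subgroup.closure ({u, t} : Set W) → ℤ := fun r x => if η cs (x * v) r = 1 then 1 else -1
  have key : ∀ r (hr : cs.IsReflection r) (hK : r ∈ Subgroup.closure ({u, t} : Set W)), ∑ x, g r x = 0 := by
    intro r hr hK
    have h := Equiv.sum_comp (Equiv.mulLeft (⟨r, hK⟩ : Subgroup.closure ({u, t} : Set W))) (g r)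
    have h2 : ∀ x, g r (Equiv.mulLeft (⟨r, hK⟩ : Subgroup.closure ({u, t} : Set W)) x) = - g r x := by
      intro x
      simp only [g, Equiv.coe_mulLeft, Subgroup.coe_mul, mul_assoc, η_refl_mul cs _ r hr]
      rcases zmod2_cases (η cs (x * v) r) with h | h <;> rw [h] <;> decide
    simp only [h2, Finset.sum_neg_distrib] at h
    omega
  have h1 := key t ht (Subgroup.subset_closure (by simp))
  have h2 := key u hu (Subgroup.subset_closure (by simp))
  have : ∑ x, g t x < ∑ x, g u x := by
    apply Finset.sum_lt_sum
    · intro x _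
      have := hdom (x * v)
      simp only [g]
      split_ifs <;> simp_all
    · exact ⟨1, Finset.mem_univ _, by simp [g, hvt, hvu]⟩
  omega

end

/-- integer combinatorics -/
theorem abs_one_of (X : ℤ → ℤ → ZMod 2) (hX : ∀ i j n, X (i + j) n = X i n + X j (n - 2 * i))
    (hfin : {n | X 1 n ≠ 0}.Finite) (h11 : X 1 1 = 1) (m : ℤ) (hm : m ≠ 0)
    (hXm : ∀ n, X m n = (if n = m then 1 else 0) + (if n = 2 * m then 1 else 0)) :
    m = 1 ∨ m = -1 := by
  by_contra hcon
  have hrel : ∀ n, X 1 n + X 1 (n - 2 * m) = X m n + X m (n - 2) := by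
    intro n
    have a := hX 1 m n
    have b := hX m 1 n
    rw [add_comm 1 m, b] at a
    have c2 := zmod2_add_self (X 1 n)
    have c3 := zmod2_add_self (X m n)
    rw [mul_one] at a
    linear_combination a + c2 - c3
  have hz : ∀ j : ℤ, X m (1 + 2 * m * j) + X m (1 + 2 * m * j - 2) = 0 := by
    intro j
    have nd : ∀ k : ℤ, ¬ (2 * (m * k) = m - 1) ∧ ¬ (2 * (m * k) = m + 1) := by
      intro k
      have key : ∀ e : ℤ, (e = 1 ∨ e = -1) → ¬ (2 * (m * k) = m + e) := by
        intro e he h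
        have : m ∣ e := ⟨2 * k - 1, by linarith⟩
        have h1 : m ∣ 1 := by
          rcases he with rfl | rfl
          · exact this
          · exact (dvd_neg.mp this)
        rcases Int.isUnit_iff.mp (isUnit_of_dvd_one h1) with h | h
        · exact hcon (Or.inl h)
        · exact hcon (Or.inr h)
      exact ⟨fun h => key (-1) (Or.inr rfl) (by linarith), key 1 (Or.inl rfl)⟩
    have n1 := nd j
    rw [hXm, hXm]
    have e : 2 * m * j = 2 * (m * j) := by ring
    rw [e, if_neg (by omega), if_neg (by omega), if_neg (by omega), if_neg (by omega)]
    simp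
  have hper : ∀ j : ℕ, X 1 (1 + 2 * m * j) = 1 := by
    intro j
    induction j with
    | zero => simpa using h11
    | succ j ih =>
      have a := hrel (1 + 2 * m * ((j + 1 : ℕ) : ℤ))
      rw [hz] at a
      have e : 1 + 2 * m * ((j + 1 : ℕ) : ℤ) - 2 * m = 1 + 2 * m * j := by push_cast; ring
      rw [e, ih] at a
      rcases zmod2_cases (X 1 (1 + 2 * m * ((j + 1 : ℕ) : ℤ))) with h | h
      · rw [h] at a; simp at a
      · exact h
  refine Set.infinite_of_injective_forall_mem (f := fun j : ℕ => 1 + 2 * m * (j : ℤ)) ?_ ?_ hfin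
  · intro a b h
    simp only [add_right_inj] at h
    have := mul_left_cancel₀ (by omega : 2 * m ≠ 0) h
    exact_mod_cast this
  · intro j
    simp [hper j]

theorem X_formula_pos (X : ℤ → ℤ → ZMod 2)
    (hX : ∀ i j n, X (i + j) n = X i n + X j (n - 2 * i))
    (hX1 : ∀ n, X 1 n = (if n = 1 then 1 else 0) + (if n = 2 then 1 else 0)) (i n : ℤ) :
    X i n = if (1 ≤ n ∧ n ≤ 2 * i) ∨ (2 * i < n ∧ n ≤ 0) then 1 else 0 := by
  induction i using Int.induction_on generalizing n with
  | zero =>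
    have := hX 0 0 n
    simp at this
    rw [this, if_neg (by omega)]
  | succ i ih =>
    rw [add_comm, hX, ih, hX1]
    split_ifs <;> first | rfl | (exfalso; omega)
  | pred i ih =>
    have h := hX 1 (-(i : ℤ) - 1) (n + 2)
    rw [show (1 : ℤ) + (-(i : ℤ) - 1) = -i by ring, ih, hX1, show n + 2 - 2 * 1 = n by ring] at h
    rcases zmod2_cases (X (-(i : ℤ) - 1) n) with h0 | h0 <;> rw [h0] at h ⊢ <;>
    split_ifs at h ⊢ <;> first | rfl | (exfalso; omega) | (exfalso; revert h; decide)

theorem X_formula_neg (X : ℤ → ℤ → ZMod 2)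
    (hX : ∀ i j n, X (i + j) n = X i n + X j (n - 2 * i))
    (hX1 : ∀ n, X (-1) n = (if n = -1 then 1 else 0) + (if n = -2 then 1 else 0)) (i n : ℤ) :
    X i n = if (0 ≤ n ∧ n < 2 * i) ∨ (2 * i ≤ n ∧ n ≤ -1) then 1 else 0 := by
  have h := X_formula_pos (fun i n => X (-i) (-n)) (fun i j n => by
    rw [show -(i + j) = -i + -j by ring, hX, show -n - 2 * -i = -(n - 2 * i) by ring])
    (fun n => by
      rw [hX1]
      congr 2 <;> simp only [eq_iff_iff] <;> omega) (-i) (-n)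
  simp only [neg_neg] at h
  rw [h]
  congr 1
  simp only [eq_iff_iff]
  omega

section
variable {B : Type*} {W : Type*} [Group W] {M : CoxeterMatrix B} (cs : CoxeterSystem M W)

theorem infinite_order (t u : W) (ht : t * t = 1) (hu : u * u = 1)
    (hinf : Infinite (Subgroup.closure ({u, t} : Set W))) :
    Function.Injective (fun n : ℤ => (u * t) ^ n) := by
  rw [injective_zpow_iff_not_isOfFinOrder]
  intro hfin
  have hti : t⁻¹ = t := inv_eq_of_mul_eq_one_left ht
  have hui : u⁻¹ = u := inv_eq_of_mul_eq_one_left hu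
  have hz : (Subgroup.zpowers (u * t) : Set W).Finite := hfin.finite_zpowers
  let S : Set W := (Subgroup.zpowers (u * t) : Set W) ∪ (fun x => x * t) '' (Subgroup.zpowers (u * t) : Set W)
  have hS : S.Finite :=
    hz.union (hz.image _)
  apply hinf.not_finite
  have hct : ∀ n : ℤ, t * (u * t) ^ n = (u * t) ^ (-n) * t := by
    intro n
    have : t * (u * t) * t⁻¹ = (u * t)⁻¹ := by simp [hti, hui, mul_assoc, ht]
    have h2 := conj_zpow (a := t) (b := u * t) (i := n)
    rw [this] at h2
    rw [zpow_neg, ← inv_zpow, h2]; simp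
  refine (hS.subset ?_).to_subtype
  intro x hx
  have htm : ∀ y ∈ S, t * y ∈ S := by
    rintro y (⟨n, rfl⟩ | ⟨_, ⟨n, rfl⟩, rfl⟩)
    · right; exact ⟨_, ⟨-n, rfl⟩, (hct n).symm⟩
    · left; exact ⟨-n, by simp only [← mul_assoc, hct]; simp [mul_assoc, ht]⟩
  have hcm : ∀ y ∈ S, (u * t) * y ∈ S := by
    rintro y (⟨n, rfl⟩ | ⟨_, ⟨n, rfl⟩, rfl⟩)
    · left; exact ⟨1 + n, by simp only [zpow_add, zpow_one]⟩
    · right; exact ⟨_, ⟨1 + n, rfl⟩, by simp only [zpow_add, zpow_one, mul_assoc]⟩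
  have hum : ∀ y ∈ S, u * y ∈ S := by
    intro y hy
    have := hcm _ (htm _ hy)
    rwa [← mul_assoc, mul_assoc u, ht, mul_one] at this
  induction hx using Subgroup.closure_induction_left with
  | one => left; exact one_mem _
  | mul_left x hx y _ ih =>
    rcases hx with rfl | rfl
    · exact hum _ ih
    · exact htm _ ih
  | inv_mul_cancel x hx y _ ih =>
    rcases hx with rfl | rfl
    · rw [hui]; exact hum _ ih
    · rw [hti]; exact htm _ ih

theorem infinite_case (t u v : W) (i₀ : B) (ht : cs.IsReflection t) (hu : cs.IsReflection u)
    (hv : t = v * cs.simple i₀ * v⁻¹)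
    (hinf : Infinite (Subgroup.closure ({u, t} : Set W)))
    (hvt : η cs v t = 0) (hvu : η cs v u = 1) (w : W) (hwt : η cs w t = 1) : η cs w u = 1 := by
  classical
  have hinj := infinite_order t u ht.mul_self hu.mul_self hinf
  have htt := ht.mul_self
  set c := u * t with hc
  have hct : ∀ n : ℤ, t * c ^ n = c ^ (-n) * t := by
    intro n
    have : t * c * t⁻¹ = c⁻¹ := by simp [hc, ht.inv, hu.inv, mul_assoc, htt]
    have h2 := conj_zpow (a := t) (b := c) (i := n)
    rw [this] at h2
    rw [zpow_neg, ← inv_zpow, h2]; simp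
  let r : ℤ → W := fun n => c ^ n * t
  have hr0 : r 0 = t := by simp [r]
  have hr1 : r 1 = u := by simp [r, hc, mul_assoc, htt]
  have hrinj : Function.Injective r := fun a b h => hinj (mul_right_cancel h)
  have hrr : ∀ k n, r k * r n = c ^ (k - n) := by
    intro k n
    simp only [r]
    rw [mul_assoc, ← mul_assoc t, hct, mul_assoc, htt, mul_one, ← zpow_add, sub_eq_add_neg]
  have hcr : ∀ k n, c ^ k * r n = r (k + n) := by
    intro k n
    simp only [r, ← mul_assoc, zpow_add]
  have hrc : ∀ k n, r k * c ^ n = r (k - n) := by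
    intro k n
    simp only [r]
    rw [mul_assoc, hct, ← mul_assoc, ← zpow_add, sub_eq_add_neg]
  have hrinv : ∀ k, (r k)⁻¹ = r k := by
    intro k
    rw [inv_eq_iff_mul_eq_one, hrr]; simp
  have hrrefl : ∀ k, cs.IsReflection (r k) := by
    intro k
    rcases Int.even_or_odd' k with ⟨j, rfl | rfl⟩
    · have := ht.conj (c ^ j)
      rwa [← hr0, hcr, ← zpow_neg, hrc, show j + 0 - -j = 2 * j by ring] at this
    · have := hu.conj (c ^ j)
      rwa [← hr1, hcr, ← zpow_neg, hrc, show j + 1 - -j = 2 * j + 1 by ring] at this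
  let A : W → ℤ → ZMod 2 := fun w n => η cs w (r n) + η cs v (r n)
  have hAv : ∀ n, A v n = 0 := fun n => zmod2_add_self _
  have hAr : ∀ k w n, A (r k * w) n = A (r k * v) n + A w (2 * k - n) := by
    intro k w n
    simp only [A, η_mul]
    rw [hrinv, hrr, hcr, show k - n + k = 2 * k - n by ring]
    have := zmod2_add_self (η cs v (r (2 * k - n)))
    linear_combination -this
  have hAc : ∀ k w n, A (c ^ k * w) n = A (c ^ k * v) n + A w (n - 2 * k) := by
    intro k w n
    simp only [A, η_mul]
    rw [← zpow_neg, hcr, hrc, show -k + n - k = n - 2 * k by ring]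
    have := zmod2_add_self (η cs v (r (n - 2 * k)))
    linear_combination -this
  have hArk : ∀ k w, A (r k * w) k = A w k + 1 := by
    intro k w
    simp only [A, η_refl_mul cs w _ (hrrefl k)]
    ring
  have hAs : ∀ w i n, A (w * cs.simple i) n = A w n + if r n = w * cs.simple i * w⁻¹ then 1 else 0 := by
    intro w i n
    simp only [A, η_mul_simple]
    ring
  -- a step either does nothing, or is a reflection
  have hstep : ∀ w i, (∀ n, A (w * cs.simple i) n = A w n) ∨
      ∃ k, w * cs.simple i = r k * w ∧ ∀ n, A (r k * w) n = A w n + if n = k then 1 else 0 := by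
    intro w i
    by_cases h : ∃ k, r k = w * cs.simple i * w⁻¹
    · right
      obtain ⟨k, hk⟩ := h
      have e : w * cs.simple i = r k * w := by rw [hk]; simp
      refine ⟨k, e, fun n => ?_⟩
      rw [← e, hAs, ← hk]
      simp only [hrinj.eq_iff]
    · left
      intro n
      rw [hAs, if_neg (fun h' => h ⟨n, h'⟩), add_zero]
  have hpath : ∀ P : W → Prop, P v → (∀ w i, P w → P (w * cs.simple i)) → ∀ w, P w := by
    intro P h0 h1 w
    have := cs.simple_induction_right (p := fun x => P (v * x)) (v⁻¹ * w) (by simpa using h0)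
      (fun x i hx => by rw [← mul_assoc]; exact h1 _ i hx)
    simpa using this
  have hA0 : ∀ n, A (r 0 * v) n = if n = 0 then 1 else 0 := by
    intro n
    have e : r 0 * v = v * cs.simple i₀ := by rw [hr0, hv]; simp
    rw [e, hAs, ← hv, hAv, zero_add, ← hr0]
    simp only [hrinj.eq_iff]
  -- a second simple reflection
  obtain ⟨m, hm0, hm⟩ : ∃ m : ℤ, m ≠ 0 ∧ ∀ n, A (r m * v) n = if n = m then 1 else 0 := by
    by_contra hcon
    push Not at hcon
    have hall : ∀ w, (∀ n, A w n = 0) ∨ (∀ n, A w n = A (r 0 * v) n) := by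
      apply hpath
      · exact Or.inl hAv
      · intro w i hw
        rcases hstep w i with hs | ⟨k, hk, hs⟩
        · simpa only [hs] using hw
        · rw [hk]
          rcases hw with hw | hw
          · right
            have : k = 0 := by
              by_contra hk0
              obtain ⟨n, hn⟩ := hcon k hk0
              apply hn
              have := hs n
              rwa [hAr, hw, hw, add_zero, zero_add] at this
            subst this
            intro n
            rw [hs, hA0, hw, zero_add]
          · left
            have hkk : k = 0 := by
              by_contra hk0
              obtain ⟨n, hn⟩ := hcon (-k) (by omega)
              apply hn
              have e : r (-k) * v = r 0 * (r k * (r 0 * v)) := by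
                rw [← mul_assoc (r k), hrr, ← mul_assoc, hrc]
                congr 2; ring
              rw [e, hAr 0 (r k * (r 0 * v)), hAr k (r 0 * v)]
              have h3 := hs (2 * 0 - n)
              rw [hAr, hw, hw] at h3
              rw [h3, hA0, hA0]
              have e1 : (2 * 0 - n = 0) ↔ n = 0 := by omega
              have e2 : (2 * 0 - n = k) ↔ n = -k := by omega
              simp only [e1, e2]
              rw [← add_assoc, zmod2_add_self, zero_add]
            subst hkk
            intro n
            rw [hs, hw, hA0, zmod2_add_self]
    have h1 := hArk 1 v
    rw [hAv, zero_add] at h1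
    rcases hall (r 1 * v) with h | h
    · rw [h] at h1; exact absurd h1 (by decide)
    · rw [h, hA0] at h1; exact absurd h1 (by decide)
  let X : ℤ → ℤ → ZMod 2 := fun i n => A (c ^ i * v) n
  have hX : ∀ i j n, X (i + j) n = X i n + X j (n - 2 * i) := by
    intro i j n
    simp only [X]
    rw [zpow_add, mul_assoc, hAc]
  have hXfin : {n | X 1 n ≠ 0}.Finite := by
    have h := ((η_finite cs (c ^ (1 : ℤ) * v)).union (η_finite cs v)).preimage (hrinj.injOn)
    refine h.subset ?_
    intro n hn
    simp only [Set.mem_preimage, Set.mem_union, Set.mem_ofPred_eq]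
    by_contra hcon
    push Not at hcon
    apply hn
    simp only [X, A, hcon.1, hcon.2, add_zero]
  have hX11 : X 1 1 = 1 := by
    have h1 := hArk 1 v
    have e : r 1 * v = c ^ (1 : ℤ) * (r 0 * v) := by rw [← mul_assoc, hcr]; rfl
    rw [hAv, zero_add, e, hAc, hA0] at h1
    rw [if_neg (by omega), add_zero] at h1
    exact h1
  have hXm : ∀ n, X m n = (if n = m then 1 else 0) + (if n = 2 * m then 1 else 0) := by
    intro n
    have e : c ^ m * v = r m * (r 0 * v) := by rw [← mul_assoc, hrr, sub_zero]
    simp only [X]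
    rw [e, hAr, hm, hA0]
    have : 2 * m - n = 0 ↔ n = 2 * m := by omega
    simp only [this]
  have hform : ∀ w, ∃ i : ℤ, (∀ n, A w n = X i n) ∨
      (∀ n, A w n = X i n + if n = 2 * i then 1 else 0) := by
    have h2 : ∀ k n, A (r k * v) n = X k n + if n = 2 * k then 1 else 0 := by
      intro k n
      have e : r k * v = c ^ k * (r 0 * v) := by rw [← mul_assoc, hcr, add_zero]
      rw [e, hAc, hA0]
      have : n - 2 * k = 0 ↔ n = 2 * k := by omega
      simp only [this, X]
    have h3 : ∀ w, ∃ i : ℤ, (∀ n, A w n = A (c ^ i * v) n) ∨ (∀ n, A w n = A (r i * v) n) := by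
      apply hpath
      · exact ⟨0, Or.inl fun n => by simp⟩
      · rintro w i ⟨j, hw⟩
        rcases hstep w i with hs | ⟨k, hk, -⟩
        · exact ⟨j, by simpa only [hs] using hw⟩
        · rw [hk]
          rcases hw with hw | hw
          · refine ⟨k - j, Or.inr fun n => ?_⟩
            rw [hAr, hw, ← hAr, ← mul_assoc, hrc]
          · refine ⟨k - j, Or.inl fun n => ?_⟩
            rw [hAr, hw, ← hAr, ← mul_assoc, hrr]
    intro w
    obtain ⟨i, h | h⟩ := h3 w
    · exact ⟨i, Or.inl h⟩
    · exact ⟨i, Or.inr fun n => by rw [h, h2]⟩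
  rcases zmod2_cases (η cs w u) with hwu | hwu
  swap
  · exact hwu
  exfalso
  rcases abs_one_of X hX hXfin hX11 m hm0 hXm with rfl | rfl
  · have hF := X_formula_pos X hX (by simpa using hXm)
    have a0 : A w 0 = 1 := by simp only [A, hr0, hwt, hvt]; rfl
    have a1 : A w 1 = 1 := by simp only [A, hr1, hwu, hvu]; rfl
    obtain ⟨i, h | h⟩ := hform w <;> rw [h, hF] at a0 a1 <;> split_ifs at a0 a1 <;>
      first | omega | (revert a0; decide) | (revert a1; decide)
  · have hF := X_formula_neg X hX (by simpa using hXm)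
    have a0 : A 1 0 = 0 := by simp only [A, hr0, η_one, hvt]; rfl
    have a1 : A 1 1 = 1 := by simp only [A, hr1, η_one, hvu]; rfl
    obtain ⟨i, h | h⟩ := hform 1 <;> rw [h, hF] at a0 a1 <;> split_ifs at a0 a1 <;>
      first | omega | (revert a0; decide) | (revert a1; decide)

end
end Dom


/-- Let `t` be a reflection and `p` a `t`-prefix. For every
reflection `u`, the root of `u` is dominated by the root of `t` (i.e. every
`w` having `t` as left inversion also has `u` as left inversion) iff `u = t`,
or else `u` is a left inversion of `p` and `⟨u, t⟩` is infinite. -/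
theorem stmt_5 {B : Type*} {W : Type*} [Group W] {M : CoxeterMatrix B}
    (cs : CoxeterSystem M W) (t : W) (ht : cs.IsReflection t)
    (p : W)
    (hp1 : cs.length p + cs.length (p⁻¹ * t) = cs.length t)
    (hp2 : 2 * cs.length p = cs.length t + 1)
    (u : W) (hu : cs.IsReflection u) :
    (∀ w : W, cs.IsLeftInversion w t → cs.IsLeftInversion w u) ↔
      (u = t ∨ (cs.IsLeftInversion p u ∧
        Infinite (Subgroup.closure ({u, t} : Set W)))) := by
 
  obtain ⟨v, i, hpv, htv, hvt⟩ := Dom.prefix_struct cs t p ht hp1 hp2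
  have hpr : ∀ r, r ≠ t → Dom.η cs p r = Dom.η cs v r := by
    intro r hr
    rw [hpv, Dom.η_mul_simple, ← htv, if_neg hr, add_zero]
  have hpt : Dom.η cs p t = 1 := by
    rw [hpv, Dom.η_mul_simple, ← htv, if_pos rfl, hvt, zero_add]
  simp only [Dom.leftInv_iff cs _ t ht, Dom.leftInv_iff cs _ u hu]
  constructor
  · intro hdom
    by_cases hut : u = t
    · exact Or.inl hut
    · right
      have hpu := hdom p hpt
      exact ⟨hpu, Dom.finite_case cs t u v ht hu hvt (by rw [← hpr u hut, hpu]) hdom⟩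
  · rintro (rfl | ⟨hpu, hinf⟩)
    · exact fun w h => h
    · by_cases hut : u = t
      · subst hut; exact fun w h => h
      · exact Dom.infinite_case cs t u v i ht hu htv hinf hvt (by rw [← hpr u hut, hpu])
end

section
/- Let r, t ∈ W be distinct reflections, W' := Subgroup.closure {r, t}, and let p_r be an r-prefix. Let D := {u ∈ W | u ∈ W', u is a reflection, and u is a left inversion of p_r}. Suppose D has more than one element. Then: there is a unique a ∈ D such that ℓ(a) < ℓ(u) for every u ∈ D with u ≠ a; there is a unique c ∈ D with c ≠ a such that ℓ(c) < ℓ(u) for every u ∈ D with u ≠ a and u ≠ c; and the set of canonical generators χ(W') := {u ∈ W | u ∈ W', u is a reflection, and every reflection v ∈ W' that is a left inversion of u equals u} is exactly {a, a * c * a}. -/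
namespace CoxAux

open Classical in
/-- generator of the signed reflection representation -/
noncomputable def refFun {W : Type*} [Group W] (a : W) (p : W × ZMod 2) : W × ZMod 2 :=
  (a * p.1 * a, p.2 + if p.1 = a then 1 else 0)

theorem refFun_invol {W : Type*} [Group W] (a : W) (ha : a * a = 1) (p : W × ZMod 2) :
    refFun a (refFun a p) = p := by
  classical
  obtain ⟨t, e⟩ := p
  have h1 : a * (a * t * a) * a = t := by
    rw [show a * (a * t * a) * a = (a * a) * t * (a * a) by group]; simp [ha]
  have h2 : a * t * a = a ↔ t = a := by
    constructor
    · intro h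
      rw [← h1, h, ha, one_mul]
    · rintro rfl; simp [ha]
  refine Prod.ext h1 ?_
  by_cases h : t = a
  · change e + (if t = a then (1 : ZMod 2) else 0) + (if a * t * a = a then 1 else 0) = e
    rw [if_pos h, if_pos (h2.2 h), add_assoc, CharTwo.add_self_eq_zero, add_zero]
  · change e + (if t = a then (1 : ZMod 2) else 0) + (if a * t * a = a then 1 else 0) = e
    rw [if_neg h, if_neg (fun h' => h (h2.1 h'))]; simp

/-- as a permutation -/
noncomputable def refPerm {W : Type*} [Group W] (a : W) (ha : a * a = 1) :
    Equiv.Perm (W × ZMod 2) where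
  toFun := refFun a
  invFun := refFun a
  left_inv := refFun_invol a ha
  right_inv := refFun_invol a ha

theorem flip_pow {W : Type*} [Group W] (a b : W) (ha : a * a = 1) (hb : b * b = 1) (k : ℕ) :
    b * (a * b) ^ k = ((a * b) ^ k)⁻¹ * b := by
  have ha' : a⁻¹ = a := inv_eq_of_mul_eq_one_left ha
  have hb' : b⁻¹ = b := inv_eq_of_mul_eq_one_left hb
  induction k with
  | zero => simp
  | succ k ih =>
    rw [pow_succ, ← mul_assoc, ih, mul_inv_rev, mul_inv_rev, ha', hb']
    have : ((a * b) ^ k)⁻¹ * (b * a) = b * a * ((a * b) ^ k)⁻¹ := by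
      have : b * a = (a * b)⁻¹ := by simp [ha', hb']
      rw [this, ← mul_inv_rev, ← mul_inv_rev, ← pow_succ, ← pow_succ']
    rw [← this]; group

open Classical in
theorem refPerm_pow {W : Type*} [Group W] (a b : W) (ha : a * a = 1) (hb : b * b = 1) (k : ℕ)
    (t : W) (e : ZMod 2) :
    ((refPerm a ha * refPerm b hb) ^ k) (t, e) =
      ((a * b) ^ k * t * ((a * b) ^ k)⁻¹,
        e + ∑ q ∈ Finset.range (2 * k), if t = ((a * b) ^ q)⁻¹ * b then 1 else 0) := by
  have ha' : a⁻¹ = a := inv_eq_of_mul_eq_one_left ha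
  have hb' : b⁻¹ = b := inv_eq_of_mul_eq_one_left hb
  induction k with
  | zero => simp
  | succ k ih =>
    have h1 : (a * b) ^ k * t * ((a * b) ^ k)⁻¹ = b ↔ t = ((a * b) ^ (2 * k))⁻¹ * b := by
      have : ((a * b) ^ (2 * k))⁻¹ * b = ((a * b) ^ k)⁻¹ * b * (a * b) ^ k := by
        rw [mul_assoc, flip_pow a b ha hb, two_mul, pow_add]; group
      rw [this, mul_inv_eq_iff_eq_mul, mul_assoc, eq_inv_mul_iff_mul_eq]
    have h2 : b * ((a * b) ^ k * t * ((a * b) ^ k)⁻¹) * b = a ↔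
        t = ((a * b) ^ (2 * k + 1))⁻¹ * b := by
      have : ((a * b) ^ (2 * k + 1))⁻¹ * b = ((a * b) ^ k)⁻¹ * (b * a * b) * (a * b) ^ k := by
        rw [mul_assoc, mul_assoc, flip_pow a b ha hb, show 2 * k + 1 = k + 1 + k by ring, pow_add,
          pow_succ]
        simp [ha', hb', mul_assoc]
      rw [this]
      constructor
      · intro h
        rw [show b * a * b = b * (b * ((a * b) ^ k * t * ((a * b) ^ k)⁻¹) * b) * b by rw [h]]
        have e1 : b * (b * ((a * b) ^ k * t * ((a * b) ^ k)⁻¹) * b) * b =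
          (b * b) * ((a * b) ^ k * t * ((a * b) ^ k)⁻¹) * (b * b) := by group
        rw [e1, hb]; group
      · rintro rfl
        have e1 : b * ((a * b) ^ k * (((a * b) ^ k)⁻¹ * (b * a * b) * (a * b) ^ k) *
           ((a * b) ^ k)⁻¹) * b = (b * b) * a * (b * b) := by group
        rw [e1, hb]; simp
    rw [pow_succ', Equiv.Perm.mul_apply, ih, Equiv.Perm.mul_apply]
    simp only [refPerm, Equiv.coe_fn_mk, refFun, h1, h2, Prod.mk.injEq]
    refine ⟨?_, ?_⟩
    · rw [pow_succ', mul_inv_rev, mul_inv_rev, ha', hb']; group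
    · rw [show 2 * (k + 1) = 2 * k + 1 + 1 by ring, Finset.sum_range_succ, Finset.sum_range_succ]
      ring

variable {B : Type*} {W : Type*} [Group W] {M : CoxeterMatrix B} (cs : CoxeterSystem M W)

theorem liftable : M.IsLiftable
    (fun i => refPerm (cs.simple i) (cs.simple_mul_simple_self i)) := by
  classical
  intro i j
  ext1 ⟨t, e⟩
  rw [refPerm_pow, two_mul, Finset.sum_range_add]
  simp only [pow_add, cs.simple_mul_simple_pow, one_mul]
  rw [CharTwo.add_self_eq_zero]
  simp

/-- signed reflection representation -/
noncomputable def rep : W →* Equiv.Perm (W × ZMod 2) := cs.lift ⟨_, liftable cs⟩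

/-- left inversion indicator -/
noncomputable def n (w t : W) : ZMod 2 := (rep cs w⁻¹ (t, 0)).2

theorem rep_apply (w t : W) (e : ZMod 2) :
    rep cs w (t, e) = (w * t * w⁻¹, e + (rep cs w (t, 0)).2) := by
  classical
  induction w using cs.simple_induction_left generalizing t e with
  | one => simp
  | mul_simple_left w i ih =>
    have h : ∀ p, rep cs (cs.simple i) p = refFun (cs.simple i) p := by
      intro p
      rw [rep, cs.lift_apply_simple]; rfl
    rw [map_mul, Equiv.Perm.mul_apply, Equiv.Perm.mul_apply, ih, h, ih t 0, h]
    simp only [refFun, zero_add, Prod.mk.injEq]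
    refine ⟨?_, by ring⟩
    simp [mul_assoc]

theorem n_mul (v w t : W) : n cs (v * w) t = n cs v t + n cs w (v⁻¹ * t * v) := by
  unfold n
  rw [mul_inv_rev, map_mul, Equiv.Perm.mul_apply, rep_apply cs v⁻¹, rep_apply cs w⁻¹]
  simp

theorem n_one (t : W) : n cs 1 t = 0 := by simp [n]

open Classical in
theorem n_simple (i : B) (t : W) : n cs (cs.simple i) t = if t = cs.simple i then 1 else 0 := by
  unfold n
  rw [cs.inv_simple, rep, cs.lift_apply_simple]
  simp [refPerm, refFun]

theorem n_wordProd (ω : List B) (t : W) (h : n cs (cs.wordProd ω) t ≠ 0) :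
    t ∈ cs.leftInvSeq ω := by
  classical
  induction ω generalizing t with
  | nil => simp [n_one] at h
  | cons i ω ih =>
    rw [cs.wordProd_cons, n_mul, n_simple] at h
    rw [CoxeterSystem.leftInvSeq]
    by_cases hi : t = cs.simple i
    · simp [hi]
    · rw [if_neg hi, zero_add] at h
      have := ih _ h
      refine List.mem_cons_of_mem _ (List.mem_map.2 ⟨_, this, ?_⟩)
      simp [mul_assoc]

theorem n_self {t : W} (ht : cs.IsReflection t) : n cs t t = 1 := by
  obtain ⟨v, i, rfl⟩ := ht
  have h0 := n_mul cs v v⁻¹ (v * cs.simple i * v⁻¹)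
  rw [mul_inv_cancel, n_one] at h0
  have h1 : v⁻¹ * (v * cs.simple i * v⁻¹) * v = cs.simple i := by group
  rw [h1] at h0
  rw [mul_assoc, n_mul, ← mul_assoc, h1, n_mul, n_simple, if_pos rfl]
  have h2 : (cs.simple i)⁻¹ * cs.simple i * cs.simple i = cs.simple i := by group
  rw [h2, add_left_comm, ← h0, add_zero]

theorem n_eq_one_iff {w t : W} (ht : cs.IsReflection t) :
    n cs w t = 1 ↔ cs.IsLeftInversion w t := by
  have key : ∀ w, n cs w t = 1 → cs.IsLeftInversion w t := by
    intro w h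
    obtain ⟨ω, hω, rfl⟩ := cs.exists_isReduced w
    exact cs.isLeftInversion_of_mem_leftInvSeq hω (n_wordProd cs ω t (by rw [h]; decide))
  refine ⟨key w, fun h => ?_⟩
  by_contra h'
  have h0 : n cs w t = 0 := by
    revert h'; generalize n cs w t = z; revert z; decide
  have h1 : n cs (t * w) t = 1 := by
    rw [n_mul, n_self cs ht, ht.inv, ht.mul_self, one_mul, h0, add_zero]
  exact (ht.isLeftInversion_mul_right_iff.1 (key _ h1)) h

theorem n_eq_zero_iff {w t : W} (ht : cs.IsReflection t) :
    n cs w t = 0 ↔ ¬ cs.IsLeftInversion w t := by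
  rw [← n_eq_one_iff cs ht]
  generalize n cs w t = z; revert z; decide

/-- reduced words of reflections are essentially palindromic -/
theorem palin {y : W} (hy : cs.IsReflection y) {ω : List B} (hω : cs.IsReduced ω)
    (h : cs.wordProd ω = y) : ∃ j, ∃ hj : j < ω.length, ω.length = 2 * j + 1 ∧
      y = cs.wordProd (ω.take j) * cs.simple ω[j] * (cs.wordProd (ω.take j))⁻¹ := by
  have h1 : y ∈ cs.leftInvSeq ω := n_wordProd cs ω y (by rw [h, n_self cs hy]; decide)
  obtain ⟨j, hj, hjy⟩ := List.mem_iff_getElem.1 h1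
  have hj' : j < ω.length := by simpa using hj
  refine ⟨j, hj', ?_, ?_⟩
  · have h2 := cs.getD_leftInvSeq_mul_wordProd ω j
    rw [List.getD_eq_getElem _ _ hj, hjy, h, hy.mul_self, List.eraseIdx_eq_take_drop_succ,
      cs.wordProd_append] at h2
    have h3 : cs.wordProd (ω.take j) = (cs.wordProd (ω.drop (j + 1)))⁻¹ :=
      eq_inv_of_mul_eq_one_left h2.symm
    have h4 := congrArg cs.length h3
    rw [cs.length_inv, (hω.take j).eq, (hω.drop _).eq] at h4
    simp at h4
    omega
  · rw [← hjy, cs.getElem_leftInvSeq ω j hj']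

theorem length_conj_lt {y : W} (hy : cs.IsReflection y) (i : B) (hd : cs.IsLeftDescent y i)
    (hne : y ≠ cs.simple i) :
    cs.length (cs.simple i * y * cs.simple i) < cs.length y := by
  obtain ⟨ω, hω, hy'⟩ := cs.exists_isReduced (cs.simple i * y)
  have h1 : cs.wordProd (i :: ω) = y := by rw [cs.wordProd_cons, ← hy']; simp
  have h2 : cs.IsReduced (i :: ω) := by
    unfold CoxeterSystem.IsReduced
    rw [h1, List.length_cons, ← hω.eq, ← hy']
    exact (cs.isLeftDescent_iff.1 hd).symm
  obtain ⟨j, hj, hl, he⟩ := palin cs hy h2 h1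
  have h3 : cs.length y = 2 * j + 1 := by rw [← hl, ← h2.eq, h1]
  cases j with
  | zero => simp at he; exact absurd he hne
  | succ j =>
    have h4 : cs.simple i * y * cs.simple i = cs.wordProd (ω.take j) *
        (cs.simple (i :: ω)[j+1] * (cs.wordProd (ω.take j))⁻¹) := by
      conv_lhs => rw [he]
      simp [cs.wordProd_cons, mul_assoc]
    rw [h4, h3]
    have e1 := cs.length_mul_le (cs.wordProd (ω.take j))
        (cs.simple (i :: ω)[j+1] * (cs.wordProd (ω.take j))⁻¹)
    have e2 := cs.length_mul_le (cs.simple (i :: ω)[j+1]) (cs.wordProd (ω.take j))⁻¹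
    rw [cs.length_inv, cs.length_simple] at e2
    have e3 := cs.length_wordProd_le (ω.take j)
    have e4 : (ω.take j).length ≤ j := by simp
    omega

/-- facts about a reflection prefix -/
theorem prefix_facts {r p : W} (hr : cs.IsReflection r)
    (h1 : cs.length p + cs.length (p⁻¹ * r) = cs.length r)
    (h2 : 2 * cs.length p = cs.length r + 1) :
    cs.IsLeftInversion p r ∧ (∀ u, cs.IsLeftInversion p u → cs.IsLeftInversion r u) ∧
    (∀ u, cs.IsLeftInversion p u → u ≠ r → ¬ cs.IsLeftInversion p (r * u * r)) := by
  classical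
  have F2 : ∀ u, cs.IsLeftInversion p u → cs.IsLeftInversion r u := by
    intro u hu
    refine ⟨hu.1, ?_⟩
    have := cs.length_mul_le (u * p) (p⁻¹ * r)
    rw [show u * p * (p⁻¹ * r) = u * r by group] at this
    have := hu.2
    omega
  obtain ⟨ω₁, hω₁, e₁⟩ := cs.exists_isReduced p
  obtain ⟨ω₂, hω₂, e₂⟩ := cs.exists_isReduced (p⁻¹ * r)
  have hw : cs.wordProd (ω₁ ++ ω₂) = r := by rw [cs.wordProd_append, ← e₁, ← e₂]; group
  have l₁ : cs.length p = ω₁.length := by rw [← hω₁.eq, ← e₁]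
  have l₂ : cs.length (p⁻¹ * r) = ω₂.length := by rw [← hω₂.eq, ← e₂]
  have hred : cs.IsReduced (ω₁ ++ ω₂) := by
    unfold CoxeterSystem.IsReduced
    rw [hw, List.length_append]; omega
  obtain ⟨j, hj, hl, he⟩ := palin cs hr hred hw
  have hlr : cs.length r = 2 * j + 1 := by rw [← hl, ← hred.eq, hw]
  have hj1 : ω₁.length = j + 1 := by omega
  have hj2 : j < ω₁.length := by omega
  rw [List.take_append_of_le_length (by omega), List.getElem_append_left hj2] at he
  set p0 := cs.wordProd (ω₁.take j) with hp0
  set i := ω₁[j] with hi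
  have hp : p = p0 * cs.simple i := by
    rw [e₁]
    have : ω₁ = ω₁.take j ++ [i] := by
      rw [hi, List.take_append_getElem, ← hj1, List.take_length]
    rw [this, cs.wordProd_append, cs.wordProd_singleton]
  have hrp : r * p = p0 := by rw [he, hp]; simp [mul_assoc]
  have hp' : p = r * p0 := by rw [← hrp, ← mul_assoc, hr.mul_self, one_mul]
  have F1 : cs.IsLeftInversion p r := by
    refine ⟨hr, ?_⟩
    rw [hrp, l₁, hj1]
    have := cs.length_wordProd_le (ω₁.take j)
    rw [← hp0] at this
    have : (ω₁.take j).length ≤ j := by simp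
    omega
  refine ⟨F1, F2, ?_⟩
  intro u hu hne hv
  have hur := F2 u hu
  have a1 := (n_eq_one_iff cs hu.1).2 hu
  have a2 := (n_eq_one_iff cs hu.1).2 hur
  have a3 := (n_eq_one_iff cs hv.1).2 hv
  rw [hp', n_mul, a2, hr.inv] at a1
  have a4 : n cs p0 (r * u * r) = 0 := by simpa using a1
  rw [hp, n_mul, a4, n_simple, zero_add] at a3
  have a5 : p0⁻¹ * (r * u * r) * p0 = cs.simple i := by
    by_contra h; rw [if_neg h] at a3; exact absurd a3 (by decide)
  apply hne
  have a6 : r * u * r = r := by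
    conv_rhs => rw [he]
    rw [← a5]; group
  have a7 : u = r * (r * u * r) * r := by
    rw [show r * (r * u * r) * r = (r * r) * u * (r * r) by group, hr.mul_self]; simp
  rw [a7, a6, hr.mul_self, one_mul]

end CoxAux

namespace CoxAux

theorem flip_zpow {W : Type*} [Group W] {a b : W} (ha : a * a = 1) (hb : b * b = 1) (k : ℤ) :
    a * (a * b) ^ k = (a * b) ^ (-k) * a := by
  have ha' : a⁻¹ = a := inv_eq_of_mul_eq_one_left ha
  have hb' : b⁻¹ = b := inv_eq_of_mul_eq_one_left hb
  have h : a * (a * b) * a⁻¹ = (a * b)⁻¹ := by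
    rw [mul_inv_rev, ha', hb', ← mul_assoc, ha, one_mul]
  have h2 : a * (a * b) ^ k * a⁻¹ = (a * b) ^ (-k) := by
    rw [← conj_zpow, h, inv_zpow, zpow_neg]
  rw [← h2]; group

theorem dihedral_form {W : Type*} [Group W] {a b : W} (ha : a * a = 1) (hb : b * b = 1) {w : W}
    (hw : w ∈ Subgroup.closure ({a, b} : Set W)) :
    ∃ k : ℤ, w = (a * b) ^ k ∨ w = (a * b) ^ k * a := by
  have ha' : a⁻¹ = a := inv_eq_of_mul_eq_one_left ha
  have hb' : b⁻¹ = b := inv_eq_of_mul_eq_one_left hb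
  have hb2 : b = a * (a * b) := by rw [← mul_assoc, ha, one_mul]
  have hA : ∀ y : W, (∃ k : ℤ, y = (a * b) ^ k ∨ y = (a * b) ^ k * a) →
      ∃ k : ℤ, a * y = (a * b) ^ k ∨ a * y = (a * b) ^ k * a := by
    rintro y ⟨k, rfl | rfl⟩
    · exact ⟨-k, Or.inr (flip_zpow ha hb k)⟩
    · refine ⟨-k, Or.inl ?_⟩
      rw [← mul_assoc, flip_zpow ha hb k, mul_assoc, ha, mul_one]
  have hR : ∀ y : W, (∃ k : ℤ, y = (a * b) ^ k ∨ y = (a * b) ^ k * a) →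
      ∃ k : ℤ, (a * b) * y = (a * b) ^ k ∨ (a * b) * y = (a * b) ^ k * a := by
    rintro y ⟨k, rfl | rfl⟩
    · exact ⟨1 + k, Or.inl (by rw [zpow_add, zpow_one])⟩
    · exact ⟨1 + k, Or.inr (by rw [zpow_add, zpow_one, mul_assoc (a * b)])⟩
  have hB : ∀ y : W, (∃ k : ℤ, y = (a * b) ^ k ∨ y = (a * b) ^ k * a) →
      ∃ k : ℤ, b * y = (a * b) ^ k ∨ b * y = (a * b) ^ k * a := by
    intro y hy
    have := hA _ (hR y hy)
    rwa [← mul_assoc, ← hb2] at this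
  induction hw using Subgroup.closure_induction_left with
  | one => exact ⟨0, Or.inl (by simp)⟩
  | mul_left x hx y hy ih =>
    rcases hx with rfl | rfl
    · exact hA y ih
    · exact hB y ih
  | inv_mul_cancel x hx y hy ih =>
    rcases hx with rfl | rfl
    · rw [ha']; exact hA y ih
    · rw [hb']; exact hB y ih

/-- alternating words -/
def A {W : Type*} [Group W] (x y : W) : ℕ → W
  | 0 => 1
  | k + 1 => x * A y x k

/-- reflections attached to alternating words -/
def U {W : Type*} [Group W] (x y : W) (k : ℕ) : W := (x * y) ^ k * x

section words
variable {W : Type*} [Group W] {x y : W} (hx : x * x = 1) (hy : y * y = 1)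

theorem mul_pow_swap (x y : W) (k : ℕ) : x * (y * x) ^ k = (x * y) ^ k * x := by
  induction k with
  | zero => simp
  | succ k ih => rw [pow_succ', pow_succ', mul_assoc (x * y), ← ih]; simp only [mul_assoc]

theorem U_succ (x y : W) (k : ℕ) : U x y (k + 1) = x * U y x k * x := by
  unfold U
  rw [← mul_assoc, mul_pow_swap, pow_succ]; simp only [mul_assoc]

theorem A_even (x y : W) (d : ℕ) : A x y (2 * d) = (x * y) ^ d := by
  induction d with
  | zero => simp [A]
  | succ d ih =>
    rw [show 2 * (d + 1) = 2 * d + 1 + 1 by ring, A, A, ih, pow_succ', mul_assoc]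

theorem A_add_even (x y : W) (d m : ℕ) : A x y (2 * d + m) = (x * y) ^ d * A x y m := by
  induction d with
  | zero => simp
  | succ d ih =>
    rw [show 2 * (d + 1) + m = 2 * d + m + 1 + 1 by ring, A, A, ih, pow_succ']
    simp only [mul_assoc]

theorem U_eq_A (x y : W) (k : ℕ) : U x y k = A x y (2 * k + 1) := by
  rw [A_add_even]; simp [U, A]

include hx in
theorem A_succ (hy : y * y = 1) (k : ℕ) : A x y (k + 1) = U x y k * A x y k := by
  induction k generalizing x y with
  | zero => simp [A, U]
  | succ k ih =>
    rw [A, ih hy hx, U_succ, A, mul_assoc _ x (x * _), ← mul_assoc x x, hx]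
    simp only [mul_assoc, one_mul]

theorem pow_swap_one (x y : W) {d : ℕ} (h : (x * y) ^ d = 1) : (y * x) ^ d = 1 := by
  have := mul_pow_swap x y d
  rw [h, one_mul] at this
  exact mul_eq_left.1 this

include hx in
theorem A_comp (hy : y * y = 1) (d l m : ℕ) (hd : (x * y) ^ d = 1) (h : l + m = 2 * d) :
    A x y l = A y x m := by
  induction l generalizing x y m with
  | zero =>
    rw [zero_add] at h
    rw [h, A_even, pow_swap_one _ _ hd]; rfl
  | succ l ih =>
    rw [A, ih hy hx (m + 1) (pow_swap_one _ _ hd) (by omega), A, ← mul_assoc, hx, one_mul]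

include hx in
theorem A_reduce (hy : y * y = 1) (d l : ℕ) (hd : (x * y) ^ d = 1) (h0 : 0 < d) (h : d < l) :
    ∃ l' < l, A x y l = A x y l' ∨ A x y l = A y x l' := by
  by_cases h2 : l ≤ 2 * d
  · exact ⟨2 * d - l, by omega, Or.inr (A_comp hx hy d l _ hd (by omega))⟩
  · refine ⟨l - 2 * d, by omega, Or.inl ?_⟩
    conv_lhs => rw [show l = 2 * d + (l - 2 * d) by omega, A_add_even, hd, one_mul]

include hx in
theorem A_exists (hy : y * y = 1) {w : W} (hw : w ∈ Subgroup.closure ({x, y} : Set W)) :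
    ∃ l, w = A x y l ∨ w = A y x l := by
  have hx' : x⁻¹ = x := inv_eq_of_mul_eq_one_left hx
  have hy' : y⁻¹ = y := inv_eq_of_mul_eq_one_left hy
  have key : ∀ x y : W, x * x = 1 → ∀ w : W, (∃ l, w = A x y l ∨ w = A y x l) →
      ∃ l, x * w = A x y l ∨ x * w = A y x l := by
    rintro x y hx w ⟨l, rfl | rfl⟩
    · cases l with
      | zero => exact ⟨1, Or.inl rfl⟩
      | succ l => exact ⟨l, Or.inr (by rw [A, ← mul_assoc, hx, one_mul])⟩
    · exact ⟨l + 1, Or.inl rfl⟩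
  have key2 : ∀ w : W, (∃ l, w = A x y l ∨ w = A y x l) →
      ∃ l, y * w = A x y l ∨ y * w = A y x l := by
    rintro w ⟨l, h⟩
    obtain ⟨l', h'⟩ := key y x hy w ⟨l, h.symm⟩
    exact ⟨l', h'.symm⟩
  induction hw using Subgroup.closure_induction_left with
  | one => exact ⟨0, Or.inl rfl⟩
  | mul_left a ha b hb ih =>
    rcases ha with rfl | rfl
    · exact key _ _ hx b ih
    · exact key2 b ih
  | inv_mul_cancel a ha b hb ih =>
    rcases ha with rfl | rfl
    · rw [hx']; exact key _ _ hx b ih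
    · rw [hy']; exact key2 b ih

theorem U_eq (x y : W) {i d : ℕ} (h : U x y i = U x y (i + d)) : (x * y) ^ d = 1 := by
  unfold U at h
  rw [pow_add] at h
  have := mul_right_cancel h
  exact left_eq_mul.1 this

include hx in
theorem U_conj (hy : y * y = 1) (i j m : ℕ) (h : i + m = 2 * j) :
    U x y j * U x y i * U x y j = U x y m := by
  unfold U
  have h1 := flip_zpow hx hy (i : ℤ)
  have h2 : (m : ℤ) = j + (-i + j) := by omega
  rw [← zpow_natCast (x * y) i, ← zpow_natCast (x * y) j, ← zpow_natCast (x * y) m, h2,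
    zpow_add, zpow_add]
  calc _ = (x * y) ^ (j : ℤ) * (x * (x * y) ^ (i : ℤ)) * x * (x * y) ^ (j : ℤ) * x := by
        simp only [mul_assoc]
    _ = (x * y) ^ (j : ℤ) * (x * y) ^ (-i : ℤ) * (x * x) * (x * y) ^ (j : ℤ) * x := by
        rw [h1]; simp only [mul_assoc]
    _ = _ := by rw [hx]; simp only [mul_assoc, one_mul]

end words

variable {B : Type*} {W : Type*} [Group W] {M : CoxeterMatrix B} (cs : CoxeterSystem M W)

/-- Dyer's canonical generators -/
def chi (H : Subgroup W) : Set W :=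
  {u : W | u ∈ H ∧ cs.IsReflection u ∧ ∀ v : W, v ∈ H → cs.IsLeftInversion u v → v = u}

open Classical in
theorem n_chi {H : Subgroup W} {u v : W} (hu : u ∈ chi cs H) (hv : v ∈ H)
    (hv' : cs.IsReflection v) : n cs u v = if v = u then 1 else 0 := by
  split_ifs with h
  · rw [h]; exact n_self cs hu.2.1
  · rw [n_eq_zero_iff cs hv']; exact fun h' => h (hu.2.2 v hv h')

theorem simple_chi {H : Subgroup W} {i : B} (hi : cs.simple i ∈ H) : cs.simple i ∈ chi cs H := by
  classical
  refine ⟨hi, cs.isReflection_simple i, fun v hv h => ?_⟩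
  rw [← n_eq_one_iff cs h.1, n_simple] at h
  by_contra h'
  rw [if_neg h'] at h
  exact absurd h (by decide)

theorem refl_conj_simple {v : W} (hv : cs.IsReflection v) (i : B) :
    cs.IsReflection (cs.simple i * v * cs.simple i) := by
  have := hv.conj (cs.simple i)
  rwa [cs.inv_simple] at this

theorem ss (i : B) (u : W) : cs.simple i * (cs.simple i * u * cs.simple i) * cs.simple i = u := by
  simp [mul_assoc]

theorem chi_gen (k : ℕ) : ∀ (H : Subgroup W) (t : W), cs.length t = k → t ∈ H →
    cs.IsReflection t → t ∈ Subgroup.closure (chi cs H) := by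
  classical
  induction k using Nat.strong_induction_on with
  | _ k IH =>
  intro H t hk htH ht
  have ht1 : t ≠ 1 := by
    rintro rfl
    have := ht.odd_length; simp at this
  obtain ⟨i, hi⟩ := cs.exists_leftDescent_of_ne_one ht1
  by_cases hts : t = cs.simple i
  · rw [hts] at htH ⊢
    exact Subgroup.subset_closure (simple_chi cs htH)
  have hlt := length_conj_lt cs ht i hi hts
  rw [hk] at hlt
  have hrefl := refl_conj_simple cs ht i
  by_cases hsH : cs.simple i ∈ H
  · have hs : cs.simple i ∈ Subgroup.closure (chi cs H) :=
      Subgroup.subset_closure (simple_chi cs hsH)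
    have := IH _ hlt H _ rfl (H.mul_mem (H.mul_mem hsH htH) hsH) hrefl
    rw [← ss cs i t]
    exact mul_mem (mul_mem hs this) hs
  · let H1 : Subgroup W := H.comap (MulAut.conj (cs.simple i)).toMonoidHom
    have mem1 : ∀ w, w ∈ H1 ↔ cs.simple i * w * cs.simple i ∈ H := by
      intro w
      simp [H1, Subgroup.mem_comap]
    have h1 := IH _ hlt H1 _ rfl (by rw [mem1, ss]; exact htH) hrefl
    have h2 : Subgroup.closure (chi cs H1) ≤
        (Subgroup.closure (chi cs H)).comap (MulAut.conj (cs.simple i)).toMonoidHom := by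
      rw [Subgroup.closure_le]
      rintro u ⟨hu1, hu2, hu3⟩
      rw [mem1] at hu1
      simp only [Subgroup.coe_comap, Set.mem_preimage, SetLike.mem_coe, MulEquiv.toMonoidHom_eq_coe,
        MonoidHom.coe_coe, MulAut.conj_apply, cs.inv_simple]
      refine Subgroup.subset_closure ⟨hu1, refl_conj_simple cs hu2 i, fun v hv hvi => ?_⟩
      have hvr := refl_conj_simple cs hvi.1 i
      have hn := (n_eq_one_iff cs hvi.1).2 hvi
      rw [mul_assoc, n_mul, n_mul, n_simple, n_simple, cs.inv_simple, if_neg, zero_add,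
        if_neg, add_zero, n_eq_one_iff cs hvr] at hn
      · have := hu3 _ (by rw [mem1, ss]; exact hv) hn
        rw [← this, ss]
      · intro h
        apply hsH
        have e1 : cs.simple i = (cs.simple i * u * cs.simple i)⁻¹ * v *
            (cs.simple i * u * cs.simple i) := by
          have e0 : (cs.simple i * u * cs.simple i)⁻¹ * v * (cs.simple i * u * cs.simple i) =
              cs.simple i * (u⁻¹ * (cs.simple i * v * cs.simple i) * u) * cs.simple i := by
            simp [mul_assoc]
          rw [e0, h]; simp
        rw [e1]
        exact mul_mem (mul_mem (inv_mem hu1) hv) hu1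
      · rintro rfl; exact hsH hv
    have h3 := h2 h1
    simpa [Subgroup.mem_comap, ss, mul_assoc] using h3

theorem refl_form {r t u : W} (hr : cs.IsReflection r) (ht : cs.IsReflection t)
    (hu : cs.IsReflection u) (hm : u ∈ Subgroup.closure ({r, t} : Set W)) :
    ∃ k : ℤ, u = (r * t) ^ k * r := by
  obtain ⟨k, rfl | h⟩ := dihedral_form hr.mul_self ht.mul_self hm
  · exfalso
    have p : ∀ v, cs.IsReflection v → cs.lengthParity v = Multiplicative.ofAdd 1 := by
      intro v hv
      obtain ⟨w, i, rfl⟩ := hv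
      simp [cs.lengthParity_simple]
    have := p _ hu
    rw [map_zpow, map_mul, p r hr, p t ht,
      show (Multiplicative.ofAdd (1 : ZMod 2)) * Multiplicative.ofAdd 1 = 1 from rfl, one_zpow] at this
    exact absurd this (by decide)
  · exact ⟨k, h⟩

theorem three {r t x y z : W} (hr : cs.IsReflection r) (ht : cs.IsReflection t)
    (hx : cs.IsReflection x) (hxm : x ∈ Subgroup.closure ({r, t} : Set W))
    (hy : cs.IsReflection y) (hym : y ∈ Subgroup.closure ({r, t} : Set W))
    (hz : cs.IsReflection z) (hzm : z ∈ Subgroup.closure ({r, t} : Set W)) :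
    x * y * z = z * y * x := by
  obtain ⟨i, rfl⟩ := refl_form cs hr ht hx hxm
  obtain ⟨j, rfl⟩ := refl_form cs hr ht hy hym
  obtain ⟨k, rfl⟩ := refl_form cs hr ht hz hzm
  have key : ∀ i k : ℤ, (r * t) ^ i * r * ((r * t) ^ j * r) * ((r * t) ^ k * r) =
      (r * t) ^ (i - j + k) * r := by
    intro i k
    calc _ = (r * t) ^ i * (r * (r * t) ^ j) * r * (r * t) ^ k * r := by simp only [mul_assoc]
      _ = (r * t) ^ i * (r * t) ^ (-j) * (r * r) * (r * t) ^ k * r := by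
        rw [flip_zpow hr.mul_self ht.mul_self]; simp only [mul_assoc]
      _ = _ := by rw [hr.mul_self, mul_one, ← zpow_add, ← zpow_add]; rfl
  rw [key, key]
  congr 2
  ring

theorem refl_conj {u v : W} (hu : cs.IsReflection u) (hv : cs.IsReflection v) :
    cs.IsReflection (u * v * u) := by
  have := hv.conj u
  rwa [hu.inv] at this

theorem chi_A {H : Subgroup W} {p q : W} (hp : p ∈ chi cs H) (hq : q ∈ chi cs H) (hne : p ≠ q)
    (h : p * q * p ∈ chi cs H) : p * q * p = q := by
  classical
  have hpp := hp.2.1.mul_self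
  have h1 : n cs (p * q * p) p = 0 := by
    rw [n_chi cs h hp.1 hp.2.1, if_neg]
    intro h'
    apply hne
    rw [mul_assoc] at h'
    have := left_eq_mul.1 h'
    rw [eq_inv_of_mul_eq_one_left this, hp.2.1.inv]
  have e : (p * q)⁻¹ * p * (p * q) = q * p * q := by
    rw [mul_inv_rev, hp.2.1.inv, hq.2.1.inv]
    rw [show q * p * p * (p * q) = q * (p * p) * p * q by group, hpp]; simp
  have e2 : p⁻¹ * p * p = p := by group
  have hm : q * p * q ∈ H := mul_mem (mul_mem hq.1 hp.1) hq.1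
  rw [n_mul, n_mul, e, e2, n_self cs hp.2.1, n_chi cs hq hp.1 hp.2.1, if_neg hne,
    n_chi cs hp hm (refl_conj cs hq.2.1 hp.2.1)] at h1
  by_cases h2 : q * p * q = p
  · have : p * q = q * p := by
      conv_lhs => rw [← h2]
      rw [mul_assoc _ q q, hq.2.1.mul_self, mul_one]
    rw [this, mul_assoc, hpp, mul_one]
  · rw [if_neg h2] at h1
    exact absurd h1 (by decide)

theorem tri {r t x y z : W} (hr : cs.IsReflection r) (ht : cs.IsReflection t)
    (hx : x ∈ chi cs (Subgroup.closure ({r, t} : Set W)))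
    (hy : y ∈ chi cs (Subgroup.closure ({r, t} : Set W)))
    (hz : z ∈ chi cs (Subgroup.closure ({r, t} : Set W)))
    (hxy : x ≠ y) (hxz : x ≠ z) (hyz : y ≠ z) : y * z = z * y := by
  classical
  set H := Subgroup.closure ({r, t} : Set W) with hH
  have h3 := three cs hr ht hx.2.1 hx.1 hy.2.1 hy.1 hz.2.1 hz.1
  have hxx := hx.2.1.mul_self
  have hyy := hy.2.1.mul_self
  have hzz := hz.2.1.mul_self
  have e1 : x⁻¹ * x * x = x := by group
  have e2 : (x * y)⁻¹ * x * (x * y) = y * x * y := by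
    rw [mul_inv_rev, hx.2.1.inv, hy.2.1.inv,
      show y * x * x * (x * y) = y * (x * x) * x * y by group, hxx]; simp
  have e3 : z⁻¹ * x * z = z * x * z := by rw [hz.2.1.inv]
  have e4 : (z * y)⁻¹ * x * (z * y) = y * (z * x * z) * y := by
    rw [mul_inv_rev, hz.2.1.inv, hy.2.1.inv]; group
  have m1 : y * x * y ∈ H := mul_mem (mul_mem hy.1 hx.1) hy.1
  have m2 : z * x * z ∈ H := mul_mem (mul_mem hz.1 hx.1) hz.1
  have m3 : y * (z * x * z) * y ∈ H := mul_mem (mul_mem hy.1 m2) hy.1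
  have r1 := refl_conj cs hy.2.1 hx.2.1
  have r2 := refl_conj cs hz.2.1 hx.2.1
  have r3 := refl_conj cs hy.2.1 r2
  have n1 : n cs (x * y * z) x = 1 := by
    rw [n_mul, n_mul, e1, e2, n_self cs hx.2.1, n_chi cs hy hx.1 hx.2.1, if_neg hxy,
      n_chi cs hz m1 r1, if_neg]
    · simp
    · intro h
      have := chi_A cs hy hx (Ne.symm hxy) (h ▸ hz)
      exact hxz (this ▸ h)
  rw [h3, n_mul, n_mul, e3, e4, n_chi cs hz hx.1 hx.2.1, if_neg hxz, n_chi cs hy m2 r2, if_neg,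
    n_chi cs hx m3 r3] at n1
  · by_cases h : y * (z * x * z) * y = x
    · have h5 : x * (y * z) = (y * z) * x := by
        conv_lhs => rw [← h]
        rw [show y * (z * x * z) * y * (y * z) = y * z * x * (z * (y * y) * z) by group, hyy,
          mul_one, hzz, mul_one]
      rw [← mul_assoc, h3] at h5
      exact (mul_right_cancel h5).symm
    · rw [if_neg h] at n1
      exact absurd n1 (by decide)
  · intro h
    have := chi_A cs hz hx (Ne.symm hxz) (h ▸ hy)
    exact hxy (this ▸ h)

theorem chi_two {r t : W} (hr : cs.IsReflection r) (ht : cs.IsReflection t) (hne : r ≠ t) :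
    ∃ x y, x ≠ y ∧ chi cs (Subgroup.closure ({r, t} : Set W)) = {x, y} ∧
      Subgroup.closure ({r, t} : Set W) ≤ Subgroup.closure ({x, y} : Set W) := by
  set H := Subgroup.closure ({r, t} : Set W) with hH
  have hrH : r ∈ H := Subgroup.subset_closure (by simp)
  have htH : t ∈ H := Subgroup.subset_closure (by simp)
  have hr' := chi_gen cs _ H r rfl hrH hr
  have ht' := chi_gen cs _ H t rfl htH ht
  have one : ∀ u, cs.IsReflection u → u ≠ 1 := by
    rintro u hu rfl
    have := hu.odd_length; simp at this
  obtain ⟨x, hx⟩ : (chi cs H).Nonempty := by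
    by_contra h
    rw [Set.not_nonempty_iff_eq_empty] at h
    rw [h, Subgroup.closure_empty, Subgroup.mem_bot] at hr'
    exact one r hr hr'
  obtain ⟨y, hy, hyx⟩ : ∃ y ∈ chi cs H, y ≠ x := by
    by_contra! h
    have h1 : chi cs H = {x} := Set.eq_singleton_iff_unique_mem.2 ⟨hx, h⟩
    have key : ∀ u, cs.IsReflection u → u ∈ Subgroup.closure (chi cs H) → u = x := by
      intro u hu hm
      rw [h1, Subgroup.mem_closure_singleton] at hm
      obtain ⟨k, hk⟩ := hm
      have hxx : x ^ (2 : ℤ) = 1 := by rw [zpow_two, hx.2.1.mul_self]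
      rcases Int.even_or_odd' k with ⟨m, rfl | rfl⟩
      · rw [zpow_mul, hxx, one_zpow] at hk
        exact absurd hk.symm (one u hu)
      · rw [zpow_add, zpow_mul, hxx, one_zpow, one_mul, zpow_one] at hk
        exact hk.symm
    exact hne ((key r hr hr').trans (key t ht ht').symm)
  have hchi : chi cs H = {x, y} := by
    by_contra hcon
    obtain ⟨z, hz, hzx, hzy⟩ : ∃ z ∈ chi cs H, z ≠ x ∧ z ≠ y := by
      by_contra! h
      apply hcon
      ext u
      constructor
      · intro hu
        by_cases hux : u = x
        · simp [hux]
        · simp [h u hu hux]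
      · rintro (rfl | rfl)
        · exact hx
        · exact hy
    have comm : ∀ u ∈ chi cs H, ∀ v ∈ chi cs H, u * v = v * u := by
      intro u hu v hv
      by_cases huv : u = v
      · rw [huv]
      obtain ⟨w, hw, hwu, hwv⟩ : ∃ w ∈ chi cs H, w ≠ u ∧ w ≠ v := by
        by_contra! h
        have a1 := h x hx
        have a2 := h y hy
        have a3 := h z hz
        clear h hcon
        by_cases b1 : x = u
        · have b2 := a2 (fun h => hyx (h.trans b1.symm))
          have b3 := a3 (fun h => hzx (h.trans b1.symm))
          exact hzy (b3.trans b2.symm)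
        · have b1' := a1 b1
          by_cases b2 : y = u
          · have b3 := a3 (fun h => hzy (h.trans b2.symm))
            exact hzx (b3.trans b1'.symm)
          · exact hyx ((a2 b2).trans b1'.symm)
      exact tri cs hr ht hw hu hv hwu hwv huv
    have hrt : r * t = t * r := by
      have := (Subgroup.isMulCommutative_closure comm).is_comm.comm
        (⟨r, hr'⟩ : Subgroup.closure (chi cs H)) ⟨t, ht'⟩
      exact congrArg Subtype.val this
    have h2 : (r * t) ^ (2 : ℤ) = 1 := by
      rw [zpow_two]
      nth_rw 2 [hrt]
      rw [show r * t * (t * r) = r * (t * t) * r by group, ht.mul_self, mul_one, hr.mul_self]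
    have key : ∀ u ∈ chi cs H, u = r ∨ u = t := by
      intro u hu
      obtain ⟨k, rfl⟩ := refl_form cs hr ht hu.2.1 hu.1
      rcases Int.even_or_odd' k with ⟨m, rfl | rfl⟩
      · left; rw [zpow_mul, h2, one_zpow, one_mul]
      · right
        rw [zpow_add, zpow_mul, h2, one_zpow, one_mul, zpow_one, hrt, mul_assoc, hr.mul_self, mul_one]
    have a1 := key x hx
    have a2 := key y hy
    have a3 := key z hz
    grind
  refine ⟨x, y, hyx.symm, hchi, ?_⟩
  rw [← hchi, hH, Subgroup.closure_le]
  rintro u (rfl | rfl)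
  · exact hr'
  · exact ht'

end CoxAux

namespace CoxAux

variable {B : Type*} {W : Type*} [Group W] {M : CoxeterMatrix B} (cs : CoxeterSystem M W)

theorem U_chi {H : Subgroup W} {x y : W} (hx : x ∈ chi cs H) (hy : y ∈ chi cs H) (i : ℕ) :
    U x y i ∈ H ∧ cs.IsReflection (U x y i) := by
  induction i generalizing x y with
  | zero => simpa [U] using ⟨hx.1, hx.2.1⟩
  | succ i ih =>
    have h := ih hy hx
    rw [U_succ]
    exact ⟨mul_mem (mul_mem hx.1 h.1) hx.1, refl_conj cs hx.2.1 h.2⟩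

open Classical in
theorem n_A {H : Subgroup W} (l : ℕ) : ∀ {x y : W}, x ∈ chi cs H → y ∈ chi cs H → ∀ {v : W},
    v ∈ H → cs.IsReflection v →
    n cs (A x y l) v = ∑ i ∈ Finset.range l, if v = U x y i then 1 else 0 := by
  induction l with
  | zero => intros; simp [A, n_one]
  | succ l ih =>
    intro x y hx hy v hv hv'
    have hxx := hx.2.1.mul_self
    rw [A, n_mul, n_chi cs hx hv hv', Finset.sum_range_succ', add_comm, hx.2.1.inv,
      ih hy hx (mul_mem (mul_mem hx.1 hv) hx.1) (refl_conj cs hx.2.1 hv')]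
    congr 1
    · refine Finset.sum_congr rfl fun i _ => ?_
      have e : x * v * x = U y x i ↔ v = U x y (i + 1) := by
        rw [U_succ]
        constructor
        · intro h
          rw [← h, show x * (x * v * x) * x = (x * x) * v * (x * x) by group, hxx]; simp
        · intro h
          rw [h, show x * (x * U y x i * x) * x = (x * x) * U y x i * (x * x) by group, hxx]; simp
      simp only [e]
    · simp [U]

theorem exists_rep (H : Subgroup W) (p : W) :
    ∃ w ∈ H, ∀ u ∈ H, cs.IsReflection u → n cs p u = n cs w u := by
  classical
  have hex : ∃ k, ∃ w ∈ H, cs.length (w * p) = k := ⟨_, 1, H.one_mem, rfl⟩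
  obtain ⟨w, hw, hk⟩ := Nat.find_spec hex
  refine ⟨w⁻¹, inv_mem hw, fun u hu hu' => ?_⟩
  have e : p = w⁻¹ * (w * p) := by group
  have hr : cs.IsReflection (w * u * w⁻¹) := hu'.conj w
  have hm : w * u * w⁻¹ ∈ H := mul_mem (mul_mem hw hu) (inv_mem hw)
  conv_lhs => rw [e, n_mul]
  rw [inv_inv, (n_eq_zero_iff cs hr).2, add_zero]
  intro h
  have h2 := h.2
  rw [hk, ← mul_assoc] at h2
  exact Nat.find_min hex h2 ⟨_, mul_mem hm hw, rfl⟩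

theorem core {H : Subgroup W} {x y r p : W} {l : ℕ} (hx : x ∈ chi cs H) (hy : y ∈ chi cs H)
    (hrH : r ∈ H) (hr : cs.IsReflection r)
    (hp : ∀ u ∈ H, cs.IsReflection u → n cs p u = n cs (A x y l) u)
    (hmin : ∀ l' < l, ¬ (A x y l = A x y l' ∨ A x y l = A y x l'))
    (f1 : cs.IsLeftInversion p r) (f2 : ∀ u, cs.IsLeftInversion p u → cs.IsLeftInversion r u)
    (f3 : ∀ u, cs.IsLeftInversion p u → u ≠ r → ¬ cs.IsLeftInversion p (r * u * r))
    (D : Set W) (hD : D = {u : W | u ∈ H ∧ cs.IsReflection u ∧ cs.IsLeftInversion p u})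
    (hbig : D.Nontrivial) :
    2 ≤ l ∧ (∀ u, u ∈ D ↔ ∃ i < l, u = U x y i) ∧
      ∀ i j, i < j → j < l → cs.length (U x y i) < cs.length (U x y j) := by
  classical
  have hxx := hx.2.1.mul_self
  have hyy := hy.2.1.mul_self
  -- general: injectivity gives value of the cocycle
  have val : ∀ m, (∀ d, 0 < d → d < m → (x * y) ^ d ≠ 1) → ∀ i < m,
      n cs (A x y m) (U x y i) = 1 := by
    intro m hm i hi
    have hU := U_chi cs hx hy i
    rw [n_A cs m hx hy hU.1 hU.2, Finset.sum_eq_single i]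
    · simp
    · intro j hj hji
      rw [if_neg]
      intro h
      rw [Finset.mem_range] at hj
      rcases lt_or_gt_of_ne hji with h' | h'
      · obtain ⟨d, rfl⟩ := Nat.exists_eq_add_of_lt h'
        exact hm (d + 1) (by omega) (by omega) (U_eq x y h.symm)
      · obtain ⟨d, rfl⟩ := Nat.exists_eq_add_of_lt h'
        exact hm (d + 1) (by omega) (by omega) (U_eq x y h)
    · intro h; exact absurd (Finset.mem_range.2 hi) h
  have o1 : ∀ d, 0 < d → d < l → (x * y) ^ d ≠ 1 := by
    intro d h0 hd h
    obtain ⟨l', hl', h'⟩ := A_reduce hxx hyy d l h h0 hd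
    exact hmin l' hl' h'
  have memD : ∀ u, u ∈ D ↔ ∃ i < l, u = U x y i := by
    intro u
    rw [hD]
    constructor
    · rintro ⟨h1, h2, h3⟩
      rw [← n_eq_one_iff cs h2, hp u h1 h2, n_A cs l hx hy h1 h2] at h3
      by_contra! hc
      rw [Finset.sum_eq_zero] at h3
      · exact absurd h3 (by decide)
      · intro i hi
        rw [if_neg (hc i (Finset.mem_range.1 hi))]
    · rintro ⟨i, hi, rfl⟩
      have hU := U_chi cs hx hy i
      refine ⟨hU.1, hU.2, ?_⟩
      rw [← n_eq_one_iff cs hU.2, hp _ hU.1 hU.2]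
      exact val l o1 i hi
  have hl : 2 ≤ l := by
    by_contra h
    obtain ⟨u, hu, v, hv, huv⟩ := hbig
    obtain ⟨i, hi, rfl⟩ := (memD u).1 hu
    obtain ⟨j, hj, rfl⟩ := (memD v).1 hv
    apply huv
    rw [show i = j by omega]
  have g3 : ∀ u ∈ D, u ≠ r → r * u * r ∉ D := by
    intro u hu hur h
    rw [hD] at hu h
    exact f3 u hu.2.2 hur h.2.2
  have inj : ∀ i j, i < j → j < l → U x y i ≠ U x y j := by
    intro i j hij hj h
    obtain ⟨d, rfl⟩ := Nat.exists_eq_add_of_lt hij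
    exact o1 (d + 1) (by omega) (by omega) (U_eq x y h)
  obtain ⟨j, hj, hrj⟩ := (memD r).1 (by rw [hD]; exact ⟨hrH, hr, f1⟩)
  have hj0 : j ≠ 0 := by
    rintro rfl
    have hrx : r = x := by rw [hrj]; simp [U]
    have h1 : U x y 1 ∈ D := (memD _).2 ⟨1, hl, rfl⟩
    rw [hD] at h1
    have h2 := f2 _ h1.2.2
    rw [hrx] at h2
    have h3 := hx.2.2 _ h1.1 h2
    exact inj 0 1 (by omega) hl (by rw [h3]; simp [U])
  have hjl : j + 1 = l := by
    by_contra hc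
    refine g3 (U x y (j + 1)) ((memD _).2 ⟨j + 1, by omega, rfl⟩) ?_ ?_
    · rw [hrj]; exact (inj j (j + 1) (by omega) (by omega)).symm
    · rw [hrj, U_conj hxx hyy (j + 1) j (j - 1) (by omega)]
      exact (memD _).2 ⟨j - 1, by omega, rfl⟩
  have o2 : ∀ d, 0 < d → d < 2 * l - 1 → (x * y) ^ d ≠ 1 := by
    intro d h0 hd h
    by_cases hdl : d < l
    · exact o1 d h0 hdl h
    refine g3 (U x y 0) ((memD _).2 ⟨0, by omega, rfl⟩) ?_ ?_
    · rw [hrj]; exact inj 0 j (by omega) (by omega)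
    · rw [hrj, U_conj hxx hyy 0 j (2 * j) (by omega)]
      refine (memD _).2 ⟨2 * j - d, by omega, ?_⟩
      unfold U
      conv_lhs => rw [show 2 * j = d + (2 * j - d) by omega, pow_add, h, one_mul]
  have step : ∀ k, k + 1 < 2 * l → cs.length (A x y k) < cs.length (A x y (k + 1)) := by
    intro k hk
    have hU := U_chi cs hx hy k
    have h1 := val (k + 1) (fun d h0 hd => o2 d h0 (by omega)) k (by omega)
    rw [n_eq_one_iff cs hU.2] at h1
    have h2 := h1.2
    have e : U x y k * A x y (k + 1) = A x y k := by
      rw [A_succ hxx hyy, ← mul_assoc, hU.2.mul_self, one_mul]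
    rwa [e] at h2
  have mono : ∀ b a, a < b → b < 2 * l → cs.length (A x y a) < cs.length (A x y b) := by
    intro b
    induction b with
    | zero => intro a h; omega
    | succ b ih =>
      intro a hab hb
      have hs := step b hb
      rcases Nat.lt_succ_iff_lt_or_eq.1 hab with h | rfl
      · exact (ih a h (by omega)).trans hs
      · exact hs
  refine ⟨hl, memD, fun i k hik hk => ?_⟩
  rw [U_eq_A, U_eq_A]
  exact mono _ _ (by omega) (by omega)

theorem final {r t p : W} (hr : cs.IsReflection r) (ht : cs.IsReflection t) (hne : r ≠ t)
    (hpr1 : cs.length p + cs.length (p⁻¹ * r) = cs.length r)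
    (hpr2 : 2 * cs.length p = cs.length r + 1)
    (D : Set W)
    (hD : D = {u : W | u ∈ Subgroup.closure ({r, t} : Set W) ∧
      cs.IsReflection u ∧ cs.IsLeftInversion p u})
    (hbig : D.Nontrivial) :
    ∃ x y l, cs.IsReflection x ∧ chi cs (Subgroup.closure ({r, t} : Set W)) = {x, y} ∧
      2 ≤ l ∧ (∀ u, u ∈ D ↔ ∃ i < l, u = U x y i) ∧
      ∀ i j, i < j → j < l → cs.length (U x y i) < cs.length (U x y j) := by
  classical
  obtain ⟨f1, f2, f3⟩ := prefix_facts cs hr hpr1 hpr2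
  obtain ⟨x, y, hxy, hchi, hle⟩ := chi_two cs hr ht hne
  set H := Subgroup.closure ({r, t} : Set W) with hH
  have hrH : r ∈ H := Subgroup.subset_closure (by simp)
  have hx : x ∈ chi cs H := by rw [hchi]; simp
  have hy : y ∈ chi cs H := by rw [hchi]; simp
  obtain ⟨w, hw, hwp⟩ := exists_rep cs H p
  have hex := A_exists hx.2.1.mul_self hy.2.1.mul_self (hle hw)
  have hmin := @Nat.find_min _ _ hex
  rcases Nat.find_spec hex with h | h
  · generalize Nat.find hex = l at h hmin
    subst h
    exact ⟨x, y, l, hx.2.1, hchi, core cs hx hy hrH hr hwp (fun l' hl' => hmin hl')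
      f1 f2 f3 D hD hbig⟩
  · generalize Nat.find hex = l at h hmin
    subst h
    exact ⟨y, x, l, hy.2.1, by rw [hchi, Set.pair_comm], core cs hy hx hrH hr hwp
      (fun l' hl' h' => hmin hl' h'.symm) f1 f2 f3 D hD hbig⟩

end CoxAux

/-- Algorithm computing the canonical generators of a dihedral
reflection subgroup from the left inversions of a reflection-prefix. -/
theorem stmt_7 {B : Type*} {W : Type*} [Group W] {M : CoxeterMatrix B}
    (cs : CoxeterSystem M W) (r t : W)
    (hr : cs.IsReflection r) (ht : cs.IsReflection t) (hne : r ≠ t)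
    (p_r : W)
    (hpr1 : cs.length p_r + cs.length (p_r⁻¹ * r) = cs.length r)
    (hpr2 : 2 * cs.length p_r = cs.length r + 1)
    (D : Set W)
    (hD : D = {u : W | u ∈ Subgroup.closure ({r, t} : Set W) ∧
      cs.IsReflection u ∧ cs.IsLeftInversion p_r u})
    (hDbig : D.Nontrivial) :
    (∃! a : W, a ∈ D ∧ ∀ u ∈ D, u ≠ a → cs.length a < cs.length u) ∧
    (∀ a : W, (a ∈ D ∧ ∀ u ∈ D, u ≠ a → cs.length a < cs.length u) →
      (∃! c : W, c ∈ D ∧ c ≠ a ∧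
        ∀ u ∈ D, u ≠ a → u ≠ c → cs.length c < cs.length u) ∧
      (∀ c : W, (c ∈ D ∧ c ≠ a ∧
          ∀ u ∈ D, u ≠ a → u ≠ c → cs.length c < cs.length u) →
        {u : W | u ∈ Subgroup.closure ({r, t} : Set W) ∧ cs.IsReflection u ∧
            ∀ v : W, v ∈ Subgroup.closure ({r, t} : Set W) →
              cs.IsLeftInversion u v → v = u} = {a, a * c * a})) := by
  obtain ⟨x, y, l, hx, hchi, hl, hmem, hlt⟩ :=
    CoxAux.final cs hr ht hne hpr1 hpr2 D hD hDbig
  have d0 : CoxAux.U x y 0 ∈ D := (hmem _).2 ⟨0, by omega, rfl⟩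
  have d1 : CoxAux.U x y 1 ∈ D := (hmem _).2 ⟨1, by omega, rfl⟩
  have h01 : CoxAux.U x y 1 ≠ CoxAux.U x y 0 := by
    intro h
    have := hlt 0 1 (by omega) (by omega)
    rw [h] at this
    exact lt_irrefl _ this
  have m0 : ∀ u ∈ D, u ≠ CoxAux.U x y 0 → cs.length (CoxAux.U x y 0) < cs.length u := by
    intro u hu hne'
    obtain ⟨i, hi, rfl⟩ := (hmem u).1 hu
    have : i ≠ 0 := by rintro rfl; exact hne' rfl
    exact hlt 0 i (by omega) hi
  have m1 : ∀ u ∈ D, u ≠ CoxAux.U x y 0 → u ≠ CoxAux.U x y 1 →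
      cs.length (CoxAux.U x y 1) < cs.length u := by
    intro u hu hne' hne''
    obtain ⟨i, hi, rfl⟩ := (hmem u).1 hu
    have : i ≠ 0 := by rintro rfl; exact hne' rfl
    have : i ≠ 1 := by rintro rfl; exact hne'' rfl
    exact hlt 1 i (by omega) hi
  have ua : ∀ a : W, (a ∈ D ∧ ∀ u ∈ D, u ≠ a → cs.length a < cs.length u) →
      a = CoxAux.U x y 0 := by
    rintro a ⟨ha, ha'⟩
    by_contra hc
    exact lt_asymm (ha' _ d0 (Ne.symm hc)) (m0 a ha hc)
  refine ⟨⟨CoxAux.U x y 0, ⟨d0, m0⟩, ua⟩, fun a ha => ?_⟩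
  obtain rfl := ua a ha
  have uc : ∀ c : W, (c ∈ D ∧ c ≠ CoxAux.U x y 0 ∧
      ∀ u ∈ D, u ≠ CoxAux.U x y 0 → u ≠ c → cs.length c < cs.length u) →
      c = CoxAux.U x y 1 := by
    rintro c ⟨hc1, hc2, hc3⟩
    by_contra hc
    exact lt_asymm (hc3 _ d1 h01 (Ne.symm hc)) (m1 c hc1 hc2 hc)
  refine ⟨⟨CoxAux.U x y 1, ⟨d1, h01, m1⟩, uc⟩, fun c hc => ?_⟩
  obtain rfl := uc c hc
  have e0 : CoxAux.U x y 0 = x := by simp [CoxAux.U]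
  have e1 : CoxAux.U x y 0 * CoxAux.U x y 1 * CoxAux.U x y 0 = y := by
    rw [e0, CoxAux.U, pow_one, show x * (x * y * x) * x = (x * x) * y * (x * x) by group,
      hx.mul_self, one_mul, mul_one]
  rw [e1, e0]
  exact hchi
end

section
/- Assume the index type B is finite. Then the language Pref_T := {ω : List B | ω ≠ [] and ω ++ ω.dropLast.reverse is reduced} of reduced words for reflection-prefixes is a regular language over the alphabet B, i.e., Language.IsRegular Pref_T: there is a deterministic finite automaton (a DFA with a finite state type) whose accepted language is exactly Pref_T. -/
namespace CoxReg

set_option linter.unusedSectionVars false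
set_option linter.unusedSimpArgs false
set_option linter.unusedVariables false

open Real

section Rep

variable {B : Type} [Fintype B] [DecidableEq B]

/-- Gram matrix entries. -/
noncomputable def kk (M : CoxeterMatrix B) (i j : B) : ℝ := -Real.cos (π / (M i j : ℝ))

/-- The Tits form. -/
noncomputable def bf (M : CoxeterMatrix B) : LinearMap.BilinForm ℝ (B → ℝ) :=
  Matrix.toBilin' (Matrix.of (kk M))

/-- simple roots -/
noncomputable def ee (i : B) : B → ℝ := Pi.single i 1

theorem ee_self (i : B) : (ee i : B → ℝ) i = 1 := by simp [ee]

theorem ee_ne {i j : B} (h : j ≠ i) : (ee i : B → ℝ) j = 0 := by simp [ee, h]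

theorem kk_self (M : CoxeterMatrix B) (i : B) : kk M i i = 1 := by
  simp [kk]

theorem kk_symm (M : CoxeterMatrix B) (i j : B) : kk M i j = kk M j i := by
  simp [kk, M.symmetric i j]

theorem kk_nonpos (M : CoxeterMatrix B) {i j : B} (h : i ≠ j) : kk M i j ≤ 0 := by
  have h1 : M i j ≠ 1 := M.off_diagonal i j h
  unfold kk
  rw [neg_nonpos]
  rcases Nat.eq_zero_or_pos (M i j) with h0 | h0
  · simp [h0]
  · have h2 : (2 : ℝ) ≤ M i j := by exact_mod_cast (by omega : 2 ≤ M i j)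
    apply Real.cos_nonneg_of_neg_pi_div_two_le_of_le
    · have : 0 ≤ π / (M i j : ℝ) := by positivity
      linarith [Real.pi_pos]
    · apply div_le_div_of_nonneg_left Real.pi_pos.le (by norm_num) h2

theorem bf_ee (M : CoxeterMatrix B) (i j : B) : bf M (ee i) (ee j) = kk M i j := by
  simp [bf, ee]

theorem bf_ee_self (M : CoxeterMatrix B) (i : B) : bf M (ee i) (ee i) = 1 := by
  rw [bf_ee, kk_self]

theorem sum_ee (v : B → ℝ) : v = ∑ i, v i • ee i := by
  ext j
  simp [ee, Finset.sum_apply, Pi.single_apply]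

theorem bf_symm (M : CoxeterMatrix B) (u v : B → ℝ) : bf M u v = bf M v u := by
  simp only [bf, Matrix.toBilin'_apply, Matrix.of_apply]
  rw [Finset.sum_comm]
  refine Finset.sum_congr rfl fun i _ => Finset.sum_congr rfl fun j _ => ?_
  rw [kk_symm]; ring

/-- expand second argument -/
theorem bf_sum_right (M : CoxeterMatrix B) (u v : B → ℝ) :
    bf M u v = ∑ i, v i * bf M u (ee i) := by
  conv_lhs => rw [sum_ee v]
  simp

/-- reflection in a vector -/
noncomputable def rf (M : CoxeterMatrix B) (b : B → ℝ) : Module.End ℝ (B → ℝ) :=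
  LinearMap.id - (2 : ℝ) • ((bf M b).smulRight b)

theorem rf_apply (M : CoxeterMatrix B) (b v : B → ℝ) :
    rf M b v = v - (2 * bf M v b) • b := by
  simp [rf, bf_symm M b v, smul_smul]

theorem rf_rf (M : CoxeterMatrix B) (b v : B → ℝ) (h : bf M b b = 1) :
    rf M b (rf M b v) = v := by
  simp only [rf_apply, map_sub, map_smul, LinearMap.sub_apply, LinearMap.smul_apply, h, smul_eq_mul]
  module

theorem bf_rf (M : CoxeterMatrix B) (b u v : B → ℝ) (h : bf M b b = 1) :
    bf M (rf M b u) (rf M b v) = bf M u v := by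
  simp only [rf_apply, map_sub, map_smul, LinearMap.sub_apply, LinearMap.smul_apply, h, smul_eq_mul]
  rw [bf_symm M b v]
  ring

theorem rf_mul_pow (M : CoxeterMatrix B) (i j : B) :
    (rf M (ee i) * rf M (ee j)) ^ M i j = 1 := by
  by_cases hij : i = j
  · subst hij
    simp only [M.diagonal, pow_one]
    ext1 v
    ext1
    simp [rf_rf M _ _ (bf_ee_self M i)]
  rcases Nat.eq_zero_or_pos (M i j) with h0 | h0
  · simp [h0]
  have h1 : M i j ≠ 1 := M.off_diagonal i j hij
  have h2 : (2 : ℝ) ≤ M i j := by exact_mod_cast (by omega : 2 ≤ M i j)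
  set m := M i j with hm
  set θ := π / (m : ℝ) with hθ
  have hmθ : (m : ℝ) * θ = π := by rw [hθ]; field_simp
  have hθ0 : 0 < θ := by positivity
  have hθ1 : θ < π := by nlinarith
  have hs : 0 < sin θ := Real.sin_pos_of_pos_of_lt_pi hθ0 hθ1
  set a : B → ℝ := ee i with ha
  set b : B → ℝ := ee j with hb
  have haa : bf M a a = 1 := bf_ee_self M i
  have hbb : bf M b b = 1 := bf_ee_self M j
  have hab : bf M a b = -cos θ := by rw [ha, hb, bf_ee, kk]
  have hba : bf M b a = -cos θ := by rw [bf_symm, hab]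
  set R := rf M a * rf M b with hR
  have hRv : ∀ v, R v = v - (2 * bf M v b) • b - (2 * (bf M v a + 2 * cos θ * bf M v b)) • a := by
    intro v
    rw [hR, Module.End.mul_apply, rf_apply M a, rf_apply M b]
    simp only [map_sub, map_smul, LinearMap.sub_apply, LinearMap.smul_apply, hba, smul_eq_mul]
    module
  have hRa : R a = (4 * cos θ ^ 2 - 1) • a + (2 * cos θ) • b := by
    rw [hRv, haa, hab]; module
  have hRb : R b = - b - (2 * cos θ) • a := by
    rw [hRv, hbb, hba]; module
  clear_value R
  have hsc := Real.sin_sq_add_cos_sq θ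
  have key : ∀ n : ℕ, sin θ • (R ^ n) a = sin (2 * (n * θ) + θ) • a + sin (2 * (n * θ)) • b ∧
      sin θ • (R ^ n) b = - sin (2 * (n * θ)) • a - sin (2 * (n * θ) - θ) • b := by
    intro n
    induction n with
    | zero => simp
    | succ n ih =>
      obtain ⟨ih1, ih2⟩ := ih
      rw [pow_succ', Module.End.mul_apply, Module.End.mul_apply, ← map_smul R, ← map_smul R, ih1, ih2]
      simp only [map_add, map_sub, map_smul, hRa, hRb]
      have e1 : 2 * (((n + 1 : ℕ) : ℝ) * θ) = 2 * (n * θ) + 2 * θ := by push_cast; ring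
      rw [e1]
      set A := 2 * (n * θ)
      have e2 : sin (A + 2 * θ + θ) = sin (A + θ) * (4 * cos θ ^ 2 - 1) - sin A * (2 * cos θ) := by
        simp only [Real.sin_add, Real.sin_two_mul, Real.cos_two_mul, Real.cos_add]
        linear_combination (-2 * sin A * cos θ) * hsc
      have e3 : sin (A + 2 * θ) = sin (A + θ) * (2 * cos θ) - sin A := by
        simp only [Real.sin_add, Real.sin_two_mul, Real.cos_two_mul]
        ring
      have e4 : sin (A + 2 * θ - θ) = sin A * (2 * cos θ) - sin (A - θ) := by
        rw [show A + 2 * θ - θ = A + θ by ring, Real.sin_add, Real.sin_sub]; ring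
      have e5 : sin (A + θ) = sin A * (2 * cos θ) - sin (A - θ) := by
        rw [Real.sin_add, Real.sin_sub]; ring
      rw [e2, e3, e4]
      constructor
      · module
      · rw [e5]; module
  have hRm : (R ^ m) a = a ∧ (R ^ m) b = b := by
    obtain ⟨k1, k2⟩ := key m
    rw [hmθ] at k1 k2
    rw [show 2 * π + θ = θ + 2 * π by ring, Real.sin_add_two_pi, Real.sin_two_pi] at k1
    rw [show 2 * π - θ = -θ + 2 * π by ring, Real.sin_add_two_pi, Real.sin_two_pi, Real.sin_neg] at k2
    constructor
    · apply smul_right_injective _ hs.ne'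
      simpa using k1
    · apply smul_right_injective _ hs.ne'
      simpa using k2
  have hfix : ∀ z, bf M z a = 0 → bf M z b = 0 → ∀ n : ℕ, (R ^ n) z = z := by
    intro z hza hzb n
    induction n with
    | zero => simp
    | succ n ih =>
      rw [pow_succ', Module.End.mul_apply, ih, hRv, hza, hzb]; module
  refine LinearMap.ext fun z => ?_
  rw [Module.End.one_apply]
  set x := (bf M z a + cos θ * bf M z b) / sin θ ^ 2 with hx
  set y := (bf M z b + cos θ * bf M z a) / sin θ ^ 2 with hy
  have hc2 : cos θ ^ 2 = 1 - sin θ ^ 2 := by linarith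
  have hz := hfix (z - x • a - y • b) (by
    simp only [map_sub, map_smul, LinearMap.sub_apply, LinearMap.smul_apply, haa, hba, smul_eq_mul]
    rw [hx, hy]; field_simp; ring_nf; rw [hc2]; ring) (by
    simp only [map_sub, map_smul, LinearMap.sub_apply, LinearMap.smul_apply, hab, hbb, smul_eq_mul]
    rw [hx, hy]; field_simp; ring_nf; rw [hc2]; ring) m
  simp only [map_sub, map_smul, hRm.1, hRm.2] at hz
  have : (R ^ m) z = ((R ^ m) z - x • a - y • b) + x • a + y • b := by module
  rw [this, hz]; module

end Rep

end CoxReg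

namespace CoxReg

set_option linter.unusedSectionVars false
set_option linter.unusedSimpArgs false
set_option linter.unusedVariables false

open Real

section Sign

variable {B : Type} [Fintype B] [DecidableEq B] {W : Type*} [Group W] {M : CoxeterMatrix B}
  (cs : CoxeterSystem M W)

/-- The geometric representation. -/
noncomputable def rho : W →* Module.End ℝ (B → ℝ) :=
  cs.lift ⟨fun i => rf M (ee i), fun i j => rf_mul_pow M i j⟩

theorem rho_simple (i : B) : rho cs (cs.simple i) = rf M (ee i) :=
  cs.lift_apply_simple (fun i j => rf_mul_pow M i j) i

theorem rho_mul (w w' : W) (v : B → ℝ) : rho cs (w * w') v = rho cs w (rho cs w' v) := by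
  rw [map_mul, Module.End.mul_apply]

theorem rho_inv_rho (w : W) (v : B → ℝ) : rho cs w⁻¹ (rho cs w v) = v := by
  rw [← rho_mul]; simp

theorem rho_rho_inv (w : W) (v : B → ℝ) : rho cs w (rho cs w⁻¹ v) = v := by
  rw [← rho_mul]; simp

theorem bf_rho (w : W) (u v : B → ℝ) : bf M (rho cs w u) (rho cs w v) = bf M u v := by
  induction w using cs.simple_induction_left with
  | one => simp
  | mul_simple_left w i ih =>
    rw [rho_mul, rho_mul, rho_simple, bf_rf _ _ _ _ (bf_ee_self M i), ih]

/-- positive vectors -/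
def Pos (v : B → ℝ) : Prop := (∀ i, 0 ≤ v i) ∧ v ≠ 0

theorem exists_dihedral (s t : B) (hst : s ≠ t) : ∃ U : ℕ → ℝ, U 0 = 0 ∧ U 1 = 1 ∧
    (∀ k, U (k + 2) = - 2 * kk M s t * U (k + 1) - U k) ∧
    (∀ k, (M s t = 0 ∨ k ≤ M s t) → 0 ≤ U k) := by
  rcases Nat.eq_zero_or_pos (M s t) with h0 | h0
  · refine ⟨fun k => k, by simp, by simp, ?_, fun k _ => by positivity⟩
    intro k
    simp [kk, h0]; ring
  · have h1 : M s t ≠ 1 := M.off_diagonal s t hst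
    have h2 : (2 : ℝ) ≤ M s t := by exact_mod_cast (by omega : 2 ≤ M s t)
    set θ := π / (M s t : ℝ) with hθ
    have hmθ : (M s t : ℝ) * θ = π := by rw [hθ]; field_simp
    have hθ0 : 0 < θ := by positivity
    have hθ1 : θ < π := by nlinarith
    have hs : 0 < sin θ := Real.sin_pos_of_pos_of_lt_pi hθ0 hθ1
    refine ⟨fun k => sin (k * θ) / sin θ, by simp, by simp [hs.ne'], ?_, ?_⟩
    · intro k
      have e1 : ((k + 2 : ℕ) : ℝ) * θ = k * θ + 2 * θ := by push_cast; ring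
      have e2 : ((k + 1 : ℕ) : ℝ) * θ = k * θ + θ := by push_cast; ring
      simp only [e1, e2, kk, ← hθ]
      rw [Real.sin_add, Real.sin_add, Real.sin_two_mul, Real.cos_two_mul]
      field_simp
      ring
    · intro k hk
      have hk : k ≤ M s t := by omega
      apply div_nonneg _ hs.le
      apply Real.sin_nonneg_of_nonneg_of_le_pi (by positivity)
      rw [← hmθ]
      have : (k : ℝ) ≤ M s t := by exact_mod_cast hk
      gcongr

theorem rho_alternating (s t : B) (hst : s ≠ t) (k : ℕ) (hk : M s t = 0 ∨ k + 1 ≤ M s t) :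
    ∃ a b : ℝ, 0 ≤ a ∧ 0 ≤ b ∧
      rho cs (cs.wordProd (CoxeterSystem.alternatingWord s t k)) (ee s) = a • ee s + b • ee t := by
  obtain ⟨U, U0, U1, Urec, Upos⟩ := exists_dihedral (M := M) s t hst
  have key : ∀ k, rho cs (cs.wordProd (CoxeterSystem.alternatingWord s t k)) (ee s) =
      if Even k then U (k + 1) • ee s + U k • ee t else U k • ee s + U (k + 1) • ee t := by
    intro k
    induction k with
    | zero => simp [U0, U1, CoxeterSystem.alternatingWord]
    | succ k ih =>
      rw [CoxeterSystem.alternatingWord_succ', cs.wordProd_cons, rho_mul, ih, rho_simple]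
      by_cases he : Even k
      · have he' : ¬ Even (k + 1) := by rw [Nat.even_add_one]; simpa using he
        rw [if_pos he, if_pos he, if_neg he', rf_apply]
        simp only [map_add, map_smul, LinearMap.add_apply, LinearMap.smul_apply, bf_ee,
          kk_self, smul_eq_mul, Urec]
        module
      · have he' : Even (k + 1) := by rw [Nat.even_add_one]; exact he
        rw [if_neg he, if_neg he, if_pos he', rf_apply]
        simp only [map_add, map_smul, LinearMap.add_apply, LinearMap.smul_apply, bf_ee,
          kk_self, smul_eq_mul, Urec, kk_symm M t s]
        module
  have p1 := Upos k (by omega)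
  have p2 := Upos (k + 1) (by omega)
  rw [key]
  split_ifs
  · exact ⟨_, _, p2, p1, rfl⟩
  · exact ⟨_, _, p1, p2, rfl⟩

theorem rho_ee_ne_zero (w : W) (s : B) : rho cs w (ee s) ≠ 0 := by
  intro h
  have := bf_rho cs w (ee s) (ee s)
  rw [h, bf_ee_self] at this
  simp at this

theorem pos_of_length_lt (n : ℕ) : ∀ (w : W) (s : B), cs.length w = n →
    cs.length w < cs.length (w * cs.simple s) → Pos (rho cs w (ee s)) := by
  induction n using Nat.strong_induction_on with
  | _ n ih =>
  intro w s hn hws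
  refine ⟨?_, rho_ee_ne_zero cs w s⟩
  by_cases hw : w = 1
  · subst hw
    intro i
    simp only [map_one, Module.End.one_apply, ee, Pi.single_apply]
    split_ifs <;> norm_num
  obtain ⟨t, ht⟩ := cs.exists_rightDescent_of_ne_one hw
  have ht' := (cs.isRightDescent_iff).1 ht
  have hst : s ≠ t := by
    rintro rfl
    unfold CoxeterSystem.IsRightDescent at ht
    omega
  classical
  let P : ℕ → Prop := fun k => ∃ v, w = v * cs.wordProd (CoxeterSystem.alternatingWord s t k) ∧
    cs.length v + k = cs.length w
  have P1 : P 1 := ⟨w * cs.simple t, by simp [CoxeterSystem.alternatingWord], ht'⟩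
  have hle : 1 ≤ cs.length w := by omega
  obtain ⟨k, hk1, hPk, hmax⟩ : ∃ k, 1 ≤ k ∧ P k ∧ ¬ P (k + 1) := by
    refine ⟨Nat.findGreatest P (cs.length w), Nat.le_findGreatest hle P1,
      Nat.findGreatest_spec hle P1, ?_⟩
    intro hP
    obtain ⟨v, hv1, hv2⟩ := id hP
    have := Nat.le_findGreatest (by omega : Nat.findGreatest P (cs.length w) + 1 ≤ cs.length w) hP
    omega
  obtain ⟨v, hv1, hv2⟩ := hPk
  have hx : cs.length v < cs.length (v * cs.simple (if Even k then t else s)) := by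
    rcases cs.length_mul_simple v (if Even k then t else s) with h | h
    · omega
    · exfalso
      apply hmax
      refine ⟨v * cs.simple (if Even k then t else s), ?_, by omega⟩
      rw [CoxeterSystem.alternatingWord_succ', cs.wordProd_cons, ← mul_assoc,
        cs.simple_mul_simple_cancel_right, hv1]
  have hy : cs.length v < cs.length (v * cs.simple (if Even k then s else t)) := by
    rcases cs.length_mul_simple v (if Even k then s else t) with h | h
    · omega
    · exfalso
      obtain ⟨j, rfl⟩ : ∃ j, k = j + 1 := ⟨k - 1, by omega⟩
      have hl : (if Even (j + 1) then s else t) = (if Even j then t else s) := by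
        by_cases h : Even j <;> simp [Nat.even_add_one, h]
      rw [hl] at h
      rw [CoxeterSystem.alternatingWord_succ', cs.wordProd_cons, ← mul_assoc] at hv1
      have h1 := cs.length_mul_le (v * cs.simple (if Even j then t else s))
        (cs.wordProd (CoxeterSystem.alternatingWord s t j))
      have h2 := cs.length_wordProd_le (CoxeterSystem.alternatingWord s t j)
      rw [CoxeterSystem.length_alternatingWord] at h2
      rw [← hv1] at h1
      omega
  have hvs : cs.length v < cs.length (v * cs.simple s) := by
    by_cases he : Even k
    · simpa [he] using hy
    · simpa [he] using hx
  have hvt : cs.length v < cs.length (v * cs.simple t) := by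
    by_cases he : Even k
    · simpa [he] using hx
    · simpa [he] using hy
  have hkm : M s t = 0 ∨ k + 1 ≤ M s t := by
    by_contra hcon
    push Not at hcon
    obtain ⟨hm0, hmk⟩ := hcon
    have hnr := cs.not_isReduced_alternatingWord t s (m := k + 1)
      (by rw [M.symmetric t s]; exact hm0) (by rw [M.symmetric t s]; omega)
    have h2 := cs.length_wordProd_le (CoxeterSystem.alternatingWord t s (k + 1))
    unfold CoxeterSystem.IsReduced at hnr
    have h3 : w * cs.simple s = v * cs.wordProd (CoxeterSystem.alternatingWord t s (k + 1)) := by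
      rw [CoxeterSystem.alternatingWord_succ, cs.wordProd_concat, ← mul_assoc, ← hv1]
    have h4 := cs.length_mul_le v (cs.wordProd (CoxeterSystem.alternatingWord t s (k + 1)))
    rw [CoxeterSystem.length_alternatingWord] at h2 hnr
    rw [← h3] at h4
    omega
  obtain ⟨a, b, ha, hb, hab⟩ := rho_alternating cs s t hst k hkm
  have p1 := ih _ (by omega) v s rfl hvs
  have p2 := ih _ (by omega) v t rfl hvt
  intro i
  rw [hv1, rho_mul, hab, map_add, map_smul, map_smul]
  have := p1.1 i
  have := p2.1 i
  simp only [Pi.add_apply, Pi.smul_apply, smul_eq_mul]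
  positivity

/-- roots -/
def IsRt (b : B → ℝ) : Prop := ∃ (w : W) (i : B), b = rho cs w (ee i)

theorem IsRt.simple (i : B) : IsRt cs (ee i) := ⟨1, i, by simp⟩

theorem IsRt.rho {b : B → ℝ} (h : IsRt cs b) (w : W) : IsRt cs (rho cs w b) := by
  obtain ⟨w', i, rfl⟩ := h
  exact ⟨w * w', i, by rw [rho_mul]⟩

theorem IsRt.norm {b : B → ℝ} (h : IsRt cs b) : bf M b b = 1 := by
  obtain ⟨w', i, rfl⟩ := h
  rw [bf_rho, bf_ee_self]

theorem rho_conj (w : W) (i : B) (v : B → ℝ) :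
    rho cs (w * cs.simple i * w⁻¹) v = rf M (rho cs w (ee i)) v := by
  rw [rho_mul, rho_mul, rho_simple, rf_apply, rf_apply, map_sub, map_smul, rho_rho_inv]
  congr 3
  rw [← bf_rho cs w, rho_rho_inv]

theorem IsRt.exists_refl {b : B → ℝ} (h : IsRt cs b) : ∃ t : W, ∀ v, CoxReg.rho cs t v = rf M b v := by
  obtain ⟨w', i, rfl⟩ := h
  exact ⟨_, rho_conj cs w' i⟩

theorem rf_self {b : B → ℝ} (h : bf M b b = 1) : rf M b b = -b := by
  rw [rf_apply, h]; module

theorem IsRt.neg {b : B → ℝ} (h : IsRt cs b) : IsRt cs (-b) := by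
  obtain ⟨t, ht⟩ := h.exists_refl
  rw [← rf_self h.norm, ← ht]
  exact h.rho cs t

theorem IsRt.rf {b c : B → ℝ} (h : IsRt cs b) (hc : IsRt cs c) : IsRt cs (rf M b c) := by
  obtain ⟨t, ht⟩ := h.exists_refl
  rw [← ht]
  exact hc.rho cs t

/-- sign of `w αₛ` when length goes down -/
theorem neg_of_length_lt (w : W) (s : B) (h : cs.length (w * cs.simple s) < cs.length w) :
    Pos (-(rho cs w (ee s))) := by
  have := pos_of_length_lt cs _ (w * cs.simple s) s rfl (by simpa using h)
  rwa [rho_mul, rho_simple, rf_self (bf_ee_self M s), map_neg] at this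

theorem IsRt.pos_or_neg {b : B → ℝ} (h : IsRt cs b) : Pos b ∨ Pos (-b) := by
  obtain ⟨w, i, rfl⟩ := h
  rcases lt_or_gt_of_ne (cs.length_mul_simple_ne w i) with h | h
  · exact Or.inr (neg_of_length_lt cs w i h)
  · exact Or.inl (pos_of_length_lt cs _ w i rfl h)

theorem Pos.not_neg {b : B → ℝ} (h : Pos b) : ¬ Pos (-b) := by
  intro h'
  apply h.2
  ext i
  have h1 := h.1 i
  have h2 := h'.1 i
  simp only [Pi.neg_apply] at h2
  simp; linarith

theorem length_lt_iff (w : W) (s : B) :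
    cs.length w < cs.length (w * cs.simple s) ↔ Pos (rho cs w (ee s)) := by
  constructor
  · exact pos_of_length_lt cs _ w s rfl
  · intro h
    by_contra hc
    exact h.not_neg (neg_of_length_lt cs w s
      (lt_of_le_of_ne (not_lt.1 hc) (cs.length_mul_simple_ne w s)))

theorem length_gt_iff (w : W) (s : B) :
    cs.length (w * cs.simple s) < cs.length w ↔ Pos (-(rho cs w (ee s))) := by
  constructor
  · exact neg_of_length_lt cs w s
  · intro h
    by_contra hc
    exact ((length_lt_iff cs w s).1 (lt_of_le_of_ne (not_lt.1 hc)
      (cs.length_mul_simple_ne w s).symm)).not_neg h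

/-- a root with a positive coordinate is positive -/
theorem IsRt.pos_of_coord {b : B → ℝ} (h : IsRt cs b) {i : B} (hi : 0 < b i) : Pos b := by
  rcases h.pos_or_neg with h | h
  · exact h
  · have := h.1 i
    simp only [Pi.neg_apply] at this
    linarith

theorem IsRt.neg_of_coord {b : B → ℝ} (h : IsRt cs b) {i : B} (hi : b i < 0) : Pos (-b) := by
  rcases h.pos_or_neg with h | h
  · have := h.1 i
    linarith
  · exact h

/-- a positive root different from `αₛ` has another positive coordinate -/
theorem IsRt.exists_coord {b : B → ℝ} (h : IsRt cs b) (hp : Pos b) (s : B) (hs : b ≠ ee s) :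
    ∃ r, r ≠ s ∧ 0 < b r := by
  by_contra hcon
  push Not at hcon
  have hb : b = b s • ee s := by
    ext r
    by_cases hr : r = s
    · subst hr; simp [ee_self]
    · simp [ee_ne hr, le_antisymm (hcon r hr) (hp.1 r)]
  have hn := h.norm
  rw [hb] at hn
  simp only [map_smul, LinearMap.smul_apply, bf_ee_self, smul_eq_mul, mul_one] at hn
  have h0 := hp.1 s
  have h1 : b s = 1 := by nlinarith
  rw [h1, one_smul] at hb
  exact hs hb

theorem IsRt.simple_pos {b : B → ℝ} (h : IsRt cs b) (hp : Pos b) (s : B) (hs : b ≠ ee s) :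
    Pos (CoxReg.rf M (ee s) b) := by
  obtain ⟨r, hr, hbr⟩ := h.exists_coord cs hp s hs
  apply ((IsRt.simple cs s).rf cs h).pos_of_coord cs (i := r)
  rw [rf_apply]
  simpa [ee_ne hr] using hbr

theorem ee_pos (s : B) : Pos (ee s : B → ℝ) := by
  refine ⟨fun i => ?_, fun h => ?_⟩
  · simp only [ee, Pi.single_apply]
    split_ifs <;> norm_num
  · have := congrFun h s
    simp [ee] at this

/-- finitely many inversions -/
theorem finite_inv (w : W) : {b | IsRt cs b ∧ Pos b ∧ Pos (-(rho cs w b))}.Finite := by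
  induction w using cs.simple_induction_right with
  | one =>
    convert Set.finite_empty
    ext b
    simp only [map_one, Module.End.one_apply, Set.mem_ofPred_eq, Set.mem_empty_iff_false, iff_false]
    rintro ⟨_, h1, h2⟩
    exact h1.not_neg h2
  | mul_simple_right w s ih =>
    refine ((Set.finite_singleton (ee s)).union (ih.image (rf M (ee s)))).subset ?_
    rintro b ⟨hb, hp, hn⟩
    by_cases hbs : b = ee s
    · left; exact hbs
    · right
      refine ⟨rf M (ee s) b, ⟨(IsRt.simple cs s).rf cs hb, hb.simple_pos cs hp s hbs, ?_⟩,
        rf_rf M _ _ (bf_ee_self M s)⟩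
      rwa [rho_mul, rho_simple] at hn

end Sign

end CoxReg

namespace CoxReg

set_option linter.unusedSectionVars false
set_option linter.unusedSimpArgs false
set_option linter.unusedVariables false

open Real

section Dom

variable {B : Type} [Fintype B] [DecidableEq B] {W : Type*} [Group W] {M : CoxeterMatrix B}
  (cs : CoxeterSystem M W)

/-- two-term recurrence -/
noncomputable def sq (q : ℝ) (c b : B → ℝ) : ℕ → (B → ℝ)
  | 0 => c
  | 1 => b
  | n + 2 => (2 * q) • sq q c b (n + 1) - sq q c b n

theorem sq_add_two (q : ℝ) (c b : B → ℝ) (n : ℕ) :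
    sq q c b (n + 2) = (2 * q) • sq q c b (n + 1) - sq q c b n := by
  rw [sq]

theorem sq_root {c b : B → ℝ} (hc : IsRt cs c) (hb : IsRt cs b) (n : ℕ) :
    IsRt cs (sq (bf M b c) c b n) ∧ IsRt cs (sq (bf M b c) c b (n + 1)) ∧
    bf M (sq (bf M b c) c b (n + 1)) (sq (bf M b c) c b n) = bf M b c := by
  induction n with
  | zero => exact ⟨hc, hb, rfl⟩
  | succ n ih =>
    obtain ⟨h1, h2, h3⟩ := ih
    refine ⟨h2, ?_, ?_⟩
    · have := (h2.rf cs h1).neg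
      rw [rf_apply, bf_symm M (sq (bf M b c) c b n), h3] at this
      rw [sq_add_two]
      convert this using 1
      module
    · rw [sq_add_two]
      simp only [map_sub, map_smul, LinearMap.sub_apply, LinearMap.smul_apply, smul_eq_mul,
        h2.norm]
      rw [bf_symm M (sq (bf M b c) c b n), h3]; ring

/-- dominance -/
def Dom (b c : B → ℝ) : Prop := ∀ w : W, Pos (-(rho cs w b)) → Pos (-(rho cs w c))

theorem dom_of {b c : B → ℝ} (hb : IsRt cs b) (hc : IsRt cs c) (h : 1 ≤ bf M b c) (r : B)
    (h0 : 0 ≤ c r) (h1 : c r < b r) : Dom cs b c := by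
  intro w hw
  rcases (hc.rho cs w).pos_or_neg with hp | hn
  swap
  · exact hn
  exfalso
  set q := bf M b c with hq
  set x := sq q c b with hx
  have hroot := fun n => (sq_root cs hc hb n).1
  rw [← hq, ← hx] at hroot
  have hr : ∀ n, 0 ≤ x n r ∧ x n r < x (n + 1) r := by
    intro n
    induction n with
    | zero => exact ⟨h0, h1⟩
    | succ n ih =>
      obtain ⟨i1, i2⟩ := ih
      refine ⟨by linarith, ?_⟩
      rw [show x (n + 1 + 1) = (2 * q) • x (n + 1) - x n from sq_add_two q c b n]
      simp only [Pi.sub_apply, Pi.smul_apply, smul_eq_mul]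
      nlinarith
  have hwx : ∀ n, ∀ i, rho cs w (x (n + 1)) i ≤ 0 ∧ rho cs w (x (n + 1)) i ≤ rho cs w (x n) i := by
    intro n i
    induction n with
    | zero =>
      have e1 := hw.1 i
      have e2 := hp.1 i
      simp only [Pi.neg_apply] at e1
      exact ⟨show rho cs w b i ≤ 0 by linarith, show rho cs w b i ≤ rho cs w c i by linarith⟩
    | succ n ih =>
      obtain ⟨i1, i2⟩ := ih
      rw [show x (n + 1 + 1) = (2 * q) • x (n + 1) - x n from sq_add_two q c b n]
      simp only [map_sub, map_smul, Pi.sub_apply, Pi.smul_apply, smul_eq_mul]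
      constructor <;> nlinarith
  have hinj : Function.Injective (fun n => x (n + 1)) := by
    have hm : StrictMono (fun n => x n r) := strictMono_nat_of_lt_succ fun n => (hr n).2
    intro n m hnm
    have := hm.injective (congrFun hnm r : x (n + 1) r = x (m + 1) r)
    omega
  apply Set.infinite_range_of_injective hinj
  apply (finite_inv cs w).subset
  rintro _ ⟨n, rfl⟩
  refine ⟨hroot _, (hroot _).pos_of_coord cs (i := r) (by linarith [(hr n).1, (hr n).2]), ?_, ?_⟩
  · intro i
    have := (hwx n i).1
    simp only [Pi.neg_apply]; linarith
  · rcases ((hroot (n + 1)).rho cs w).pos_or_neg with h | h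
    · simpa using h.2
    · exact h.2

theorem concave_aux (z : ℕ → ℝ) (q : ℝ) (hq : q < 2) (hz : ∀ n, z (n + 2) = q * z (n + 1) - z n)
    (hp : ∀ n, 0 < z n) : False := by
  have hd : ∀ n, z (n + 2) - z (n + 1) ≤ z (n + 1) - z n - (2 - q) * z (n + 1) := by
    intro n; rw [hz]; linarith
  by_cases hneg : ∃ n, z (n + 1) - z n < 0
  · obtain ⟨n, hn⟩ := hneg
    have h1 : ∀ j : ℕ, z (n + j + 1) - z (n + j) ≤ z (n + 1) - z n := by
      intro j
      induction j with
      | zero => simp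
      | succ j ih =>
        have := hd (n + j)
        have := hp (n + j + 1)
        have e : n + (j + 1) = n + j + 1 := by ring
        rw [e]
        nlinarith
    have h2 : ∀ j : ℕ, z (n + j) ≤ z n + j * (z (n + 1) - z n) := by
      intro j
      induction j with
      | zero => simp
      | succ j ih =>
        have := h1 j
        push_cast
        rw [← add_assoc]
        linarith
    obtain ⟨j, hj⟩ := exists_nat_gt (z n / (z n - z (n + 1)))
    have := h2 j
    have := hp (n + j)
    rw [div_lt_iff₀ (by linarith)] at hj
    linarith
  · push Not at hneg
    have h1 : ∀ n, z 0 ≤ z n := by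
      intro n
      induction n with
      | zero => exact le_rfl
      | succ n ih => linarith [hneg n]
    have h2 : ∀ n : ℕ, z (n + 1) - z n ≤ z 1 - z 0 - n * ((2 - q) * z 0) := by
      intro n
      induction n with
      | zero => simp
      | succ n ih =>
        have := hd n
        have := mul_le_mul_of_nonneg_left (h1 (n + 1)) (by linarith : 0 ≤ 2 - q)
        push_cast
        linarith
    have hpos : 0 < (2 - q) * z 0 := mul_pos (by linarith) (hp 0)
    obtain ⟨j, hj⟩ := exists_nat_gt ((z 1 - z 0) / ((2 - q) * z 0))
    rw [div_lt_iff₀ hpos] at hj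
    linarith [h2 j, hneg j]

theorem Pos.sum_pos {v : B → ℝ} (h : Pos v) : 0 < ∑ i, v i := by
  obtain ⟨i, hi⟩ : ∃ i, v i ≠ 0 := by
    by_contra hc
    push Not at hc
    exact h.2 (funext hc)
  exact Finset.sum_pos' (fun i _ => h.1 i) ⟨i, Finset.mem_univ _, lt_of_le_of_ne (h.1 i) hi.symm⟩

open Polynomial in
theorem sq_bf {c b : B → ℝ} (hc : bf M c c = 1) (n : ℕ) :
    bf M (sq (bf M b c) c b n) c = (Chebyshev.T ℝ (n : ℤ)).eval (bf M b c) ∧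
    bf M (sq (bf M b c) c b (n + 1)) c = (Chebyshev.T ℝ ((n + 1 : ℕ) : ℤ)).eval (bf M b c) := by
  induction n with
  | zero => simp [sq, hc]
  | succ n ih =>
    obtain ⟨i1, i2⟩ := ih
    refine ⟨i2, ?_⟩
    rw [sq_add_two]
    simp only [map_sub, map_smul, LinearMap.sub_apply, LinearMap.smul_apply, smul_eq_mul, i1, i2]
    push_cast
    rw [show (n : ℤ) + 1 + 1 = n + 2 by ring, Chebyshev.T_add_two]
    simp

theorem exists_period {c b : B → ℝ} (hc : IsRt cs c) (hb : IsRt cs b)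
    (h1 : -1 < bf M b c) (h2 : bf M b c < 1) :
    ∃ k : ℕ, 1 ≤ k ∧ (Polynomial.Chebyshev.T ℝ (k : ℤ)).eval (bf M b c) = 1 := by
  set q := bf M b c with hq
  set x := sq q c b with hx
  have hroot := fun n => (sq_root cs hc hb n).1
  rw [← hq, ← hx] at hroot
  obtain ⟨t, ht⟩ := hc.exists_refl
  obtain ⟨t', ht'⟩ := hb.exists_refl
  have hg : ∀ n, rho cs (t' * t) (x n) = x (n + 2) ∧ rho cs (t' * t) (x (n + 1)) = x (n + 3) := by
    intro n
    induction n with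
    | zero =>
      have x2 : x 2 = (2 * q) • b - c := rfl
      have x3 : x 3 = (2 * q) • ((2 * q) • b - c) - b := rfl
      constructor
      · show rho cs (t' * t) c = x 2
        rw [rho_mul, ht, ht', rf_self hc.norm, rf_apply, map_neg, LinearMap.neg_apply,
          bf_symm M c b, ← hq, x2]
        module
      · show rho cs (t' * t) b = x 3
        rw [rho_mul, ht, ht', rf_apply M c, map_sub, map_smul, rf_self hb.norm, rf_apply,
          bf_symm M c b, ← hq, x3]
        module
    | succ n ih =>
      obtain ⟨i1, i2⟩ := ih
      refine ⟨i2, ?_⟩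
      rw [show x (n + 1 + 1) = (2 * q) • x (n + 1) - x n from sq_add_two q c b n,
        show x (n + 1 + 3) = (2 * q) • x (n + 3) - x (n + 2) from sq_add_two q c b (n + 2),
        map_sub, map_smul, i1, i2]
  set y : ℕ → (B → ℝ) := fun n => x (2 * n) with hy
  have hyg : ∀ n, rho cs (t' * t) (y n) = y (n + 1) := fun n => (hg (2 * n)).1
  have hyp : ∀ n m, rho cs ((t' * t) ^ n) (y m) = y (n + m) := by
    intro n m
    induction n with
    | zero => simp
    | succ n ih => rw [pow_succ', rho_mul, ih, hyg]; congr 1; ring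
  have hyrec : ∀ n, y (n + 2) = (4 * q ^ 2 - 2) • y (n + 1) - y n := by
    intro n
    have e1 : x (2 * n + 2) = (2 * q) • x (2 * n + 1) - x (2 * n) := sq_add_two q c b _
    have e2 : x (2 * n + 3) = (2 * q) • x (2 * n + 2) - x (2 * n + 1) := sq_add_two q c b _
    have e3 : x (2 * n + 4) = (2 * q) • x (2 * n + 3) - x (2 * n + 2) := sq_add_two q c b _
    show x (2 * n + 4) = (4 * q ^ 2 - 2) • x (2 * n + 2) - x (2 * n)
    rw [e3, e2, e1]; module
  have hninj : ¬ Function.Injective y := by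
    intro hinj
    have hfin : {n | Pos (y n) ∧ Pos (-(y (n + 1)))}.Finite := by
      refine ((finite_inv cs (t' * t)).preimage (f := y) hinj.injOn).subset ?_
      rintro n ⟨a1, a2⟩
      exact ⟨hroot _, a1, by rw [hyg]; exact a2⟩
    obtain ⟨N, hN⟩ := hfin.bddAbove
    have hN' : ∀ n, N < n → Pos (y n) → Pos (y (n + 1)) := by
      intro n hn hp
      rcases (hroot (2 * (n + 1))).pos_or_neg with h | h
      · exact h
      · exact absurd (hN (show n ∈ {n | Pos (y n) ∧ Pos (-(y (n + 1)))} from ⟨hp, h⟩)) (by omega)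
    have hq2 : 4 * q ^ 2 - 2 < 2 := by nlinarith
    by_cases hex : ∃ n, N < n ∧ Pos (y n)
    · obtain ⟨n, hn, hp⟩ := hex
      have hall : ∀ j, Pos (y (n + j)) := by
        intro j
        induction j with
        | zero => exact hp
        | succ j ih => exact hN' (n + j) (by omega) ih
      refine concave_aux (fun j => ∑ i, y (n + j) i) _ hq2 (fun j => ?_) (fun j => (hall j).sum_pos)
      show ∑ i, y (n + j + 2) i = _
      rw [hyrec]
      simp only [Pi.sub_apply, Pi.smul_apply, smul_eq_mul, Finset.sum_sub_distrib, Finset.mul_sum]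
      rfl
    · push Not at hex
      have hall : ∀ j, Pos (-(y (N + 1 + j))) := by
        intro j
        exact ((hroot (2 * (N + 1 + j))).pos_or_neg).resolve_left (hex _ (by omega))
      refine concave_aux (fun j => ∑ i, (-(y (N + 1 + j))) i) _ hq2 (fun j => ?_)
        (fun j => (hall j).sum_pos)
      show ∑ i, (-(y (N + 1 + j + 2))) i = _
      rw [hyrec]
      simp only [Pi.sub_apply, Pi.neg_apply, Pi.smul_apply, smul_eq_mul, Finset.sum_sub_distrib,
        Finset.mul_sum, neg_sub, Finset.sum_neg_distrib, mul_neg]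
      simp only [← Finset.mul_sum]
      rw [show N + 1 + (j + 1) = N + 1 + j + 1 by ring]
      ring
  have : ∃ n m, n < m ∧ y n = y m := by
    by_contra hcon
    push Not at hcon
    apply hninj
    intro n m hnm
    rcases lt_trichotomy n m with h | h | h
    · exact absurd hnm (hcon _ _ h)
    · exact h
    · exact absurd hnm.symm (hcon _ _ h)
  obtain ⟨n, m, hnm, he⟩ := this
  obtain ⟨d, rfl⟩ := Nat.exists_eq_add_of_lt hnm
  have e0 : y (d + 1) = c := by
    have a1 := hyp n 0
    have a2 := hyp n (d + 1)
    rw [← add_assoc, ← he] at a2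
    rw [add_zero, ← a2] at a1
    have := congrArg (rho cs ((t' * t) ^ n)⁻¹) a1
    rw [rho_inv_rho, rho_inv_rho] at this
    exact this.symm
  refine ⟨2 * (d + 1), by omega, ?_⟩
  rw [← (sq_bf hc.norm (2 * (d + 1))).1]
  show bf M (y (d + 1)) c = 1
  rw [e0, hc.norm]

end Dom

end CoxReg

namespace CoxReg

set_option linter.unusedSectionVars false
set_option linter.unusedSimpArgs false
set_option linter.unusedVariables false

open Real

section Fin

variable {B : Type} [Fintype B] [DecidableEq B] {W : Type*} [Group W] {M : CoxeterMatrix B}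
  (cs : CoxeterSystem M W)

/-- field of definition -/
noncomputable def KK (M : CoxeterMatrix B) : IntermediateField ℚ ℝ :=
  IntermediateField.adjoin ℚ (Set.range fun p : B × B => kk M p.1 p.2)

theorem kk_integral (M : CoxeterMatrix B) (i j : B) : IsIntegral ℚ (kk M i j) := by
  have h := Real.isAlgebraic_cos_rat_mul_pi (1 / (M i j : ℚ))
  have h2 : IsAlgebraic ℚ (cos (((1 / (M i j : ℚ) : ℚ) : ℝ) * π)) := h.extendScalars
    (by simpa using Int.cast_injective)
  have h3 := h2.isIntegral.neg
  have e : kk M i j = -cos (((1 / (M i j : ℚ) : ℚ) : ℝ) * π) := by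
    unfold kk
    congr 2
    push_cast
    ring
  rw [e]
  exact h3

instance KK_fin (M : CoxeterMatrix B) : FiniteDimensional ℚ (KK M) := by
  apply IntermediateField.finiteDimensional_adjoin
  rintro _ ⟨p, rfl⟩
  exact kk_integral M _ _

instance KK_nf (M : CoxeterMatrix B) : NumberField (KK M) where

theorem kk_mem (M : CoxeterMatrix B) (i j : B) : kk M i j ∈ KK M :=
  IntermediateField.subset_adjoin _ _ ⟨(i, j), rfl⟩

theorem bf_mem {v : B → ℝ} (hv : ∀ i, v i ∈ KK M) (s : B) : bf M v (ee s) ∈ KK M := by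
  rw [bf_symm, bf_sum_right]
  refine sum_mem fun i _ => mul_mem (hv i) ?_
  rw [bf_ee]
  exact kk_mem M _ _

theorem ee_mem (s i : B) : (ee s : B → ℝ) i ∈ KK M := by
  simp only [ee, Pi.single_apply]
  split_ifs
  · exact one_mem _
  · exact zero_mem _

theorem rho_mem (w : W) {v : B → ℝ} (hv : ∀ i, v i ∈ KK M) : ∀ i, rho cs w v i ∈ KK M := by
  induction w using cs.simple_induction_left with
  | one => simpa using hv
  | mul_simple_left w s ih =>
    intro i
    rw [rho_mul, rho_simple, rf_apply]
    simp only [Pi.sub_apply, Pi.smul_apply, smul_eq_mul]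
    refine sub_mem (ih i) (mul_mem (mul_mem ?_ (bf_mem ih s)) (ee_mem s i))
    exact ofNat_mem _ 2

open Polynomial in
theorem finite_vals : {q : ℝ | ∃ b s, IsRt cs b ∧ q = bf M b (ee s) ∧ -1 < q ∧ q < 1}.Finite := by
  refine ((NumberField.Embeddings.finite_of_norm_le (KK M) ℂ 2).image
    (fun x : KK M => (x : ℝ) / 2)).subset ?_
  rintro q ⟨b, s, hb, hq, hq1, hq2⟩
  obtain ⟨k, hk, hT⟩ := exists_period cs (IsRt.simple cs s) hb (by rw [← hq]; exact hq1)
    (by rw [← hq]; exact hq2)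
  rw [← hq] at hT
  have hqK : q ∈ KK M := by
    rw [hq]
    obtain ⟨w, i, rfl⟩ := hb
    exact bf_mem (rho_mem cs w (ee_mem i)) s
  refine ⟨2 * ⟨q, hqK⟩, ⟨?_, ?_⟩, ?_⟩
  · rw [← isIntegral_algebraMap_iff (B := ℝ) (algebraMap (KK M) ℝ).injective]
    have e : algebraMap (KK M) ℝ (2 * ⟨q, hqK⟩) = 2 * q := by
      rw [map_mul, map_ofNat]; rfl
    rw [e]
    have hcos : cos (arccos q) = q := Real.cos_arccos hq1.le hq2.le
    rw [← hcos, Chebyshev.T_real_cos, Real.cos_eq_one_iff] at hT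
    obtain ⟨n, hn⟩ := hT
    have hk0 : (k : ℝ) ≠ 0 := by positivity
    have : arccos q = ((2 * n / k : ℚ) : ℝ) * π := by
      push_cast at hn ⊢
      field_simp
      linarith
    have h := Real.isIntegral_two_mul_cos_rat_mul_pi (2 * n / k : ℚ)
    rwa [← this, hcos] at h
  · intro φ
    have hTK : (Chebyshev.T (KK M) (k : ℤ)).eval (⟨q, hqK⟩ : KK M) = 1 := by
      apply (algebraMap (KK M) ℝ).injective
      rw [Chebyshev.algebraMap_eval_T, map_one]
      exact hT
    have hTC : (Chebyshev.T ℂ (k : ℤ)).eval (φ ⟨q, hqK⟩) = 1 := by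
      rw [← Chebyshev.map_T φ, Polynomial.eval_map, Polynomial.eval₂_at_apply, hTK, map_one]
    obtain ⟨z, hz⟩ := Complex.cos_surjective (φ ⟨q, hqK⟩)
    rw [← hz, Chebyshev.T_complex_cos, Complex.cos_eq_one_iff] at hTC
    obtain ⟨n, hn⟩ := hTC
    have hk0 : (k : ℂ) ≠ 0 := by exact_mod_cast (by omega : k ≠ 0)
    have hzr : z = ((n * (2 * π) / k : ℝ) : ℂ) := by
      push_cast at hn ⊢
      rw [eq_div_iff hk0, hn]; ring
    rw [map_mul, map_ofNat, ← hz, hzr, ← Complex.ofReal_cos, norm_mul, Complex.norm_real]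
    have := Real.abs_cos_le_one (n * (2 * π) / k)
    rw [Real.norm_eq_abs]
    simp only [Complex.norm_ofNat]
    linarith
  · show algebraMap (KK M) ℝ (2 * (⟨q, hqK⟩ : KK M)) / 2 = q
    rw [map_mul, map_ofNat]
    show 2 * q / 2 = q
    ring

end Fin

end CoxReg

namespace CoxReg

set_option linter.unusedSectionVars false
set_option linter.unusedSimpArgs false
set_option linter.unusedVariables false

open Real

section Small

variable {B : Type} [Fintype B] [DecidableEq B] {W : Type*} [Group W] {M : CoxeterMatrix B}
  (cs : CoxeterSystem M W)

/-- small roots -/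
def Small (b : B → ℝ) : Prop :=
  IsRt cs b ∧ Pos b ∧ ∀ c, IsRt cs c → Pos c → Dom cs b c → c = b

theorem Dom.rho {b c : B → ℝ} (h : Dom cs b c) (w : W) :
    Dom cs (CoxReg.rho cs w b) (CoxReg.rho cs w c) := by
  intro w' hw'
  rw [← rho_mul] at hw' ⊢
  exact h _ hw'

theorem Dom.bf_pos {b c : B → ℝ} (hb : IsRt cs b) (hc : IsRt cs c) (pb : Pos b) (pc : Pos c)
    (h : Dom cs b c) : 0 < bf M b c := by
  by_contra hcon
  push Not at hcon
  obtain ⟨t, ht⟩ := hb.exists_refl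
  have h1 := h t (by rw [ht, rf_self hb.norm, neg_neg]; exact pb)
  rw [ht] at h1
  refine Pos.not_neg (b := rf M b c) ⟨fun i => ?_, fun h0 => h1.2 (by rw [h0, neg_zero])⟩ h1
  rw [rf_apply, bf_symm]
  have e1 := pb.1 i
  have e2 := pc.1 i
  simp only [Pi.sub_apply, Pi.smul_apply, smul_eq_mul]
  nlinarith

theorem Small.lt_one {b : B → ℝ} (h : Small cs b) (s : B) (hs : b ≠ ee s) :
    bf M b (ee s) < 1 := by
  by_contra hcon
  push Not at hcon
  obtain ⟨r, hr, hbr⟩ := h.1.exists_coord cs h.2.1 s hs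
  have hd : Dom cs b (ee s) := dom_of cs h.1 (IsRt.simple cs s) hcon r
    (by rw [ee_ne hr]) (by rw [ee_ne hr]; exact hbr)
  exact hs (h.2.2 _ (IsRt.simple cs s) (ee_pos s) hd).symm

theorem small_simple (s : B) : Small cs (ee s) := by
  refine ⟨IsRt.simple cs s, ee_pos s, fun c hc pc hd => ?_⟩
  by_contra hne
  have h1 := hd (cs.simple s) (by
    rw [rho_simple, rf_self (bf_ee_self M s), neg_neg]; exact ee_pos s)
  rw [rho_simple] at h1
  exact (hc.simple_pos cs pc s hne).not_neg h1

theorem Small.dom_step {b : B → ℝ} (h : Small cs b) (s : B) (hs : b ≠ ee s) (c : B → ℝ)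
    (hc : IsRt cs c) (pc : Pos c) (hd : Dom cs (rf M (ee s) b) c) (hne : c ≠ rf M (ee s) b) :
    c = ee s := by
  by_contra hcs
  have h1 := hd.rho cs (cs.simple s)
  rw [rho_simple, rf_rf M _ _ (bf_ee_self M s)] at h1
  have h2 := h.2.2 _ ((IsRt.simple cs s).rf cs hc) (hc.simple_pos cs pc s hcs) h1
  apply hne
  rw [← h2, rf_rf M _ _ (bf_ee_self M s)]

theorem Small.step_or {b : B → ℝ} (h : Small cs b) (s : B) (hs : b ≠ ee s) :
    Small cs (rf M (ee s) b) ∨ Dom cs (rf M (ee s) b) (ee s) := by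
  by_cases hsm : Small cs (rf M (ee s) b)
  · exact Or.inl hsm
  right
  have hr := (IsRt.simple cs s).rf cs h.1
  have hp := h.1.simple_pos cs h.2.1 s hs
  unfold Small at hsm
  push Not at hsm
  obtain ⟨c, hc, pc, hd, hne⟩ := hsm hr hp
  have := h.dom_step cs s hs c hc pc hd hne
  rwa [this] at hd

theorem Small.down {b : B → ℝ} (h : Small cs b) (hs : ∀ s, b ≠ ee s) :
    ∃ s, 0 < bf M b (ee s) ∧ Small cs (rf M (ee s) b) := by
  obtain ⟨s, hsp⟩ : ∃ s, 0 < bf M b (ee s) := by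
    by_contra hcon
    push Not at hcon
    have h1 := h.1.norm
    rw [bf_sum_right] at h1
    have : ∑ i, b i * bf M b (ee i) ≤ 0 :=
      Finset.sum_nonpos fun i _ => mul_nonpos_of_nonneg_of_nonpos (h.2.1.1 i) (hcon i)
    linarith
  refine ⟨s, hsp, ?_⟩
  rcases h.step_or cs s (hs s) with h1 | h1
  · exact h1
  · exfalso
    have h2 := h1.bf_pos cs ((IsRt.simple cs s).rf cs h.1) (IsRt.simple cs s)
      (h.1.simple_pos cs h.2.1 s (hs s)) (ee_pos s)
    rw [rf_apply] at h2
    simp only [map_sub, map_smul, LinearMap.sub_apply, LinearMap.smul_apply, bf_ee_self,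
      smul_eq_mul] at h2
    linarith

theorem length_down {b : B → ℝ} (hb : IsRt cs b) (pb : Pos b) (s : B) (hs : b ≠ ee s)
    (hp : 0 < bf M b (ee s)) (t : W) (ht : ∀ v, rho cs t v = rf M b v) :
    cs.length (cs.simple s * t * cs.simple s) < cs.length t ∧
    ∀ v, rho cs (cs.simple s * t * cs.simple s) v = rf M (rf M (ee s) b) v := by
  obtain ⟨r, hr, hbr⟩ := hb.exists_coord cs pb s hs
  have hti : ∀ v, rho cs t⁻¹ v = rf M b v := by
    intro v
    have := rho_inv_rho cs t (rf M b v)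
    rwa [ht, rf_rf M _ _ hb.norm] at this
  have h1 : cs.length (cs.simple s * t) < cs.length t := by
    rw [← cs.length_inv, ← cs.length_inv t, mul_inv_rev, cs.inv_simple, length_gt_iff]
    apply ((IsRt.simple cs s).rho cs t⁻¹).neg_of_coord cs (i := r)
    rw [hti, rf_apply, bf_symm]
    simp only [Pi.sub_apply, Pi.smul_apply, smul_eq_mul, ee_ne hr]
    have := mul_pos hp hbr
    linarith
  have h2 : cs.length (cs.simple s * t * cs.simple s) < cs.length (cs.simple s * t) := by
    rw [length_gt_iff]
    apply ((IsRt.simple cs s).rho cs (cs.simple s * t)).neg_of_coord cs (i := r)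
    rw [rho_mul, ht, rho_simple, rf_apply M b, map_sub, map_smul, rf_self (bf_ee_self M s),
      rf_apply, bf_symm]
    simp only [Pi.sub_apply, Pi.neg_apply, Pi.smul_apply, smul_eq_mul, ee_ne hr]
    have := mul_pos hp hbr
    linarith
  refine ⟨h2.trans h1, fun v => ?_⟩
  rw [rho_mul, rho_mul, ht, rho_simple, rf_apply M b, rf_apply M (rf M (ee s) b), map_sub,
    map_smul, rf_rf M _ _ (bf_ee_self M s)]
  congr 3
  rw [← bf_rf M (ee s) _ b (bf_ee_self M s), rf_rf M _ _ (bf_ee_self M s)]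

/-- descending chains of small roots -/
def Chain (n : ℕ) (f : ℕ → (B → ℝ)) : Prop :=
  (∃ i, f 0 = ee i) ∧ (∀ k ≤ n, Small cs (f k)) ∧
    ∀ k < n, ∃ s, bf M (f k) (ee s) < 0 ∧ f (k + 1) = rf M (ee s) (f k)

theorem exists_chain (n : ℕ) : ∀ (t : W) (b : B → ℝ), cs.length t = n →
    (∀ v, rho cs t v = rf M b v) → Small cs b → ∃ n f, Chain cs n f ∧ f n = b := by
  induction n using Nat.strong_induction_on with
  | _ n ih =>
  intro t b hn ht hb
  by_cases hs : ∃ s, b = ee s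
  · obtain ⟨s, rfl⟩ := hs
    exact ⟨0, fun _ => ee s, ⟨⟨s, rfl⟩, fun k _ => hb, fun k hk => by omega⟩, rfl⟩
  push Not at hs
  obtain ⟨s, hsp, hsm⟩ := hb.down cs hs
  obtain ⟨l1, l2⟩ := length_down cs hb.1 hb.2.1 s (hs s) hsp t ht
  obtain ⟨m, f, ⟨c1, c2, c3⟩, hf⟩ := ih _ (by omega) _ _ rfl l2 hsm
  refine ⟨m + 1, Function.update f (m + 1) b, ⟨?_, ?_, ?_⟩, by simp⟩
  · simpa using c1
  · intro k hk
    by_cases hkm : k = m + 1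
    · subst hkm; simpa using hb
    · rw [Function.update_of_ne hkm]; exact c2 k (by omega)
  · intro k hk
    rw [Function.update_of_ne (by omega : k ≠ m + 1)]
    by_cases hkm : k = m
    · subst hkm
      refine ⟨s, ?_, ?_⟩
      · rw [hf, rf_apply]
        simp only [map_sub, map_smul, LinearMap.sub_apply, LinearMap.smul_apply, bf_ee_self,
          smul_eq_mul]
        linarith
      · rw [hf, rf_rf M _ _ (bf_ee_self M s)]; simp
    · rw [Function.update_of_ne (by omega : k + 1 ≠ m + 1)]
      exact c3 k (by omega)

theorem Small.exists_chain {b : B → ℝ} (h : Small cs b) : ∃ n f, Chain cs n f ∧ f n = b := by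
  obtain ⟨t, ht⟩ := h.1.exists_refl
  exact CoxReg.exists_chain cs _ t b rfl ht h

theorem Chain.no_repeat {n : ℕ} {f : ℕ → (B → ℝ)} (h : Chain cs n f) {i j : ℕ} (hij : i < j)
    (hj : j ≤ n) (heq : ∀ s, max (-1) (bf M (f i) (ee s)) = max (-1) (bf M (f j) (ee s))) :
    False := by
  obtain ⟨c1, c2, c3⟩ := h
  have key : ∀ d, i + d ≤ n → (∀ s, f i s ≤ f (i + d) s) ∧
      (∀ s, bf M (f i) (ee s) ≤ -1 → f (i + d) s = f i s ∧ bf M (f (i + d)) (ee s) ≤ -1) ∧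
      (0 < d → ∃ s, f i s < f (i + d) s) := by
    intro d
    induction d with
    | zero => intro _; exact ⟨fun s => le_rfl, fun s hs => ⟨rfl, hs⟩, fun h => by omega⟩
    | succ d ih =>
      intro hd
      obtain ⟨i1, i2, i3⟩ := ih (by omega)
      obtain ⟨r, hr1, hr2⟩ := c3 (i + d) (by omega)
      have sm := c2 (i + d + 1) (by omega)
      have sm0 := c2 (i + d) (by omega)
      have hne : f (i + d + 1) ≠ ee r := by
        intro h0
        have h1 : f (i + d) = - ee r := by
          rw [← rf_rf M (ee r) (f (i + d)) (bf_ee_self M r), ← hr2, h0, rf_self (bf_ee_self M r)]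
        have h2 := sm0.2.1
        rw [h1] at h2
        exact (ee_pos r).not_neg h2
      have hlt := sm.lt_one cs r hne
      rw [hr2, rf_apply] at hlt
      simp only [map_sub, map_smul, LinearMap.sub_apply, LinearMap.smul_apply, bf_ee_self,
          smul_eq_mul] at hlt
      have hfs : ∀ s, s ≠ r → f (i + d + 1) s = f (i + d) s := by
        intro s hsr
        rw [hr2, rf_apply]
        simp [ee_ne hsr]
      have hfr : f (i + d) r < f (i + d + 1) r := by
        rw [hr2, rf_apply]
        simp only [Pi.sub_apply, Pi.smul_apply, smul_eq_mul, ee_self]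
        linarith
      rw [← add_assoc]
      refine ⟨fun s => ?_, fun s hs => ?_, fun _ => ⟨r, lt_of_le_of_lt (i1 r) hfr⟩⟩
      · by_cases hsr : s = r
        · subst hsr; linarith [i1 s]
        · rw [hfs s hsr]; exact i1 s
      · obtain ⟨j1, j2⟩ := i2 s hs
        have hsr : s ≠ r := by
          rintro rfl
          linarith
        refine ⟨by rw [hfs s hsr, j1], ?_⟩
        rw [hr2, rf_apply]
        simp only [map_sub, map_smul, LinearMap.sub_apply, LinearMap.smul_apply, bf_ee,
          smul_eq_mul]
        have := kk_nonpos M hsr.symm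
        nlinarith
  obtain ⟨d, rfl⟩ := Nat.exists_eq_add_of_lt hij
  rw [add_assoc] at hj heq
  obtain ⟨k1, k2, k3⟩ := key (d + 1) hj
  obtain ⟨r, hr⟩ := k3 (by omega)
  set b := f (i + (d + 1)) with hb
  set c := f i with hc
  have sb : Small cs b := c2 _ hj
  have sc : Small cs c := c2 _ (by omega)
  have h0 : bf M (b - c) (b - c) = 0 := by
    rw [bf_sum_right]
    refine Finset.sum_eq_zero fun s _ => ?_
    by_cases hs : bf M c (ee s) ≤ -1
    · rw [Pi.sub_apply, (k2 s hs).1]; ring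
    · push Not at hs
      have e := heq s
      rw [max_eq_right hs.le] at e
      have : bf M b (ee s) = bf M c (ee s) := by
        rcases le_total (bf M b (ee s)) (-1) with h | h
        · rw [max_eq_left h] at e; linarith
        · rw [max_eq_right h] at e; exact e.symm
      rw [map_sub, LinearMap.sub_apply, this]; ring
  have h1 : bf M b c = 1 := by
    simp only [map_sub, LinearMap.sub_apply, sb.1.norm, sc.1.norm, bf_symm M c b] at h0
    linarith
  have hd := dom_of cs sb.1 sc.1 h1.ge r (sc.2.1.1 r) hr
  have := sb.2.2 c sc.1 sc.2.1 hd
  rw [this] at hr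
  exact lt_irrefl _ hr

theorem Chain.word {n : ℕ} {f : ℕ → (B → ℝ)} (h : Chain cs n f) (k : ℕ) (hk : k ≤ n) :
    ∃ (l : List B) (i : B), l.length = k ∧ f k = rho cs (cs.wordProd l) (ee i) := by
  obtain ⟨⟨i, c1⟩, c2, c3⟩ := h
  induction k with
  | zero => exact ⟨[], i, rfl, by simpa using c1⟩
  | succ k ih =>
    obtain ⟨l, i, h1, h2⟩ := ih (by omega)
    obtain ⟨s, -, hs⟩ := c3 k (by omega)
    exact ⟨s :: l, i, by simp [h1], by rw [cs.wordProd_cons, rho_mul, rho_simple, ← h2, hs]⟩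

theorem finite_small : {b | Small cs b}.Finite := by
  set F : Set ℝ := insert (-1) (insert 1
    {q : ℝ | ∃ b s, IsRt cs b ∧ q = bf M b (ee s) ∧ -1 < q ∧ q < 1}) with hF
  have hFf : F.Finite := ((finite_vals cs).insert 1).insert (-1)
  set G : Set (B → ℝ) := Set.pi Set.univ (fun _ => F) with hG
  have hGf : G.Finite := Set.Finite.pi' (fun _ => hFf) |>.subset (by
    intro v hv i; exact hv i trivial)
  have hmem : ∀ b, Small cs b → (fun s => max (-1) (bf M b (ee s))) ∈ G := by
    intro b hb s _
    show max (-1) (bf M b (ee s)) ∈ F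
    rcases le_or_gt (bf M b (ee s)) (-1) with h | h
    · rw [max_eq_left h]; exact Or.inl rfl
    · rw [max_eq_right h.le]
      by_cases hbs : b = ee s
      · right; left; rw [hbs, bf_ee_self]
      · right; right; exact ⟨b, s, hb.1, rfl, h, hb.lt_one cs s hbs⟩
  have hlen : ∀ n f, Chain cs n f → n ≤ hGf.toFinset.card := by
    intro n f hc
    by_contra hcon
    push Not at hcon
    obtain ⟨i, hi, j, hj, hij, he⟩ := Finset.exists_ne_map_eq_of_card_lt_of_maps_to
      (s := Finset.range (n + 1)) (t := hGf.toFinset)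
      (f := fun k => fun s => max (-1) (bf M (f k) (ee s))) (by simp; omega) (by
        intro k hk
        have hk' : k < n + 1 := by simpa using hk
        have := hmem _ (hc.2.1 k (by omega))
        simpa using this)
    simp only [Finset.mem_range] at hi hj
    rcases lt_or_gt_of_ne hij with h | h
    · exact hc.no_repeat cs h (by omega) fun s => congrFun he s
    · exact hc.no_repeat cs h (by omega) fun s => (congrFun he s).symm
  have hfin : ({l : List B | l.length ≤ hGf.toFinset.card} ×ˢ (Set.univ : Set B)).Finite :=
    (List.finite_length_le B _).prod Set.finite_univ
  refine (hfin.image (fun p => rho cs (cs.wordProd p.1) (ee p.2))).subset ?_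
  intro b hb
  obtain ⟨n, f, hc, rfl⟩ := Small.exists_chain cs hb
  obtain ⟨l, i, h1, h2⟩ := hc.word cs n le_rfl
  exact ⟨(l, i), ⟨by show l.length ≤ _; rw [h1]; exact hlen n f hc, trivial⟩, h2.symm⟩

/-- small inversion set -/
def Sig (w : W) : Set (B → ℝ) := {b | Small cs b ∧ Pos (-(rho cs w b))}

theorem mem_Sig_mul (w : W) (s : B) (hp : Pos (rho cs w (ee s))) (b : B → ℝ) :
    b ∈ Sig cs (w * cs.simple s) ↔ Small cs b ∧ (b = ee s ∨ rf M (ee s) b ∈ Sig cs w) := by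
  have e : rho cs (w * cs.simple s) b = rho cs w (rf M (ee s) b) := by
    rw [rho_mul, rho_simple]
  constructor
  · rintro ⟨hb, hn⟩
    refine ⟨hb, ?_⟩
    by_cases hbs : b = ee s
    · exact Or.inl hbs
    right
    rw [e] at hn
    rcases hb.step_or cs s hbs with h | h
    · exact ⟨h, hn⟩
    · exact absurd (h w hn) hp.not_neg
  · rintro ⟨hb, h | h⟩
    · refine ⟨hb, ?_⟩
      rw [e, h, rf_self (bf_ee_self M s), map_neg, neg_neg]
      exact hp
    · refine ⟨hb, ?_⟩
      rw [e]
      exact h.2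

theorem reduced_snoc (u : List B) (s : B) (hu : cs.IsReduced u) :
    cs.IsReduced (u ++ [s]) ↔ ee s ∉ Sig cs (cs.wordProd u) := by
  have e : cs.wordProd (u ++ [s]) = cs.wordProd u * cs.simple s := by
    rw [cs.wordProd_append, cs.wordProd_singleton]
  have h1 : cs.IsReduced (u ++ [s]) ↔
      cs.length (cs.wordProd u) < cs.length (cs.wordProd u * cs.simple s) := by
    have := hu.eq
    unfold CoxeterSystem.IsReduced
    rw [e, List.length_append, List.length_singleton]
    rcases cs.length_mul_simple (cs.wordProd u) s with h | h <;> omega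
  rw [h1, length_lt_iff]
  constructor
  · intro h h'
    exact h.not_neg h'.2
  · intro h
    rcases ((IsRt.simple cs s).rho cs (cs.wordProd u)).pos_or_neg with h' | h'
    · exact h'
    · exact absurd ⟨small_simple cs s, h'⟩ h

theorem reduced_prefix (u v : List B) (h : cs.IsReduced (u ++ v)) : cs.IsReduced u := by
  have := h.take u.length
  simpa using this

theorem reduced_congr (v : List B) : ∀ u u' : List B, cs.IsReduced u → cs.IsReduced u' →
    Sig cs (cs.wordProd u) = Sig cs (cs.wordProd u') →
    cs.IsReduced (u ++ v) → cs.IsReduced (u' ++ v) := by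
  induction v with
  | nil => intro u u' _ h _ _; simpa using h
  | cons s v ih =>
    intro u u' hu hu' hS h
    rw [List.append_cons] at h ⊢
    have r1 := reduced_prefix cs _ _ h
    have n1 := (reduced_snoc cs u s hu).1 r1
    have n2 := n1
    rw [hS] at n2
    have r2 := (reduced_snoc cs u' s hu').2 n2
    refine ih _ _ r1 r2 ?_ h
    have pos : ∀ u : List B, ee s ∉ Sig cs (cs.wordProd u) → Pos (rho cs (cs.wordProd u) (ee s)) := by
      intro u h
      rcases ((IsRt.simple cs s).rho cs (cs.wordProd u)).pos_or_neg with h' | h'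
      · exact h'
      · exact absurd ⟨small_simple cs s, h'⟩ h
    ext b
    rw [cs.wordProd_append, cs.wordProd_append, cs.wordProd_singleton,
      mem_Sig_mul cs _ s (pos u n1), mem_Sig_mul cs _ s (pos u' n2), hS]

theorem finite_range_of_factor {α β γ : Type*} [Nonempty β] (f : α → β) (g : α → γ)
    (hg : (Set.range g).Finite) (h : ∀ a b, g a = g b → f a = f b) : (Set.range f).Finite := by
  have hf : Function.FactorsThrough f g := fun a b hab => h a b hab
  obtain ⟨e, he⟩ := (Function.factorsThrough_iff f).1 hf
  rw [he, Set.range_comp]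
  exact hg.image e

/-- Reduced words form a regular language (Brink–Howlett). -/
theorem red_regular : Language.IsRegular ({ω | cs.IsReduced ω} : Language B) := by
  apply Language.IsRegular.of_finite_range_leftQuotient
  apply finite_range_of_factor _ (fun u => ((cs.IsReduced u : Prop), Sig cs (cs.wordProd u)))
  · refine ((Set.finite_univ (α := Prop)).prod (finite_small cs).powerset).subset ?_
    rintro _ ⟨u, rfl⟩
    exact ⟨trivial, fun b hb => hb.1⟩
  · intro u u' he
    have e1 : cs.IsReduced u = cs.IsReduced u' := congrArg Prod.fst he
    have e2 : Sig cs (cs.wordProd u) = Sig cs (cs.wordProd u') := congrArg Prod.snd he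
    ext v
    show cs.IsReduced (u ++ v) ↔ cs.IsReduced (u' ++ v)
    by_cases hu : cs.IsReduced u
    · have hu' : cs.IsReduced u' := e1 ▸ hu
      exact ⟨reduced_congr cs v u u' hu hu' e2, reduced_congr cs v u' u hu' hu e2.symm⟩
    · have hu' : ¬ cs.IsReduced u' := e1 ▸ hu
      exact ⟨fun h => absurd (reduced_prefix cs _ _ h) hu,
        fun h => absurd (reduced_prefix cs _ _ h) hu'⟩

end Small

theorem palin_regular {B : Type} (L : Language B) (hL : L.IsRegular) :
    Language.IsRegular ({ω : List B | ω ≠ [] ∧ ω ++ ω.dropLast.reverse ∈ L} : Language B) := by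
  obtain ⟨σ, hσ, D, rfl⟩ := hL
  apply Language.IsRegular.of_finite_range_leftQuotient
  apply finite_range_of_factor _ (fun u : List B =>
    ((D.eval u, fun q => D.evalFrom q u.reverse,
      (u ≠ [] ∧ u ++ u.dropLast.reverse ∈ D.accepts : Prop)) : σ × (σ → σ) × Prop))
  · exact Set.toFinite _
  · intro u u' he
    have e1 : D.eval u = D.eval u' := congrArg (fun p => p.1) he
    have e2 : (fun q => D.evalFrom q u.reverse) = fun q => D.evalFrom q u'.reverse :=
      congrArg (fun p => p.2.1) he
    have e3 : (u ≠ [] ∧ u ++ u.dropLast.reverse ∈ D.accepts) =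
      (u' ≠ [] ∧ u' ++ u'.dropLast.reverse ∈ D.accepts) := congrArg (fun p => p.2.2) he
    ext v
    show (u ++ v ≠ [] ∧ (u ++ v) ++ (u ++ v).dropLast.reverse ∈ D.accepts) ↔
      (u' ++ v ≠ [] ∧ (u' ++ v) ++ (u' ++ v).dropLast.reverse ∈ D.accepts)
    by_cases hv : v = []
    · subst hv
      simp only [List.append_nil]
      exact iff_of_eq e3
    · have key : ∀ u : List B, (u ++ v) ++ (u ++ v).dropLast.reverse ∈ D.accepts ↔
          D.evalFrom (D.evalFrom (D.eval u) (v ++ v.dropLast.reverse)) u.reverse ∈ D.accept := by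
        intro u
        rw [List.dropLast_append_of_ne_nil hv, List.reverse_append, DFA.mem_accepts]
        unfold DFA.eval
        rw [← DFA.evalFrom_of_append, ← DFA.evalFrom_of_append]
        simp only [List.append_assoc]
      rw [key, key, e1, congrFun e2]
      simp [hv]

end CoxReg

/-- The language of reduced words for reflection-prefixes is
regular. -/
theorem stmt_8 {B : Type} [Fintype B] {W : Type*} [Group W]
    {M : CoxeterMatrix B} (cs : CoxeterSystem M W) :
    Language.IsRegular
      ({ω : List B | ω ≠ [] ∧ cs.IsReduced (ω ++ ω.dropLast.reverse)} :
        Language B) := by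
  classical
  exact CoxReg.palin_regular _ (CoxReg.red_regular cs)
end

section
/- Let n ≥ 2 and let cs : CoxeterSystem M W be a Coxeter system of affine type Ã_n, where M : CoxeterMatrix (Fin (n+1)) is given by M i j = 1 if i = j, M i j = 3 if j ≡ i + 1 or j ≡ i − 1 modulo n+1, and M i j = 2 otherwise. Then for every k ∈ ℕ, the set {t ∈ W | cs.IsReflection t ∧ cs.length t = 2k+1} is finite and has exactly n+1 elements. (Equivalently, the Poincaré series of reflections of type Ã_n is T(q) = (n+1)·q/(1−q²), i.e., the generating function of depth of positive roots is (n+1)/(1−q).) -/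
namespace AffA

def fA {n : ℕ} (k : ZMod (n+1)) (x : ℤ) : ℤ :=
  if (x : ZMod (n+1)) = k then x+1 else if (x : ZMod (n+1)) = k+1 then x-1 else x

lemma fA_cast {n : ℕ} (k : ZMod (n+1)) (x : ℤ) :
    ((x : ZMod (n+1)) = k ∧ fA k x = x+1 ∧ (fA k x : ZMod (n+1)) = x+1) ∨
    ((x : ZMod (n+1)) ≠ k ∧ (x : ZMod (n+1)) = k+1 ∧ fA k x = x-1 ∧
      (fA k x : ZMod (n+1)) = x-1)
    ∨ ((x : ZMod (n+1)) ≠ k ∧ (x : ZMod (n+1)) ≠ k+1 ∧ fA k x = x) := by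
  unfold fA; split_ifs <;> simp_all

lemma one_ne {n : ℕ} (h2 : (2 : ZMod (n+1)) ≠ 0) : (1 : ZMod (n+1)) ≠ 0 := by
  intro h; apply h2; rw [← one_add_one_eq_two, h, add_zero]

lemma fA_fA {n : ℕ} (h2 : (2 : ZMod (n+1)) ≠ 0) (k : ZMod (n+1)) (x : ℤ) : fA k (fA k x) = x := by
  have := one_ne h2
  have := fA_cast k x
  have := fA_cast k (fA k x)
  grind

lemma fA_comm {n : ℕ} (h2 : (2 : ZMod (n+1)) ≠ 0) (k l : ZMod (n+1)) (h : k ≠ l) (h' : l ≠ k+1)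
    (h'' : l ≠ k - 1) (x : ℤ) : fA k (fA l x) = fA l (fA k x) := by
  have := fA_cast k x
  have := fA_cast l x
  have := fA_cast k (fA l x)
  have := fA_cast l (fA k x)
  grind

lemma fA_braid {n : ℕ} (h2 : (2 : ZMod (n+1)) ≠ 0) (k l : ZMod (n+1)) (h' : l = k+1) (x : ℤ) :
    fA k (fA l (fA k x)) = fA l (fA k (fA l x)) := by
  have h3 := fA_cast k (fA l x)
  have h4 := fA_cast l (fA k x)
  have h5 := fA_cast l (fA k (fA l x))
  have h6 := fA_cast k (fA l (fA k x))
  rcases fA_cast k x with h1 | h1 | h1 <;> rcases fA_cast l x with h2 | h2 | h2 <;>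
  rcases h3 with h3 | h3 | h3 <;> rcases h4 with h4 | h4 | h4 <;>
  first
  | (exfalso; clear h5 h6; grind)
  | grind

/-- the lower end of the reflected pair -/
def lo (n : ℕ) (a : ℤ) : ℕ → ℤ
  | 0 => a
  | m+1 => if ((a + m + 1 : ℤ) : ZMod (n+1)) = (lo n a m : ZMod (n+1)) - 1 then lo n a m - 1
      else lo n a m

lemma lo_succ {n : ℕ} (a : ℤ) (m : ℕ) :
    ((a : ZMod (n+1)) + m + 1 = (lo n a m : ZMod (n+1)) - 1 ∧ lo n a (m+1) = lo n a m - 1 ∧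
      ((lo n a (m+1) : ℤ) : ZMod (n+1)) = (lo n a m : ZMod (n+1)) - 1) ∨
    ((a : ZMod (n+1)) + m + 1 ≠ (lo n a m : ZMod (n+1)) - 1 ∧ lo n a (m+1) = lo n a m) := by
  rw [lo]
  push_cast
  split_ifs with h
  · left; simp [h]
  · right; simp [h]

lemma lo_ne {n : ℕ} (h2 : (2 : ZMod (n+1)) ≠ 0) (a : ℤ) (m : ℕ) :
    (a : ZMod (n+1)) + m + 1 ≠ (lo n a m : ZMod (n+1)) := by
  induction m with
  | zero =>
    have := one_ne h2
    simp only [lo, Nat.cast_zero, add_zero]; intro h; exact this (by simpa using h)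
  | succ m ih =>
    have := lo_succ (n := n) a m
    push_cast
    grind

section grp
variable {W : Type*} [Group W] {n : ℕ} (σ : ZMod (n+1) → W)

def rr (a : ℤ) : ℕ → W
  | 0 => σ a
  | m+1 => σ ((a : ZMod (n+1)) + m + 1) * rr a m * σ ((a : ZMod (n+1)) + m + 1)

lemma rr_congr {a b : ℤ} (h : (a : ZMod (n+1)) = b) (m : ℕ) : rr σ a m = rr σ b m := by
  induction m with
  | zero => simp [rr, h]
  | succ m ih => simp [rr, h, ih]

lemma rr_succ' (a : ℤ) (m : ℕ) (i : ZMod (n+1)) (h : i = (a : ZMod (n+1)) + m + 1) :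
    σ i * rr σ a m * σ i = rr σ a (m+1) := by
  subst h; rfl

lemma grp_braid {s u t : W} (h : s * u * s = u * s * u) :
    s * (u * (s * t * s) * u) * s = u * (s * (u * t * u) * s) * u := by
  calc _ = (s*u*s)*t*(s*u*s) := by group
    _ = (u*s*u)*t*(u*s*u) := by rw [h]
    _ = _ := by group

lemma grp_comm {s u t : W} (h : s * u = u * s) :
    s * (u * t * u) * s = u * (s * t * s) * u := by
  calc _ = (s*u)*t*(u*s) := by group
    _ = (u*s)*t*(s*u) := by rw [h]
    _ = _ := by group

set_option maxHeartbeats 2000000 in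
lemma conj_main (h2 : (2 : ZMod (n+1)) ≠ 0) (hsq : ∀ i, σ i * σ i = 1)
    (hbr : ∀ i, σ i * σ (i+1) * σ i = σ (i+1) * σ i * σ (i+1))
    (hco : ∀ i j, i ≠ j → j ≠ i + 1 → j ≠ i - 1 → σ i * σ j = σ j * σ i) (a : ℤ) (m : ℕ) :
    ∀ i : ZMod (n+1), i ≠ (a : ZMod (n+1)) + m + 1 → i ≠ (a : ZMod (n+1)) + m →
    (i = (lo n a m : ZMod (n+1)) - 1 → σ i * rr σ a m * σ i = rr σ (a-1) (m+1)) ∧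
    (i = (lo n a m : ZMod (n+1)) → ∃ m', m = m'+1 ∧ σ i * rr σ a m * σ i = rr σ (a+1) m') ∧
    (i ≠ (lo n a m : ZMod (n+1)) - 1 → i ≠ (lo n a m : ZMod (n+1)) →
      σ i * rr σ a m * σ i = rr σ a m) := by
  induction m using Nat.strong_induction_on with
  | _ m IH =>
  intro i hi1 hi2
  have h1 := one_ne h2
  rcases m with _ | m
  · simp only [lo, rr, Nat.cast_zero, add_zero] at *
    refine ⟨fun h => ?_, fun h => absurd h hi2, fun h h' => ?_⟩
    · have := hbr i
      have e : (a : ZMod (n+1)) = i + 1 := by grind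
      push_cast
      rw [show (a : ZMod (n+1)) - 1 = i by grind, e, this]
    · rw [hco i a (by grind) (by grind) (by grind), mul_assoc, hsq, mul_one]
  · have L1 := lo_succ (n := n) a m
    have N1 := lo_ne h2 a m
    push_cast at hi1 hi2 ⊢
    by_cases hadj : i = (a : ZMod (n+1)) + m
    · rcases m with _ | m
      · simp only [lo, Nat.cast_zero, add_zero, zero_add] at *
        refine ⟨fun h => by grind, fun h => ⟨trivial, ?_⟩, fun h h' => by grind⟩
        simp only [rr]
        subst hadj
        push_cast
        rw [add_zero]
        have hb := hbr a
        calc _ = (σ a * σ (a+1) * σ a) * σ (a+1) * σ a := by group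
          _ = σ (a+1) * σ a * (σ (a+1) * σ (a+1)) * σ a := by rw [hb]; group
          _ = _ := by rw [hsq, mul_one, mul_assoc, hsq, mul_one]
      · have L2 := lo_succ (n := n) a m
        have N2 := lo_ne h2 a m
        obtain ⟨A, B, C⟩ := IH m (by omega) (i+1) (by push_cast at hadj; grind)
          (by push_cast at hadj; grind)
        push_cast at *
        have e1 : σ i * rr σ a (m+1+1) * σ i =
            σ (i+1) * (σ i * (σ (i+1) * rr σ a m * σ (i+1)) * σ i) * σ (i+1) := by
          rw [← grp_braid (hbr i)]
          simp only [rr]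
          push_cast
          rw [show (a : ZMod (n+1)) + (m + 1) + 1 = i+1 by grind,
            show (a : ZMod (n+1)) + m + 1 = i by grind]
        rw [e1]
        by_cases hA : i + 1 = (lo n a m : ZMod (n+1)) - 1
        · rw [A hA, rr_succ' σ _ _ _ (by push_cast; grind), rr_succ' σ _ _ _ (by push_cast; grind)]
          refine ⟨fun _ => rfl, fun h => by grind, fun h h' => by grind⟩
        · by_cases hB : i + 1 = (lo n a m : ZMod (n+1))
          · obtain ⟨m', rfl, hB'⟩ := B hB
            rw [hB', rr_succ' σ _ _ _ (by push_cast at *; grind),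
              rr_succ' σ _ _ _ (by push_cast at *; grind)]
            refine ⟨fun h => by grind, fun h => ⟨rfl, rfl⟩, fun h h' => by grind⟩
          · rw [C hA hB, rr_succ' σ _ _ _ (by push_cast; grind),
              rr_succ' σ _ _ _ (by push_cast; grind)]
            refine ⟨fun h => by grind, fun h => by grind, fun h h' => rfl⟩
    · obtain ⟨A, B, C⟩ := IH m (by omega) i (by grind) (by grind)
      have e1 : σ i * rr σ a (m+1) * σ i =
          σ ((a : ZMod (n+1)) + m + 1) * (σ i * rr σ a m * σ i) *
            σ ((a : ZMod (n+1)) + m + 1) := by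
        rw [← grp_comm (hco i _ (by grind) (by grind) (by grind))]; rfl
      rw [e1]
      refine ⟨fun h => ?_, fun h => ?_, fun h h' => ?_⟩
      · rw [A (by grind), rr_succ' σ _ _ _ (by push_cast; grind)]
      · obtain ⟨m', rfl, hB'⟩ := B (by grind)
        exact ⟨rfl, by rw [hB', rr_succ' σ _ _ _ (by push_cast at *; grind)]⟩
      · rw [C (by grind) (by grind), rr_succ' σ _ _ _ (by push_cast; grind)]

lemma conj_closed (h2 : (2 : ZMod (n+1)) ≠ 0) (hsq : ∀ i, σ i * σ i = 1)
    (hbr : ∀ i, σ i * σ (i+1) * σ i = σ (i+1) * σ i * σ (i+1))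
    (hco : ∀ i j, i ≠ j → j ≠ i + 1 → j ≠ i - 1 → σ i * σ j = σ j * σ i) (a : ℤ) (m : ℕ)
    (i : ZMod (n+1)) : ∃ b m', σ i * rr σ a m * σ i = rr σ b m' := by
  by_cases h1 : i = (a : ZMod (n+1)) + m + 1
  · exact ⟨_, _, rr_succ' σ _ _ _ h1⟩
  by_cases h3 : i = (a : ZMod (n+1)) + m
  · rcases m with _ | m
    · refine ⟨a, 0, ?_⟩
      simp only [rr, h3, Nat.cast_zero, add_zero, hsq, one_mul]
    · refine ⟨a, m, ?_⟩
      rw [rr, h3]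
      push_cast
      rw [← add_assoc]
      calc _ = (σ ((a : ZMod (n+1)) + m + 1) * σ ((a : ZMod (n+1)) + m + 1)) * rr σ a m *
          (σ ((a : ZMod (n+1)) + m + 1) * σ ((a : ZMod (n+1)) + m + 1)) := by
            group
        _ = _ := by rw [hsq, one_mul, mul_one]
  obtain ⟨A, B, C⟩ := conj_main σ h2 hsq hbr hco a m i h1 h3
  by_cases hA : i = (lo n a m : ZMod (n+1)) - 1
  · exact ⟨_, _, A hA⟩
  by_cases hB : i = (lo n a m : ZMod (n+1))
  · obtain ⟨m', -, h⟩ := B hB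
    exact ⟨_, _, h⟩
  exact ⟨_, _, C hA hB⟩

end grp

/-- action of the reflection -/
lemma act_rr {W : Type*} [Group W] {n : ℕ} (h2 : (2 : ZMod (n+1)) ≠ 0) (σ : ZMod (n+1) → W)
    (φ : W →* Function.End ℤ) (hφ : ∀ i, φ (σ i) = fA i) (a : ℤ) (m : ℕ) (x : ℤ) :
    ((x : ZMod (n+1)) = lo n a m → φ (rr σ a m) x = x + (a + m + 1 - lo n a m)) ∧
    ((x : ZMod (n+1)) = (a : ZMod (n+1)) + m + 1 → φ (rr σ a m) x = x - (a + m + 1 - lo n a m)) ∧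
    ((x : ZMod (n+1)) ≠ lo n a m → (x : ZMod (n+1)) ≠ (a : ZMod (n+1)) + m + 1 → φ (rr σ a m) x = x) := by
  induction m generalizing x with
  | zero =>
    simp only [rr, lo, hφ]
    have := fA_cast (a : ZMod (n+1)) x
    push_cast
    grind
  | succ m ih =>
    have e : φ (rr σ a (m+1)) x = fA ((a : ZMod (n+1)) + (m : ZMod (n+1)) + 1) (φ (rr σ a m)
        (fA ((a : ZMod (n+1)) + (m : ZMod (n+1)) + 1) x)) := by
      simp only [rr, map_mul, hφ]; rfl
    rw [e]
    have L1 := lo_succ (n := n) a m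
    have N1 := lo_ne h2 a m
    have I := ih (fA ((a : ZMod (n+1)) + (m : ZMod (n+1)) + 1) x)
    have F1 := fA_cast ((a : ZMod (n+1)) + (m : ZMod (n+1)) + 1) x
    generalize fA ((a : ZMod (n+1)) + (m : ZMod (n+1)) + 1) x = y at *
    have F2 := fA_cast ((a : ZMod (n+1)) + (m : ZMod (n+1)) + 1) (φ (rr σ a m) y)
    have I' : ((φ (rr σ a m) y : ℤ) : ZMod (n+1)) =
       if (y : ZMod (n+1)) = lo n a m then (y : ZMod (n+1)) + ((a : ZMod (n+1)) + m + 1 - lo n a m)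
       else if (y : ZMod (n+1)) = (a : ZMod (n+1)) + m + 1 then
         (y : ZMod (n+1)) - ((a : ZMod (n+1)) + m + 1 - lo n a m) else (y : ZMod (n+1)) := by
      obtain ⟨A, B, C⟩ := I
      split_ifs with h h'
      · rw [A h]; push_cast; ring
      · rw [B h']; push_cast; ring
      · rw [C h h']
    generalize φ (rr σ a m) y = z at *
    generalize fA ((a : ZMod (n+1)) + (m : ZMod (n+1)) + 1) z = w at *
    push_cast
    clear ih e
    by_cases hy : (y : ZMod (n+1)) = lo n a m
    · grind
    · by_cases hy' : (y : ZMod (n+1)) = (a : ZMod (n+1)) + m + 1 <;> grind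

def gg (n : ℕ) (d : ℤ) : ℤ := d - d / (n+1)

lemma cast_zero_iff (n : ℕ) (d : ℤ) : (d : ZMod (n+1)) = 0 ↔ ((n : ℤ)+1) ∣ d := by
  rw [ZMod.intCast_zmod_eq_zero_iff_dvd]; push_cast; rfl

lemma gg_succ (n : ℕ) (d : ℤ) : ((d : ZMod (n+1)) = -1 ∧ gg n (d+1) = gg n d) ∨
    ((d : ZMod (n+1)) ≠ -1 ∧ gg n (d+1) = gg n d + 1) := by
  have h : (d : ZMod (n+1)) = -1 ↔ ((n : ℤ)+1) ∣ d + 1 := by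
    rw [← cast_zero_iff]; push_cast; exact eq_neg_iff_add_eq_zero
  rw [Ne, h]
  unfold gg
  have hp : (0 : ℤ) < (n : ℤ) + 1 := by positivity
  have e1 := Int.emod_add_mul_ediv d ((n:ℤ)+1)
  have e2 := Int.emod_nonneg d hp.ne'
  have e3 := Int.emod_lt_of_pos d hp
  by_cases hd : ((n : ℤ)+1) ∣ d + 1
  · left
    refine ⟨hd, ?_⟩
    obtain ⟨c, hc⟩ := hd
    have : d / ((n:ℤ)+1) = c - 1 := by
      rw [show d = (n : ℤ) + ((n:ℤ)+1) * (c-1) by linarith,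
        Int.add_mul_ediv_left _ _ hp.ne', Int.ediv_eq_zero_of_lt (by positivity) (by linarith)]
      ring
    rw [this, hc, Int.mul_ediv_cancel_left _ hp.ne']
    linarith
  · right
    refine ⟨hd, ?_⟩
    have hlt : d % ((n:ℤ)+1) + 1 < (n:ℤ)+1 := by
      rcases lt_or_eq_of_le (show d % ((n:ℤ)+1) + 1 ≤ (n:ℤ)+1 by linarith) with h | h
      · exact h
      · exact absurd ⟨d / ((n:ℤ)+1) + 1, by linarith⟩ hd
    have : (d+1) / ((n:ℤ)+1) = d / ((n:ℤ)+1) := by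
      conv_lhs => rw [show d + 1 = (d % ((n:ℤ)+1) + 1) + ((n:ℤ)+1) * (d / ((n:ℤ)+1)) by linarith]
      rw [Int.add_mul_ediv_left _ _ hp.ne', Int.ediv_eq_zero_of_lt (by linarith) hlt]
      ring
    rw [this]; ring

lemma gg_neg (n : ℕ) (d : ℤ) (h : (d : ZMod (n+1)) ≠ 0) : gg n (-d) = 1 - gg n d := by
  rw [Ne, cast_zero_iff] at h
  unfold gg
  rw [Int.neg_ediv, if_neg h, Int.sign_eq_one_of_pos (by positivity)]
  ring

lemma gg_step (n : ℕ) (h2 : (2 : ZMod (n+1)) ≠ 0) (k : ZMod (n+1)) (x y : ℤ) :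
    |gg n (fA k y - fA k x) - gg n (y - x)| ≤ 1 := by
  have A := fA_cast k x
  have B := fA_cast k y
  have h1 := one_ne h2
  have C0 := gg_succ n (y - x)
  have C1 := gg_succ n (y - x + 1)
  have C2 := gg_succ n (y - x - 1)
  have C3 := gg_succ n (y - x - 2)
  rw [show y - x - 2 + 1 = y - x - 1 by ring] at C3
  rw [show y - x - 1 + 1 = y - x by ring] at C2
  push_cast at *
  rw [abs_le]
  generalize fA k x = x' at *
  generalize fA k y = y' at *
  rcases A with ⟨A1, rfl, A2⟩ | ⟨A1, A3, rfl, A2⟩ | ⟨A1, A2, rfl⟩ <;>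
  rcases B with ⟨B1, rfl, B2⟩ | ⟨B1, B3, rfl, B2⟩ | ⟨B1, B2, rfl⟩
  · rw [show y + 1 - (x + 1) = y - x by ring]; simp
  · rw [show y - 1 - (x + 1) = y - x - 2 by ring]; grind
  · rw [show y' - (x + 1) = y' - x - 1 by ring]; grind
  · rw [show y + 1 - (x - 1) = y - x + 1 + 1 by ring]; grind
  · rw [show y - 1 - (x - 1) = y - x by ring]; simp
  · rw [show y' - (x - 1) = y' - x + 1 by ring]; grind
  · rw [show y + 1 - x' = y - x' + 1 by ring]; grind
  · rw [show y - 1 - x' = y - x' - 1 by ring]; grind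
  · simp

lemma gg_lo (n : ℕ) (h2 : (2 : ZMod (n+1)) ≠ 0) (a : ℤ) (m : ℕ) : gg n (a + m + 1 - lo n a m) = m + 1 := by
  induction m with
  | zero => 
    have := gg_succ n 0
    have e0 : gg n 0 = 0 := by simp [gg]
    have := one_ne h2
    simp only [lo]; push_cast at *
    have : a + 0 + 1 - a = 0 + 1 := by ring
    rw [this]
    have : (0 : ZMod (n+1)) ≠ -1 := by
      intro h
      have h3 := one_ne h2
      apply h3
      rw [← neg_neg (1 : ZMod (n+1)), ← h, neg_zero]
    grind
  | succ m ih =>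
    have L1 := lo_succ (n := n) a m
    have N1 := lo_ne h2 a m
    have C0 := gg_succ n (a + m + 1 - lo n a m)
    have C1 := gg_succ n (a + m + 1 - lo n a m + 1)
    push_cast at *
    rcases L1 with ⟨A, B, -⟩ | ⟨A, B⟩
    · rw [B, show a + (m + 1) + 1 - (lo n a m - 1) = a + m + 1 - lo n a m + 1 + 1 by ring]
      grind
    · rw [B, show a + (m + 1) + 1 - (lo n a m) = a + m + 1 - lo n a m + 1 by ring]
      grind

lemma two_ne {n : ℕ} (hn : 2 ≤ n) : (2 : ZMod (n+1)) ≠ 0 := by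
  intro h
  have := (cast_zero_iff n 2).1 (by exact_mod_cast h)
  have := Int.le_of_dvd (by norm_num) this
  omega

lemma len_bound {W : Type*} [Group W] {n : ℕ} (h2 : (2 : ZMod (n+1)) ≠ 0)
    {M : CoxeterMatrix (Fin (n + 1))} (cs : CoxeterSystem M W)
    (φ : W →* Function.End ℤ) (hφ : ∀ i : Fin (n+1), φ (cs.simple i) = fA (n := n) i) (w : W)
    (x y : ℤ) : |gg n (φ w y - φ w x) - gg n (y - x)| ≤ cs.length w := by
  obtain ⟨ω, hω, rfl⟩ := cs.exists_isReduced w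
  rw [hω.eq]
  clear hω
  induction ω with
  | nil =>
    have e : ∀ z : ℤ, φ (cs.wordProd []) z = z := by
      intro z; rw [cs.wordProd_nil, map_one]; rfl
    rw [e, e]; simp
  | cons i ω ih =>
    have e : ∀ z : ℤ, φ (cs.wordProd (i :: ω)) z = fA (n := n) i (φ (cs.wordProd ω) z) := by
      intro z; rw [cs.wordProd_cons, map_mul, hφ]; rfl
    rw [e, e]
    have := gg_step n h2 i (φ (cs.wordProd ω) x) (φ (cs.wordProd ω) y)
    rw [abs_le] at *
    simp only [List.length_cons]
    push_cast
    constructor <;> linarith [this.1, this.2, ih.1, ih.2]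

def fE {n : ℕ} (k : ZMod (n+1)) : Function.End ℤ := fA k

lemma liftable {n : ℕ} (h2 : (2 : ZMod (n+1)) ≠ 0) (M : CoxeterMatrix (Fin (n + 1)))
    (hM : ∀ i j : ZMod (n + 1), M i j =
      if i = j then 1 else if (j = i + 1 ∨ j = i - 1) then 3 else 2) :
    M.IsLiftable (fun i : Fin (n+1) => fE (n := n) i) := by
  have sq : ∀ i : ZMod (n+1), fE i * fE i = 1 := by
    intro i; funext x; exact fA_fA h2 i x
  have br : ∀ u v : Function.End ℤ, u * u = 1 → v * v = 1 → u * v * u = v * u * v →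
      (u * v)^3 = 1 := by
    intro u v hu0 hv h
    have hu : u * (u * v) = v := by rw [← mul_assoc, hu0, one_mul]
    calc (u*v)^3 = (u * v * u) * (v * u * v) := by simp only [pow_succ, pow_zero, one_mul, mul_assoc]
      _ = (v * u * v) * (v * u * v) := by rw [h]
      _ = v * u * (v * v) * u * v := by simp only [mul_assoc]
      _ = v * (u * (u * v)) := by rw [hv]; simp only [mul_assoc, one_mul]
      _ = 1 := by rw [hu, hv]
  have main : ∀ i j : ZMod (n+1), (fE i * fE j) ^ M i j = 1 := by
    intro i j
    have := hM i j
    split_ifs at this with h h'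
    · rw [this, pow_one]; cases h; exact sq i
    · rw [this]
      apply br _ _ (sq i) (sq j)
      funext x
      rcases h' with h' | h'
      · exact fA_braid h2 i j h' x
      · exact (fA_braid h2 j i (by rw [h', sub_add_cancel]) x).symm
    · rw [this]
      have co : fE i * fE j = fE j * fE i := by
        funext x
        exact fA_comm h2 i j h (fun e => h' (Or.inl e)) (fun e => h' (Or.inr e)) x
      calc (fE i * fE j)^2 = (fE i * fE j) * (fE i * fE j) := pow_two _
        _ = (fE j * fE i) * (fE i * fE j) := by nth_rw 1 [co]
        _ = fE j * (fE i * fE i) * fE j := by simp only [mul_assoc]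
        _ = 1 := by rw [sq, mul_one, sq]
  exact main

section main
variable {W : Type*} [Group W] {n : ℕ} (h2 : (2 : ZMod (n+1)) ≠ 0)
    {M : CoxeterMatrix (Fin (n + 1))}
    (hM : ∀ i j : ZMod (n + 1), M i j =
      if i = j then 1 else if (j = i + 1 ∨ j = i - 1) then 3 else 2)
    (cs : CoxeterSystem M W)

/-- simple reflections -/
def sg (cs : CoxeterSystem M W) : ZMod (n+1) → W := cs.simple

lemma sg_sq (i : ZMod (n+1)) : sg cs i * sg cs i = 1 := cs.simple_mul_simple_self i

lemma sg_inv (i : ZMod (n+1)) : (sg cs i)⁻¹ = sg cs i := cs.inv_simple i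

include hM in
lemma sg_co (i j : ZMod (n+1)) (h : i ≠ j) (h' : j ≠ i + 1) (h'' : j ≠ i - 1) :
    sg cs i * sg cs j = sg cs j * sg cs i := by
  have e := hM i j
  rw [if_neg h, if_neg (by tauto)] at e
  have := cs.simple_mul_simple_pow i j
  rw [e] at this
  change (sg cs i * sg cs j)^2 = 1 at this
  rw [pow_two, mul_eq_one_iff_eq_inv, mul_inv_rev, sg_inv, sg_inv] at this
  exact this

include h2 hM in
lemma sg_br (i : ZMod (n+1)) :
    sg cs i * sg cs (i+1) * sg cs i = sg cs (i+1) * sg cs i * sg cs (i+1) := by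
  have e := hM i (i+1)
  rw [if_neg (by intro h; exact one_ne h2 (by simpa using h)), if_pos (Or.inl rfl)] at e
  have := cs.simple_mul_simple_pow i (i+1 : ZMod (n+1))
  rw [e] at this
  change (sg cs i * sg cs (i+1))^3 = 1 at this
  have t : (sg cs i * sg cs (i+1) * sg cs i) * (sg cs (i+1) * sg cs i * sg cs (i+1)) = 1 := by
    rw [← this]; simp only [pow_succ, pow_zero, one_mul, mul_assoc]
  rw [mul_eq_one_iff_eq_inv, mul_inv_rev, mul_inv_rev, sg_inv, sg_inv, ← mul_assoc] at t
  exact t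

include h2 hM in
lemma refl_rr (t : W) (ht : cs.IsReflection t) : ∃ a m, t = rr (sg cs) a m := by
  obtain ⟨w, i, rfl⟩ := ht
  induction w using cs.simple_induction_left with
  | one =>
    obtain ⟨a, ha⟩ := ZMod.intCast_surjective (n := n+1) i
    refine ⟨a, 0, ?_⟩
    rw [rr, ha]; simp [sg]
  | mul_simple_left w j ih =>
    obtain ⟨a, m, h⟩ := ih
    obtain ⟨b, m', h'⟩ := conj_closed (sg cs) h2 (sg_sq cs) (sg_br h2 hM cs) (sg_co hM cs) a m j
    refine ⟨b, m', ?_⟩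
    rw [← h', ← h, mul_inv_rev, cs.inv_simple]
    simp only [sg, mul_assoc]

lemma rr_refl (a : ℤ) (m : ℕ) : cs.IsReflection (rr (sg cs) a m) := by
  induction m with
  | zero => exact cs.isReflection_simple _
  | succ m ih =>
    have := ih.conj (sg cs ((a : ZMod (n+1)) + m + 1))
    rw [sg_inv] at this
    exact this

lemma rr_len_le (a : ℤ) (m : ℕ) : cs.length (rr (sg cs) a m) ≤ 2 * m + 1 := by
  induction m with
  | zero => exact (cs.length_simple _).le
  | succ m ih =>
    rw [rr]
    have l1 := cs.length_mul_le (sg cs ((a : ZMod (n+1)) + m + 1) * rr (sg cs) a m)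
      (sg cs ((a : ZMod (n+1)) + m + 1))
    have l2 := cs.length_mul_le (sg cs ((a : ZMod (n+1)) + m + 1)) (rr (sg cs) a m)
    have l3 : cs.length (sg cs ((a : ZMod (n+1)) + m + 1)) = 1 := cs.length_simple _
    omega

include h2 in
lemma rr_len (φ : W →* Function.End ℤ) (hφ : ∀ i : ZMod (n+1), φ (sg cs i) = fA i)
    (a : ℤ) (m : ℕ) : cs.length (rr (sg cs) a m) = 2 * m + 1 := by
  apply le_antisymm (rr_len_le cs a m)
  have b := len_bound h2 cs φ hφ (rr (sg cs) a m) (lo n a m) (a + m + 1)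
  have a1 := (act_rr h2 (sg cs) φ hφ a m (lo n a m)).1 rfl
  have a2 := (act_rr h2 (sg cs) φ hφ a m (a + m + 1)).2.1 (by push_cast; rfl)
  rw [a1, a2, show a + ↑m + 1 - (a + ↑m + 1 - lo n a m) - (lo n a m + (a + ↑m + 1 - lo n a m)) =
    -(a + m + 1 - lo n a m) by ring, gg_neg, gg_lo n h2] at b
  · rw [abs_le] at b
    have := b.1
    omega
  · have := lo_ne h2 a m
    push_cast
    exact sub_ne_zero.2 this

lemma lo_lt (a : ℤ) (m : ℕ) : lo n a m ≤ a := by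
  induction m with
  | zero => exact le_rfl
  | succ m ih => rcases lo_succ (n := n) a m with h | h <;> omega

lemma lo_shift (a b : ℤ) (m : ℕ) : (lo n a m - a) = (lo n b m - b) := by
  induction m with
  | zero => simp [lo]
  | succ m ih =>
    have e : lo n b m = lo n a m - a + b := by omega
    rcases lo_succ (n := n) a m with h | h <;> rcases lo_succ (n := n) b m with h' | h'
    · omega
    · exfalso; rw [e] at h'; apply h'.1; push_cast; linear_combination h.1
    · exfalso; rw [e] at h'; apply h.1; have := h'.1; push_cast at this; linear_combination this
    · omega

include h2 in
lemma rr_inj (φ : W →* Function.End ℤ) (hφ : ∀ i : ZMod (n+1), φ (sg cs i) = fA i)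
    (a b : ℤ) (m : ℕ) (h : rr (sg cs) a m = rr (sg cs) b m) : (a : ZMod (n+1)) = b := by
  have a1 := (act_rr h2 (sg cs) φ hφ a m (lo n a m)).1 rfl
  obtain ⟨b1, b2, b3⟩ := act_rr h2 (sg cs) φ hφ b m (lo n a m)
  rw [h] at a1
  have la := lo_lt (n := n) a m
  have lb := lo_lt (n := n) b m
  have s := lo_shift (n := n) a b m
  by_cases c1 : ((lo n a m : ℤ) : ZMod (n+1)) = lo n b m
  · rw [show lo n a m = lo n b m - b + a by omega] at c1
    push_cast at c1
    linear_combination c1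
  · by_cases c2 : ((lo n a m : ℤ) : ZMod (n+1)) = (b : ZMod (n+1)) + m + 1
    · have := b2 c2; omega
    · have := b3 c1 c2; omega

end main
end AffA

/-- In an affine Coxeter system of type `Ã_n` (`n ≥ 2`), for
every `k` there are exactly `n + 1` reflections of length `2k + 1`. -/
theorem stmt_13 (n : ℕ) (hn : 2 ≤ n) {W : Type*} [Group W]
    (M : CoxeterMatrix (Fin (n + 1)))
    (hM : ∀ i j : Fin (n + 1), M i j =
      if i = j then 1
      else if ((j : ZMod (n + 1)) = (i : ZMod (n + 1)) + 1 ∨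
               (j : ZMod (n + 1)) = (i : ZMod (n + 1)) - 1) then 3
      else 2)
    (cs : CoxeterSystem M W) (k : ℕ) :
    ({t : W | cs.IsReflection t ∧ cs.length t = 2 * k + 1} : Set W).Finite ∧
    ({t : W | cs.IsReflection t ∧ cs.length t = 2 * k + 1} : Set W).ncard
      = n + 1 := by
  have h2 := AffA.two_ne hn
  have hM' : ∀ i j : ZMod (n + 1), M i j =
      if i = j then 1 else if (j = i + 1 ∨ j = i - 1) then 3 else 2 := hM
  have hl := AffA.liftable h2 M hM'
  have hφ : ∀ i : ZMod (n+1), cs.lift ⟨_, hl⟩ (AffA.sg cs i) = AffA.fA i := by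
    intro i
    exact cs.lift_apply_simple hl i
  generalize cs.lift ⟨_, hl⟩ = φ at hφ
  have key : {t : W | cs.IsReflection t ∧ cs.length t = 2 * k + 1} =
      Set.range (fun j : Fin (n+1) => AffA.rr (AffA.sg cs) (j.val : ℤ) k) := by
    ext t
    simp only [Set.mem_setOf_eq, Set.mem_range]
    constructor
    · rintro ⟨ht, hlen⟩
      obtain ⟨a, m, rfl⟩ := AffA.refl_rr h2 hM' cs t ht
      rw [AffA.rr_len h2 cs φ hφ] at hlen
      have : m = k := by omega
      subst this
      refine ⟨⟨(a : ZMod (n+1)).val, ZMod.val_lt _⟩, ?_⟩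
      apply AffA.rr_congr
      simp
    · rintro ⟨j, rfl⟩
      exact ⟨AffA.rr_refl cs _ _, AffA.rr_len h2 cs φ hφ _ _⟩
  rw [key]
  refine ⟨Set.finite_range _, ?_⟩
  have inj : Function.Injective (fun j : Fin (n+1) => AffA.rr (AffA.sg cs) (j.val : ℤ) k) := by
    intro i j h
    have := AffA.rr_inj h2 cs φ hφ _ _ k h
    simp only [Int.cast_natCast] at this
    rw [ZMod.natCast_eq_natCast_iff', Nat.mod_eq_of_lt i.2, Nat.mod_eq_of_lt j.2] at this
    exact Fin.ext this
  rw [← Set.image_univ, Set.ncard_image_of_injective _ inj, Set.ncard_univ, Nat.card_eq_fintype_card,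
    Fintype.card_fin]
end
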